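/- arXiv:1102.2883 — 2 statements merged into one kernel-verified Lean document; each statement's English description precedes it below -/
import Mathlib

section
/- Let κ ≥ 2 be an integer, and let R ∈ ℤ_{≥0}^m, C ∈ ℤ_{≥0}^n with |R| = |C| = N and T_κ(R,C) > 0. There exists δ = δ(κ) ∈ (0,1), depending only on κ, such that if (max_{1≤i≤m} r_i)(max_{1≤j≤n} c_j) < δκN, then lim_{s→∞} (1/s²) ln T_κ(R^{(s)},C^{(s)}) ≥ lim_{s→∞} (1/s²) ln I_κ(R^{(s)},C^{(s)}), with strict inequality if neither R nor C is a constant vector (i.e., if it is not the case that r_1 = ⋯ = r_m or c_1 = ⋯ = c_n). -/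
open Real Filter Finset

noncomputable section

/-- `ω(n) = n^n / n!`. -/
def omegaFn (n : ℕ) : ℝ := (n : ℝ) ^ n / (n.factorial : ℝ)

/-- `Ω(V)`: the sum of `ω(v)` over the entries of a vector `V`. -/
def OmegaVec {I : Type*} [Fintype I] (V : I → ℕ) : ℝ := ∑ i, omegaFn (V i)

/-- `Ω(K)`: the sum of `ω(k)` over the entries of a matrix `K`. -/
def OmegaMat {I J : Type*} [Fintype I] [Fintype J] (K : I → J → ℕ) : ℝ :=
  ∑ i, ∑ j, omegaFn (K i j)

/-- `T_K(R,C)`: the number of nonnegative-integer matrices with row sums `R`,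
column sums `C`, and entries bounded by `K` (a bound of `⊤` means unbounded). -/
def tableCount {I J : Type*} [Fintype I] [Fintype J]
    (K : I → J → ℕ∞) (R : I → ℕ) (C : J → ℕ) : ℕ :=
  Set.ncard {A : I → J → ℕ |
    (∀ i, ∑ j, A i j = R i) ∧ (∀ j, ∑ i, A i j = C j) ∧ ∀ i j, (A i j : ℕ∞) ≤ K i j}

/-- The `s`-fold cloning of a margin vector. -/
def cloneVec {m : ℕ} (s : ℕ) (R : Fin m → ℕ) : Fin s × Fin m → ℕ :=
  fun p => s * R p.2

/-- The `s`-fold cloning of a bound matrix. -/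
def cloneMat {m n : ℕ} (s : ℕ) (K : Fin m → Fin n → ℕ∞) :
    Fin s × Fin m → Fin s × Fin n → ℕ∞ :=
  fun p q => K p.2 q.2

/-- The mean of the truncated geometric distribution on `{0,…,κ}` with ratio `q`. -/
def tgMean (κ : ℕ∞) (q : ℝ) : ℝ :=
  if κ = ⊤ then q / (1 - q)
  else (∑ t ∈ Finset.range (κ.toNat + 1), (t : ℝ) * q ^ t) /
    (∑ t ∈ Finset.range (κ.toNat + 1), q ^ t)

/-- The parameter `q(x;κ)` of the truncated geometric distribution `TG(x;κ)` with mean `x`. -/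
def tgQ (κ : ℕ∞) (x : ℝ) : ℝ := sInf {q : ℝ | 0 ≤ q ∧ x ≤ tgMean κ q}

/-- The parameter `p(x;κ)` of the truncated geometric distribution `TG(x;κ)` with mean `x`. -/
def tgP (κ : ℕ∞) (x : ℝ) : ℝ :=
  if κ = ⊤ then 1 - tgQ κ x
  else (∑ t ∈ Finset.range (κ.toNat + 1), tgQ κ x ^ t)⁻¹

/-- The probability mass function of `TG(x;κ)`: `Pr[X=t] = p q^t` for `t ∈ {0,…,κ}`. -/
def tgPMF (κ : ℕ∞) (x : ℝ) (t : ℕ) : ℝ :=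
  if (t : ℕ∞) ≤ κ then tgP κ x * tgQ κ x ^ t else 0

/-- `H^max_κ(x)`: the (base-e) entropy of the truncated geometric distribution `TG(x;κ)`. -/
def Hmax (κ : ℕ∞) (x : ℝ) : ℝ := -∑' t : ℕ, tgPMF κ x t * Real.log (tgPMF κ x t)

/-- The `(κ+1)`-nomial coefficient `(n choose r)_κ`: the coefficient of `x^r` in
`(1+x+⋯+x^κ)^n`; for `κ = ∞` it is `(r+n-1).choose r`. -/
def knomial (κ : ℕ∞) (n r : ℕ) : ℕ :=
  if κ = ⊤ then (r + n - 1).choose r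
  else ((∑ t ∈ Finset.range (κ.toNat + 1), (Polynomial.X : Polynomial ℕ) ^ t) ^ n).coeff r

/-- The independence-heuristic estimate `I_κ(R,C)`. -/
def indepEst (κ : ℕ∞) {I J : Type*} [Fintype I] [Fintype J] (R : I → ℕ) (C : J → ℕ) : ℝ :=
  ((knomial κ (Fintype.card I * Fintype.card J) (∑ i, R i) : ℝ))⁻¹ *
    (∏ i, (knomial κ (Fintype.card J) (R i) : ℝ)) *
    ∏ j, (knomial κ (Fintype.card I) (C j) : ℝ)

/-- The transportation polytope `Π_κ(R,C)` of real matrices with entries in `[0,κ]`,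
row sums `R` and column sums `C`. -/
def transportPolytope (κ : ℕ∞) {m n : ℕ} (R : Fin m → ℕ) (C : Fin n → ℕ) :
    Set (Fin m → Fin n → ℝ) :=
  {Z | (∀ i j, 0 ≤ Z i j) ∧ (∀ i j, κ ≠ ⊤ → Z i j ≤ (κ.toNat : ℝ)) ∧
    (∀ i, ∑ j, Z i j = (R i : ℝ)) ∧ ∀ j, ∑ i, Z i j = (C j : ℝ)}

/-- The generating function `G(x,y) = ∏_{i,j} (1 + x_i y_j + ⋯ + (x_i y_j)^{k_{ij}})`. -/
def genFun {m n : ℕ} (K : Fin m → Fin n → ℕ) (x : Fin m → ℝ) (y : Fin n → ℝ) : ℝ :=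
  ∏ i, ∏ j, ∑ t ∈ Finset.range (K i j + 1), (x i * y j) ^ t

/-- The monomial `x^R = ∏_i x_i^{r_i}`. -/
def monom {m : ℕ} (x : Fin m → ℝ) (R : Fin m → ℕ) : ℝ := ∏ i, x i ^ R i

/-- The concave roof function `f_K(R,C)`: the supremum of `∑_t α_t ln T_K(R^t,C^t)` over
convex combinations of integer margins averaging to `(R,C)` (and `⊥ = -∞` if none exist). -/
def fK {m n : ℕ} (K : Fin m → Fin n → ℕ) (R : Fin m → ℝ) (C : Fin n → ℝ) : EReal :=
  sSup {v : EReal | ∃ (p : ℕ) (α : Fin p → ℝ)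
    (Rs : Fin p → Fin m → ℕ) (Cs : Fin p → Fin n → ℕ),
    1 ≤ p ∧ (∀ t, 0 ≤ α t) ∧ ∑ t, α t = 1 ∧
    (∀ i, ∑ t, α t * (Rs t i : ℝ) = R i) ∧ (∀ j, ∑ t, α t * (Cs t j : ℝ) = C j) ∧
    (∀ t, 0 < tableCount (fun i j => (K i j : ℕ∞)) (Rs t) (Cs t)) ∧
    v = ((∑ t, α t * Real.log (tableCount (fun i j => (K i j : ℕ∞)) (Rs t) (Cs t)) : ℝ) : EReal)}

/-- `e^x` for an extended real `x`, with `e^{-∞} = 0`. -/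
def expE (e : EReal) : ℝ := if e = ⊥ then 0 else Real.exp e.toReal

end

/-!
Write `H = Hmax κ`. By the saddle point method, `log (knomial κ (n * s) (r * s))` grows like
`s * n * H (r / n)`, which turns the limit for `I_κ` into a combination of values of `H` at row,
column and total averages. Independent truncated geometric entries with means `r i * c j / N`
satisfy the margins on average, so the limit for `T_κ` is at least `∑ i, ∑ j, H (r i * c j / N)`.
Write `J f c` for `∑ j, f (c j)` minus its value with every `c j` replaced by the mean. The
difference of the two bounds is `J G` at the vector `r / N`, where `G t = J H (t • c)`.

Near `0` one has `H x = -x * log x + h x` with `h` analytic and `h'' 0 > 0`. The singular term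
only contributes a linear summand to `G`, and `t ^ 2 * G'' t = J (x ^ 2 * h'' x) (t • c)` for the
rest. As `x ^ 2 * h'' x` is strictly convex near `0`, so is `G`, and by Jensen's inequality the
difference is positive.
-/

open scoped Polynomial Topology

/-! ### Truncated geometric means and their entropy -/

/-- The polynomial `1 + X + ⋯ + X ^ κ` whose powers generate the `(κ + 1)`-nomial coefficients,
over `ℕ` so that its coefficients are nonnegative for free. -/
noncomputable def geomPoly (κ : ℕ) : ℕ[X] :=
  ∑ t ∈ range (κ + 1), Polynomial.X ^ t

lemma aeval_geomPoly (κ : ℕ) (q : ℝ) :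
    (geomPoly κ).aeval q = ∑ t ∈ range (κ + 1), q ^ t := by
  simp [geomPoly]

lemma aeval_geomPoly_pos (κ : ℕ) {q : ℝ} (hq : 0 ≤ q) : 0 < (geomPoly κ).aeval q := by
  rw [aeval_geomPoly, sum_range_succ']
  exact add_pos_of_nonneg_of_pos (sum_nonneg fun _ _ => by positivity) (by simp)

lemma coeff_geomPoly {κ t : ℕ} (ht : t ≤ κ) : (geomPoly κ).coeff t = 1 := by
  simp [geomPoly, Polynomial.finsetSum_coeff, Polynomial.coeff_X_pow, ht]

lemma tgMean_natCast (κ : ℕ) (q : ℝ) :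
    tgMean κ q = (∑ t ∈ range (κ + 1), (t : ℝ) * q ^ t) / (geomPoly κ).aeval q := by
  simp [tgMean, aeval_geomPoly]

lemma tgMean_eq_mul_logDeriv (κ : ℕ) (q : ℝ) :
    tgMean κ q = q * ((geomPoly κ).derivative.aeval q / (geomPoly κ).aeval q) := by
  rw [tgMean_natCast, ← mul_div_assoc]
  congr 1
  simp only [geomPoly, Polynomial.derivative_X_pow, map_sum, map_mul,
    map_pow, Polynomial.aeval_X, mul_sum]
  refine sum_congr rfl fun t _ => ?_
  cases t <;> simp [pow_succ]; ring

lemma tgMean_zero (κ : ℕ) : tgMean κ 0 = 0 := by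
  simp [tgMean_eq_mul_logDeriv]

lemma continuousOn_tgMean (κ : ℕ) : ContinuousOn (tgMean κ) (Set.Ici 0) := by
  simp only [funext (tgMean_natCast κ)]
  exact ContinuousOn.div (by fun_prop) (Polynomial.continuous_aeval _).continuousOn
    fun q hq => (aeval_geomPoly_pos κ hq).ne'

lemma sub_mul_pow_mul_pow_sub_nonneg {p q : ℝ} (hp : 0 ≤ p) (hpq : p ≤ q) (s t : ℕ) :
    0 ≤ ((t : ℝ) - s) * (q ^ t * p ^ s - p ^ t * q ^ s) := by
  wlog hst : s ≤ t generalizing s t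
  · have := this t s (le_of_not_ge hst)
    linarith
  obtain ⟨d, rfl⟩ := Nat.exists_eq_add_of_le hst
  have hd : p ^ d ≤ q ^ d := pow_le_pow_left₀ hp hpq d
  have hq : 0 ≤ q := hp.trans hpq
  have : ((s + d : ℕ) - s : ℝ) * (q ^ (s + d) * p ^ s - p ^ (s + d) * q ^ s)
      = d * (p ^ s * q ^ s * (q ^ d - p ^ d)) := by push_cast; ring
  rw [this]
  have := sub_nonneg.2 hd
  positivity

-- Symmetrising the double sum for the cross-multiplied difference of means leaves nonnegative
-- summands, of which the one at `(s, t) = (0, 1)` is `q - p`.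
lemma strictMonoOn_tgMean {κ : ℕ} (hκ : 1 ≤ κ) : StrictMonoOn (tgMean κ) (Set.Ici 0) := by
  intro p hp q hq hpq
  have hp : (0 : ℝ) ≤ p := hp
  rw [tgMean_natCast, tgMean_natCast,
    div_lt_div_iff₀ (aeval_geomPoly_pos κ hp) (aeval_geomPoly_pos κ hq), ← sub_pos]
  simp only [aeval_geomPoly, sum_mul_sum, ← sum_sub_distrib]
  set F : ℕ → ℕ → ℝ := fun s t => ((t : ℝ) - s) * (q ^ t * p ^ s - p ^ t * q ^ s)
  have hF (s t : ℕ) : 0 ≤ F s t := sub_mul_pow_mul_pow_sub_nonneg hp hpq.le s t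
  have hpos : 0 < ∑ s ∈ range (κ + 1), ∑ t ∈ range (κ + 1), F s t := by
    refine sum_pos' (fun s _ => sum_nonneg fun t _ => hF s t) ⟨0, by simp, ?_⟩
    refine sum_pos' (fun t _ => hF 0 t) ⟨1, by simp; omega, ?_⟩
    simpa [F] using hpq
  have hsymm : ∑ s ∈ range (κ + 1), ∑ t ∈ range (κ + 1), F s t =
      2 * ∑ t ∈ range (κ + 1), ∑ s ∈ range (κ + 1), (t * q ^ t * p ^ s - t * p ^ t * q ^ s) := by
    rw [two_mul]
    nth_rewrite 2 [sum_comm]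
    simp only [← sum_add_distrib]
    refine sum_congr rfl fun s _ => sum_congr rfl fun t _ => ?_
    simp only [F]
    ring
  linarith

lemma tgQ_tgMean {κ : ℕ} (hκ : 1 ≤ κ) {q : ℝ} (hq : 0 ≤ q) : tgQ κ (tgMean κ q) = q := by
  have : {p : ℝ | 0 ≤ p ∧ tgMean κ q ≤ tgMean κ p} = Set.Ici q := by
    ext p
    refine ⟨fun ⟨hp, h⟩ => ((strictMonoOn_tgMean hκ).le_iff_le hq hp).1 h, fun h => ?_⟩
    exact ⟨hq.trans h, (strictMonoOn_tgMean hκ).monotoneOn hq (hq.trans h) h⟩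
  rw [tgQ, this, csInf_Ici]

lemma Hmax_tgMean {κ : ℕ} (hκ : 1 ≤ κ) {q : ℝ} (hq : 0 ≤ q) :
    Hmax κ (tgMean κ q) = log ((geomPoly κ).aeval q) - tgMean κ q * log q := by
  set S := (geomPoly κ).aeval q with hS
  have hSpos : 0 < S := aeval_geomPoly_pos κ hq
  have htP : tgP κ (tgMean κ q) = S⁻¹ := by
    simp [tgP, tgQ_tgMean hκ hq, hS, aeval_geomPoly]
  have hsupp (t : ℕ) (ht : t ∉ range (κ + 1)) : tgPMF κ (tgMean κ q) t = 0 := by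
    simp only [mem_range, not_lt] at ht
    simp [tgPMF, show ¬ t ≤ κ by omega]
  have hterm (t : ℕ) (ht : t ∈ range (κ + 1)) :
      tgPMF κ (tgMean κ q) t * log (tgPMF κ (tgMean κ q) t) =
        S⁻¹ * (t * q ^ t * log q - q ^ t * log S) := by
    have htκ : t ≤ κ := by simp at ht; omega
    have hval : tgPMF κ (tgMean κ q) t = S⁻¹ * q ^ t := by
      simp [tgPMF, htP, tgQ_tgMean hκ hq, htκ]
    rw [hval]
    rcases eq_or_ne (q ^ t) 0 with h0 | h0
    · simp [h0]
    · rw [log_mul (inv_ne_zero hSpos.ne') h0, log_inv, log_pow]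
      ring
  rw [Hmax, tsum_eq_sum fun t ht => by rw [hsupp t ht, zero_mul], sum_congr rfl hterm, ← mul_sum,
    sum_sub_distrib, ← sum_mul, ← sum_mul, ← aeval_geomPoly, tgMean_natCast, ← hS]
  field_simp
  ring

lemma natCast_sub_le_tgMean (κ : ℕ) {q : ℝ} (hq : 1 ≤ q) : κ - κ ^ 2 / q ≤ tgMean κ q := by
  have hq0 : 0 < q := by linarith
  have hS := aeval_geomPoly_pos κ hq0.le
  rw [tgMean_natCast, le_div_iff₀ hS, aeval_geomPoly, mul_sum]
  suffices ∑ t ∈ range (κ + 1), ((κ : ℝ) - t) * q ^ t ≤ κ ^ 2 / q * ∑ t ∈ range (κ + 1), q ^ t by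
    simp only [sub_mul, sum_sub_distrib, mul_sum] at this ⊢
    linarith
  have hpow : q ^ κ ≤ ∑ t ∈ range (κ + 1), q ^ t :=
    single_le_sum (f := fun t => q ^ t) (fun t _ => by positivity) (by simp)
  calc ∑ t ∈ range (κ + 1), ((κ : ℝ) - t) * q ^ t
      = ∑ t ∈ range κ, ((κ : ℝ) - t) * q ^ t := by simp [sum_range_succ]
    _ ≤ ∑ _t ∈ range κ, (κ : ℝ) * (q ^ κ / q) := by
        refine sum_le_sum fun t ht => mul_le_mul (by simp) ?_ (by positivity) (by positivity)
        rw [le_div_iff₀ hq0, ← pow_succ]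
        exact pow_le_pow_right₀ hq (by simp at ht; omega)
    _ = κ ^ 2 / q * q ^ κ := by simp; ring
    _ ≤ κ ^ 2 / q * ∑ t ∈ range (κ + 1), q ^ t := by gcongr

lemma exists_tgMean_eq (κ : ℕ) {x : ℝ} (hx : 0 ≤ x) (hxκ : x < κ) :
    ∃ q, 0 ≤ q ∧ tgMean κ q = x := by
  set b : ℝ := max 1 (κ ^ 2 / (κ - x))
  have hb : 1 ≤ b := le_max_left _ _
  have hxb : x ≤ tgMean κ b := by
    have : (κ : ℝ) ^ 2 / b ≤ κ - x := by
      rw [div_le_comm₀ (by linarith) (by linarith)]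
      exact le_max_right _ _
    linarith [natCast_sub_le_tgMean κ hb]
  obtain ⟨q, hq, rfl⟩ := intermediate_value_Icc (zero_le_one.trans hb)
    ((continuousOn_tgMean κ).mono Set.Icc_subset_Ici_self) ⟨(tgMean_zero κ).trans_le hx, hxb⟩
  exact ⟨q, hq.1, rfl⟩

/-! ### Growth of `(κ + 1)`-nomial coefficients -/

lemma knomial_natCast (κ n r : ℕ) : knomial κ n r = (geomPoly κ ^ n).coeff r := by
  simp [knomial, geomPoly]

lemma natDegree_geomPoly_pow_le (κ n : ℕ) : (geomPoly κ ^ n).natDegree ≤ n * κ := by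
  refine Polynomial.natDegree_pow_le_of_le n (Polynomial.natDegree_sum_le_of_forall_le _ _ ?_)
  intro t ht
  rw [Polynomial.natDegree_X_pow]
  exact Nat.lt_succ_iff.1 (mem_range.1 ht)

lemma coeff_mul_coeff_le (p q : ℕ[X]) (a b : ℕ) :
    p.coeff a * q.coeff b ≤ (p * q).coeff (a + b) := by
  rw [Polynomial.coeff_mul]
  exact single_le_sum (f := fun x : ℕ × ℕ => p.coeff x.1 * q.coeff x.2) (fun _ _ => Nat.zero_le _)
    (mem_antidiagonal.2 rfl : (a, b) ∈ antidiagonal (a + b))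

lemma coeff_pow_le_coeff_mul (p : ℕ[X]) (k a : ℕ) : p.coeff k ^ a ≤ (p ^ a).coeff (a * k) := by
  induction a with
  | zero => simp
  | succ a ih =>
    rw [pow_succ, pow_succ, Nat.succ_mul]
    exact (Nat.mul_le_mul_right _ ih).trans (coeff_mul_coeff_le _ _ _ _)

lemma knomial_mul_knomial_le (κ n m a b : ℕ) :
    knomial κ n a * knomial κ m b ≤ knomial κ (n + m) (a + b) := by
  simp only [knomial_natCast, pow_add]
  exact coeff_mul_coeff_le _ _ _ _

lemma knomial_pos {κ n r : ℕ} (hr : r ≤ n * κ) : 0 < knomial κ n r := by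
  induction n generalizing r with
  | zero => simp_all [knomial_natCast]
  | succ n ih =>
    have hcoeff (k : ℕ) (hk : k ≤ κ) : knomial κ 1 k = 1 := by
      rw [knomial_natCast, pow_one, coeff_geomPoly hk]
    have hsplit : r - min r κ ≤ n * κ := by
      rw [Nat.succ_mul] at hr
      omega
    calc 0 < knomial κ n (r - min r κ) * knomial κ 1 (min r κ) := by
          rw [hcoeff _ (min_le_right _ _), mul_one]
          exact ih hsplit
      _ ≤ knomial κ (n + 1) (r - min r κ + min r κ) := knomial_mul_knomial_le ..
      _ = knomial κ (n + 1) r := by rw [Nat.sub_add_cancel (min_le_left _ _)]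

lemma coeff_mul_pow_le_aeval (p : ℕ[X]) (r : ℕ) {q : ℝ} (hq : 0 ≤ q) :
    p.coeff r * q ^ r ≤ p.aeval q := by
  rw [Polynomial.aeval_eq_sum_range' (n := p.natDegree + r + 1) (by omega)]
  simp only [nsmul_eq_mul]
  exact single_le_sum (f := fun i => (p.coeff i : ℝ) * q ^ i) (fun i _ => by positivity)
    (mem_range.2 (by omega))

lemma exists_nonneg_deviation {s : Finset ℕ} {c : ℕ → ℝ} {e : ℕ → ℤ} {D : ℕ}
    (hc : ∀ i ∈ s, 0 ≤ c i) (he : ∀ i ∈ s, e i ≤ D) (hs : s.card ≤ D + 1)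
    (hmean : ∑ i ∈ s, e i * c i = 0) (hpos : 0 < ∑ i ∈ s, c i) :
    ∃ i ∈ s, 0 ≤ e i ∧ ∑ i ∈ s, c i ≤ (D + 1) ^ 2 * c i := by
  set A := ∑ i ∈ s, c i
  have hsne : s.Nonempty := nonempty_of_ne_empty fun h => by simp [A, h] at hpos
  have hbound : A ≤ ∑ i ∈ s, if 0 ≤ e i then (D + 1) * c i else 0 := by
    have : A = ∑ i ∈ s, (e i + 1) * c i := by simp [add_mul, sum_add_distrib, hmean, A]
    rw [this]
    refine sum_le_sum fun i hi => ?_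
    split_ifs with h
    · gcongr
      · exact hc i hi
      · exact_mod_cast he i hi
    · exact mul_nonpos_of_nonpos_of_nonneg (by exact_mod_cast by omega) (hc i hi)
  have haverage : ∑ _i ∈ s, A / (D + 1) ≤ ∑ i ∈ s, if 0 ≤ e i then (D + 1) * c i else 0 := by
    refine le_trans ?_ hbound
    rw [sum_const, nsmul_eq_mul, ← mul_div_assoc, div_le_iff₀ (by positivity), mul_comm]
    gcongr
    exact_mod_cast hs
  obtain ⟨i, hi, hle⟩ := exists_le_of_sum_le hsne haverage
  have hA : 0 < A / (D + 1) := by positivity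
  split_ifs at hle with h
  · refine ⟨i, hi, h, ?_⟩
    rw [div_le_iff₀ (by positivity)] at hle
    linarith
  · linarith

lemma sum_natCast_mul_coeff_mul_pow {p : ℕ[X]} {D : ℕ} (hp : p.natDegree ≤ D) (q : ℝ) :
    ∑ k ∈ range (D + 1), (k : ℝ) * (p.coeff k * q ^ k) = q * p.derivative.aeval q := by
  have hp' : p.derivative.natDegree < D + 1 := by
    have := Polynomial.natDegree_derivative_le p
    omega
  have htop : p.coeff (D + 1) = 0 := Polynomial.coeff_eq_zero_of_natDegree_lt (by omega)
  rw [Polynomial.aeval_eq_sum_range' hp', sum_range_succ', sum_range_succ, mul_add, mul_sum]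
  simp only [Polynomial.coeff_derivative, htop, nsmul_eq_mul]
  simp only [Nat.cast_mul, Nat.cast_add, Nat.cast_one, Nat.cast_zero, zero_mul, mul_zero, add_zero]
  exact sum_congr rfl fun k _ => by push_cast; ring

lemma exists_large_coeffs {p : ℕ[X]} {D r : ℕ} (hp : p.natDegree ≤ D) (hr : r ≤ D) {q : ℝ}
    (hq : 0 ≤ q) (hpos : 0 < p.aeval q) (hmean : q * p.derivative.aeval q = r * p.aeval q) :
    ∃ k₀ k₁, k₀ ≤ r ∧ r ≤ k₁ ∧ p.aeval q ≤ (D + 1) ^ 2 * (p.coeff k₀ * q ^ k₀) ∧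
      p.aeval q ≤ (D + 1) ^ 2 * (p.coeff k₁ * q ^ k₁) := by
  set c : ℕ → ℝ := fun k => p.coeff k * q ^ k
  have hc (k : ℕ) : 0 ≤ c k := by positivity
  have hsum : ∑ k ∈ range (D + 1), c k = p.aeval q := by
    simp [Polynomial.aeval_eq_sum_range' (Nat.lt_succ_iff.2 hp), c]
  have hdev : ∑ k ∈ range (D + 1), ((k : ℝ) - r) * c k = 0 := by
    simp only [sub_mul, sum_sub_distrib, ← mul_sum, hsum, ← hmean]
    rw [sum_natCast_mul_coeff_mul_pow hp, sub_self]
  have hdev' : ∑ k ∈ range (D + 1), ((r : ℝ) - k) * c k = 0 := by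
    rw [← neg_eq_zero, ← hdev, ← sum_neg_distrib]
    exact sum_congr rfl fun k _ => by ring
  obtain ⟨k₀, -, hrk₀, hk₀⟩ := exists_nonneg_deviation (e := fun k => (r : ℤ) - k)
    (s := range (D + 1)) (D := D) (fun k _ => hc k) (fun k _ => by omega) (by simp)
    (by simpa using hdev') (by rwa [hsum])
  obtain ⟨k₁, -, hrk₁, hk₁⟩ := exists_nonneg_deviation (e := fun k => (k : ℤ) - r)
    (s := range (D + 1)) (D := D) (fun k _ => hc k) (fun k hk => by simp at hk; omega) (by simp)
    (by simpa using hdev) (by rwa [hsum])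
  rw [hsum] at hk₀ hk₁
  exact ⟨k₀, k₁, by omega, by omega, hk₀, hk₁⟩

-- Whether the coefficient at `r` itself is large is unclear, but `r` lies between two indices with
-- large coefficients, so a suitable power has a large coefficient at the multiple of `r`.
lemma exists_coeff_pow_ge {p : ℕ[X]} {D r : ℕ} (hp : p.natDegree ≤ D) (hr : r ≤ D) {q : ℝ}
    (hq : 0 ≤ q) (hpos : 0 < p.aeval q) (hmean : q * p.derivative.aeval q = r * p.aeval q) :
    ∃ M, 0 < M ∧
      p.aeval q ^ M ≤ ((D : ℝ) + 1) ^ (2 * M) * ((p ^ M).coeff (M * r) * q ^ (M * r)) := by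
  obtain ⟨k₀, k₁, hk₀r, hrk₁, hk₀, hk₁⟩ := exists_large_coeffs hp hr hq hpos hmean
  obtain ⟨a, b, hab, habr⟩ : ∃ a b : ℕ, 0 < a + b ∧ a * k₀ + b * k₁ = (a + b) * r := by
    obtain rfl | hne := eq_or_ne k₀ r
    · exact ⟨1, 0, by simp, by simp⟩
    · refine ⟨k₁ - r, r - k₀, by omega, ?_⟩
      zify [hrk₁, hk₀r]
      ring
  have hcoeff : p.coeff k₀ ^ a * p.coeff k₁ ^ b ≤ (p ^ (a + b)).coeff ((a + b) * r) := by
    rw [← habr, pow_add]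
    exact (Nat.mul_le_mul (coeff_pow_le_coeff_mul ..) (coeff_pow_le_coeff_mul ..)).trans
      (coeff_mul_coeff_le ..)
  refine ⟨a + b, hab, ?_⟩
  calc p.aeval q ^ (a + b)
      ≤ (((D : ℝ) + 1) ^ 2 * (p.coeff k₀ * q ^ k₀)) ^ a *
          (((D : ℝ) + 1) ^ 2 * (p.coeff k₁ * q ^ k₁)) ^ b := by
        rw [pow_add]
        gcongr
    _ = ((D : ℝ) + 1) ^ (2 * (a + b)) *
          (((p.coeff k₀ ^ a * p.coeff k₁ ^ b : ℕ) : ℝ) * q ^ ((a + b) * r)) := by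
        rw [← habr]
        generalize (D : ℝ) + 1 = x
        push_cast
        ring
    _ ≤ _ := by gcongr

lemma log_knomial_le {κ n r : ℕ} (hr : r ≤ n * κ) {q : ℝ} (hq : 0 ≤ q) (hqr : q ^ r ≠ 0) :
    log (knomial κ n r) ≤ n * log ((geomPoly κ).aeval q) - r * log q := by
  have hk : (knomial κ n r : ℝ) ≠ 0 := by exact_mod_cast (knomial_pos hr).ne'
  have hle := coeff_mul_pow_le_aeval (geomPoly κ ^ n) r hq
  rw [← knomial_natCast, map_pow] at hle
  have hlog := log_le_log (by positivity) hle
  rw [log_mul hk hqr, log_pow, log_pow] at hlog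
  linarith

lemma exists_log_knomial_ge {κ n r : ℕ} (hn : 0 < n) (hr : r ≤ n * κ) {q : ℝ} (hq : 0 ≤ q)
    (hqr : q ^ r ≠ 0) (hmean : tgMean κ q = r / n) :
    ∃ M, 0 < M ∧ M * (n * log ((geomPoly κ).aeval q) - r * log q - 2 * log (n * κ + 1)) ≤
      log (knomial κ (M * n) (M * r)) := by
  have hS := aeval_geomPoly_pos κ hq
  have hmean' : q * (geomPoly κ ^ n).derivative.aeval q = r * (geomPoly κ ^ n).aeval q := by
    obtain ⟨n, rfl⟩ := Nat.exists_eq_succ_of_ne_zero hn.ne'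
    rw [tgMean_eq_mul_logDeriv, ← mul_div_assoc, div_eq_div_iff hS.ne' (by positivity)] at hmean
    simp only [Polynomial.derivative_pow_succ, map_mul, map_pow, map_add, map_natCast, map_one]
    push_cast at hmean ⊢
    rw [pow_succ]
    linear_combination (geomPoly κ).aeval q ^ n * hmean
  obtain ⟨M, hM, hle⟩ := exists_coeff_pow_ge (natDegree_geomPoly_pow_le κ n) hr hq
    (by rw [map_pow]; positivity) hmean'
  refine ⟨M, hM, ?_⟩
  have hk : (knomial κ (M * n) (M * r) : ℝ) ≠ 0 := by
    exact_mod_cast (knomial_pos (by rw [mul_assoc]; exact Nat.mul_le_mul_left _ hr)).ne'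
  have hqMr : q ^ (M * r) ≠ 0 := by
    rw [mul_comm, pow_mul]
    exact pow_ne_zero _ hqr
  rw [← pow_mul, mul_comm n M, ← knomial_natCast, map_pow] at hle
  have hlog := log_le_log (by positivity) hle
  rw [log_mul (by positivity) (mul_ne_zero hk hqMr), log_mul hk hqMr] at hlog
  simp only [log_pow] at hlog
  push_cast at hlog
  linarith

lemma tendsto_log_mul_add_one_div {c : ℝ} (hc : 0 ≤ c) :
    Tendsto (fun l : ℕ => log (c * l + 1) / l) atTop (𝓝 0) := by
  obtain rfl | hc := hc.eq_or_lt
  · simp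
  have hlin : Tendsto (fun l : ℕ => c * (l : ℝ) + 1) atTop atTop :=
    (tendsto_natCast_atTop_atTop.const_mul_atTop hc).atTop_add tendsto_const_nhds
  have hlog : Tendsto (fun l : ℕ => log (c * l + 1) / (c * l + 1)) atTop (𝓝 0) :=
    isLittleO_log_id_atTop.tendsto_div_nhds_zero.comp hlin
  have hratio : Tendsto (fun l : ℕ => c + 1 / (l : ℝ)) atTop (𝓝 (c + 0)) :=
    tendsto_const_nhds.add tendsto_one_div_atTop_nhds_zero_nat
  have := hlog.mul hratio
  rw [zero_mul] at this
  refine this.congr' ((eventually_gt_atTop 0).mono fun l hl => ?_)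
  have : 0 < c * l + 1 := by positivity
  have : (l : ℝ) ≠ 0 := by positivity
  field_simp

lemma subadditive_neg_log_knomial {κ n r : ℕ} (hr : r ≤ n * κ) :
    Subadditive fun s => -log (knomial κ (n * s) (r * s)) := by
  intro s t
  have hpos (l : ℕ) : 0 < knomial κ (n * l) (r * l) :=
    knomial_pos (by rw [mul_right_comm]; exact Nat.mul_le_mul_right _ hr)
  have hs : (0 : ℝ) < knomial κ (n * s) (r * s) := by exact_mod_cast hpos s
  have ht : (0 : ℝ) < knomial κ (n * t) (r * t) := by exact_mod_cast hpos t
  rw [← neg_add, neg_le_neg_iff, ← log_mul hs.ne' ht.ne', mul_add, mul_add]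
  exact log_le_log (mul_pos hs ht) (by exact_mod_cast knomial_mul_knomial_le ..)

lemma tendsto_div_of_subadditive {u : ℕ → ℝ} (hu : Subadditive u) {L : ℝ} {err : ℕ → ℝ}
    (hlower : ∀ s : ℕ, s ≠ 0 → L ≤ u s / s)
    (hupper : ∀ l : ℕ, l ≠ 0 → ∃ M : ℕ, M ≠ 0 ∧ u (M * l) / (M * l : ℕ) ≤ L + err l)
    (herr : Tendsto err atTop (𝓝 0)) : Tendsto (fun s : ℕ => u s / s) atTop (𝓝 L) := by
  have hbdd : BddBelow (Set.range fun s : ℕ => u s / s) := by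
    refine ⟨min L 0, ?_⟩
    rintro _ ⟨s, rfl⟩
    obtain rfl | hs := eq_or_ne s 0
    · simp
    · exact (min_le_left _ _).trans (hlower s hs)
  have hlim := hu.tendsto_lim hbdd
  have hle : hu.lim ≤ L := by
    have herr' : Tendsto (fun l => L + err l) atTop (𝓝 L) := by simpa using herr.const_add L
    refine ge_of_tendsto herr' ((eventually_ne_atTop 0).mono fun l hl => ?_)
    obtain ⟨M, hM, hMl⟩ := hupper l hl
    exact (hu.lim_le_div hbdd (mul_ne_zero hM hl)).trans hMl
  rwa [hle.antisymm (ge_of_tendsto hlim ((eventually_ne_atTop 0).mono hlower))] at hlim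

lemma exists_tgMean_eq_div {κ n r : ℕ} (hn : 0 < n) (hr : r < n * κ) :
    ∃ q, 0 ≤ q ∧ tgMean κ q = r / n ∧ ∀ s, q ^ (r * s) ≠ 0 := by
  obtain ⟨q, hq, hmean⟩ := exists_tgMean_eq κ (x := r / n) (by positivity) (by
    rw [div_lt_iff₀ (by positivity)]
    exact_mod_cast mul_comm n κ ▸ hr)
  refine ⟨q, hq, hmean, fun s => ?_⟩
  obtain rfl | hr0 := eq_or_ne r 0
  · simp
  · refine pow_ne_zero _ fun hq0 => ?_
    rw [hq0, tgMean_zero] at hmean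
    exact absurd hmean (by positivity)

theorem tendsto_log_knomial_div {κ n r : ℕ} (hn : 0 < n) (hr : r < n * κ) :
    Tendsto (fun s : ℕ => log (knomial κ (n * s) (r * s)) / s) atTop
      (𝓝 (n * Hmax κ (r / n))) := by
  have hκ : 0 < κ := Nat.pos_of_ne_zero fun h => by simp [h] at hr
  have hrs (s : ℕ) : r * s ≤ n * s * κ := by
    rw [mul_right_comm]
    exact Nat.mul_le_mul_right _ hr.le
  obtain ⟨q, hq, hmean, hqr⟩ := exists_tgMean_eq_div hn hr
  set E := n * log ((geomPoly κ).aeval q) - r * log q with hE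
  have hHmax : n * Hmax κ (r / n) = E := by
    rw [← hmean, Hmax_tgMean hκ hq, hmean, hE]
    field_simp
  have hlower (s : ℕ) (hs : s ≠ 0) : -E ≤ -log (knomial κ (n * s) (r * s)) / s := by
    have := log_knomial_le (hrs s) hq (hqr s)
    rw [le_div_iff₀ (by positivity)]
    push_cast at this
    linarith
  have hupper (l : ℕ) (hl : l ≠ 0) : ∃ M : ℕ, M ≠ 0 ∧
      -log (knomial κ (n * (M * l)) (r * (M * l))) / (M * l : ℕ) ≤
        -E + 2 * (log (n * κ * l + 1) / l) := by
    obtain ⟨M, hM, hge⟩ := exists_log_knomial_ge (by positivity) (hrs l) hq (hqr l)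
      (by rw [hmean]; push_cast; field_simp)
    refine ⟨M, hM.ne', ?_⟩
    rw [mul_left_comm n, mul_left_comm r, div_le_iff₀ (by positivity)]
    push_cast at hge ⊢
    rw [mul_right_comm (n : ℝ) l κ] at hge
    field_simp
    linarith
  have herr := (tendsto_log_mul_add_one_div (c := n * κ) (by positivity)).const_mul 2
  rw [mul_zero] at herr
  have := tendsto_div_of_subadditive (subadditive_neg_log_knomial hr.le) hlower hupper herr
  rw [hHmax, ← neg_neg E]
  simpa only [neg_div, neg_neg] using this.neg

/-! ### Lower bounds for numbers of tables -/

section Tables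

variable {I J : Type*} [Fintype I] [Fintype J]

/-- The tables counted by `tableCount`, for a constant bound `κ` on the entries. -/
def tableSet (κ : ℕ) (R : I → ℕ) (C : J → ℕ) : Set (I → J → ℕ) :=
  {A | (∀ i, ∑ j, A i j = R i) ∧ (∀ j, ∑ i, A i j = C j) ∧ ∀ i j, A i j ≤ κ}

lemma tableCount_eq_card (κ : ℕ) (R : I → ℕ) (C : J → ℕ) :
    tableCount (fun _ _ => (κ : ℕ∞)) R C = Nat.card (tableSet κ R C) := by
  rw [Nat.card_coe_set_eq]
  simp [tableCount, tableSet]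

instance (κ : ℕ) (R : I → ℕ) (C : J → ℕ) : Finite (tableSet κ R C) := by
  classical
  refine (Fintype.piFinset fun _ : I => Fintype.piFinset fun _ : J =>
    range (κ + 1)).finite_toSet.subset fun A hA => ?_
  simpa [Nat.lt_succ_iff] using hA.2.2

lemma tableCount_comp_equiv {I' J' : Type*} [Fintype I'] [Fintype J'] (e : I' ≃ I) (f : J' ≃ J)
    (κ : ℕ) (R : I → ℕ) (C : J → ℕ) :
    tableCount (fun _ _ => (κ : ℕ∞)) (R ∘ e) (C ∘ f) =
      tableCount (fun _ _ => (κ : ℕ∞)) R C := by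
  simp only [tableCount_eq_card]
  refine Nat.card_congr (Equiv.subtypeEquiv (Equiv.arrowCongr e (Equiv.arrowCongr f (.refl ℕ)))
    fun A => ?_)
  have hrow : (∀ i, ∑ j, A i j = R (e i)) ↔ ∀ i, ∑ j, A (e.symm i) (f.symm j) = R i := by
    simp [e.forall_congr_left, f.symm.sum_comp (A _)]
  have hcol : (∀ j, ∑ i, A i j = C (f j)) ↔ ∀ j, ∑ i, A (e.symm i) (f.symm j) = C j := by
    simp [f.forall_congr_left, fun j => e.symm.sum_comp fun i => A i j]
  have hentry : (∀ i j, A i j ≤ κ) ↔ ∀ i j, A (e.symm i) (f.symm j) ≤ κ := by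
    simp [e.forall_congr_left, f.forall_congr_left]
  exact and_congr hrow (and_congr hcol hentry)

lemma prod_tableCount_le_tableCount_prod {A B : Type*} [Fintype A] [Fintype B] (κ : ℕ)
    (r c : I → J → ℕ) :
    ∏ i, ∏ j, tableCount (fun (_ : A) (_ : B) => (κ : ℕ∞)) (fun _ => r i j) (fun _ => c i j) ≤
      tableCount (fun (_ : A × I) (_ : B × J) => (κ : ℕ∞)) (fun x => ∑ j, r x.2 j)
        (fun y => ∑ i, c i y.2) := by
  simp only [tableCount_eq_card, ← Nat.card_pi]
  refine Nat.card_le_card_of_injective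
    (fun F => ⟨fun x y => (F x.2 y.2).1 x.1 y.1, ?_, ?_, fun x y => (F x.2 y.2).2.2.2 _ _⟩) ?_
  · intro x
    rw [Fintype.sum_prod_type_right]
    simp only [(F x.2 _).2.1]
  · intro y
    rw [Fintype.sum_prod_type_right]
    simp only [(F _ y.2).2.2.1]
  · intro F G h
    funext i j
    ext a b
    exact congrFun₂ (congrArg Subtype.val h) (a, i) (b, j)

-- Shifting the columns of the block in position `(a, b)` by `a` averages the column sums over all
-- `a`, which makes them constant.
lemma tableCount_pow_le_tableCount_const {K : Type*} [Fintype K] [AddGroup J] (κ d : ℕ)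
    (C : J → ℕ) :
    tableCount (fun (_ : I) _ => (κ : ℕ∞)) (fun _ => d) C ^ (Fintype.card J * Fintype.card K) ≤
      tableCount (fun (_ : J × I) (_ : K × J) => (κ : ℕ∞)) (fun _ => Fintype.card K * d)
        (fun _ => ∑ j, C j) := by
  have hcard : Nat.card (tableSet κ (fun _ : I => d) C) ^ (Fintype.card J * Fintype.card K) =
      Nat.card (J → K → tableSet κ (fun _ : I => d) C) := by
    simp [Nat.card_pi, pow_mul, pow_right_comm]
  simp only [tableCount_eq_card, hcard]
  refine Nat.card_le_card_of_injective
    (fun F => ⟨fun x y => (F x.1 y.1).1 x.2 (y.2 + x.1), ?_, ?_, fun x y => (F _ _).2.2.2 _ _⟩) ?_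
  · rintro ⟨a, i⟩
    have hshift (b : K) : ∑ j, (F a b).1 i (j + a) = d :=
      (Equiv.sum_comp (Equiv.addRight a) ((F a b).1 i)).trans ((F a b).2.1 i)
    simp only [Fintype.sum_prod_type, hshift, sum_const, card_univ, smul_eq_mul]
  · rintro ⟨b, j⟩
    simp only [Fintype.sum_prod_type, (F _ _).2.2.1]
    exact Equiv.sum_comp (Equiv.addLeft j) C
  · intro F G h
    funext a b
    ext i j
    simpa using congrFun₂ (congrArg Subtype.val h) (a, i) (b, j - a)

lemma knomial_eq_card [DecidableEq J] (κ r : ℕ) :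
    knomial κ (Fintype.card J) r =
      #{f ∈ Fintype.piFinset fun _ : J => range (κ + 1) | ∑ j, f j = r} := by
  rw [knomial_natCast, geomPoly, ← card_univ, ← prod_const, prod_univ_sum]
  simp only [prod_pow_eq_pow_sum, Polynomial.finsetSum_coeff, Polynomial.coeff_X_pow, sum_boole]
  simp [eq_comm]

lemma exists_prod_knomial_le_tableCount {κ : ℕ} {R : I → ℕ} (hR : ∀ i, R i ≤ Fintype.card J * κ) :
    ∃ C : J → ℕ, ∑ j, C j = ∑ i, R i ∧
      ∏ i, knomial κ (Fintype.card J) (R i) ≤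
        tableCount (fun _ _ => (κ : ℕ∞)) R C * (Fintype.card I * κ + 1) ^ Fintype.card J := by
  classical
  set S : Finset (I → J → ℕ) := Fintype.piFinset fun i =>
    {f ∈ Fintype.piFinset fun _ : J => range (κ + 1) | ∑ j, f j = R i} with hS
  have hcard : #S = ∏ i, knomial κ (Fintype.card J) (R i) := by
    simp only [hS, Fintype.card_piFinset, knomial_eq_card]
  have hmem (A : I → J → ℕ) : A ∈ S ↔ (∀ i, ∑ j, A i j = R i) ∧ ∀ i j, A i j ≤ κ := by
    simp [hS, forall_and, and_comm]
  have hne : S.Nonempty := by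
    rw [← card_pos, hcard]
    exact prod_pos fun i _ => knomial_pos (hR i)
  set colSum : (I → J → ℕ) → J → ℕ := fun A j => ∑ i, A i j
  obtain ⟨C, hC, hmax⟩ := exists_max_image (S.image colSum) (fun C => #{A ∈ S | colSum A = C})
    (hne.image _)
  have himage : #(S.image colSum) ≤ (Fintype.card I * κ + 1) ^ Fintype.card J := by
    calc #(S.image colSum)
        ≤ #(Fintype.piFinset fun _ : J => range (Fintype.card I * κ + 1)) := by
          refine card_le_card (image_subset_iff.2 fun A hA => ?_)
          simp only [Fintype.mem_piFinset, mem_range, Nat.lt_succ_iff]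
          exact fun j => sum_le_card_nsmul _ _ κ fun i _ => ((hmem A).1 hA).2 i j
      _ = _ := by simp
  have hfiber : #{A ∈ S | colSum A = C} = tableCount (fun _ _ => (κ : ℕ∞)) R C := by
    rw [tableCount_eq_card, Nat.card_coe_set_eq, ← Set.ncard_coe_finset]
    congr 1
    ext A
    simp only [coe_filter, hmem, Set.mem_ofPred_eq, tableSet, colSum, funext_iff]
    tauto
  obtain ⟨A, hA, rfl⟩ := mem_image.1 hC
  refine ⟨colSum A, ?_, ?_⟩
  · rw [sum_comm]
    exact sum_congr rfl fun i _ => ((hmem A).1 hA).1 i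
  · rw [← hcard, ← hfiber]
    exact (card_le_mul_card_image S _ hmax).trans (Nat.mul_le_mul_left _ himage)

lemma knomial_pow_le_tableCount {κ M d : ℕ} (hM : 0 < M) (hd : d ≤ M * κ) :
    knomial κ M d ^ M ^ 3 ≤
      tableCount (fun (_ _ : Fin (M * M)) => (κ : ℕ∞)) (fun _ => M * d) (fun _ => M * d) *
        (M * κ + 1) ^ M ^ 3 := by
  have : NeZero M := ⟨hM.ne'⟩
  obtain ⟨C, hC, hle⟩ := exists_prod_knomial_le_tableCount (I := Fin M) (J := Fin M)
    (R := fun _ => d) (by simpa using hd)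
  have hstack := tableCount_pow_le_tableCount_const (I := Fin M) (K := Fin M) κ d C
  have hindex := tableCount_comp_equiv (finProdFinEquiv (m := M) (n := M))
    (finProdFinEquiv (m := M) (n := M)) κ (fun _ => M * d) (fun _ => M * d)
  simp only [prod_const, card_univ, Fintype.card_fin, sum_const, smul_eq_mul] at hC hle hstack
  rw [hC] at hstack
  calc knomial κ M d ^ M ^ 3 = (knomial κ M d ^ M) ^ (M * M) := by ring
    _ ≤ (tableCount (fun _ _ => (κ : ℕ∞)) (fun _ => d) C * (M * κ + 1) ^ M) ^ (M * M) := by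
        gcongr
    _ = tableCount (fun _ _ => (κ : ℕ∞)) (fun _ => d) C ^ (M * M) * (M * κ + 1) ^ M ^ 3 := by
        ring
    _ ≤ _ := Nat.mul_le_mul_right _ (hstack.trans_eq hindex)

end Tables

/-! ### Cloned margins -/

lemma log_indepEst_cloneVec {κ m n N : ℕ} {R : Fin m → ℕ} {C : Fin n → ℕ} (hRN : ∑ i, R i = N)
    (hN : N ≤ m * n * κ) (hR : ∀ i, R i ≤ n * κ) (hC : ∀ j, C j ≤ m * κ) (s : ℕ) :
    log (indepEst κ (cloneVec s R) (cloneVec s C)) =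
      s * ∑ i, log (knomial κ (n * s) (R i * s)) + s * ∑ j, log (knomial κ (m * s) (C j * s)) -
        log (knomial κ (m * n * s ^ 2) (N * s ^ 2)) := by
  have hne {a b : ℕ} (hb : b ≤ a * κ) (l : ℕ) : (knomial κ (a * l) (b * l) : ℝ) ≠ 0 := by
    have : 0 < knomial κ (a * l) (b * l) :=
      knomial_pos (by rw [mul_right_comm]; exact Nat.mul_le_mul_right _ hb)
    exact_mod_cast this.ne'
  have hsum : ∑ p : Fin s × Fin m, s * R p.2 = N * s ^ 2 := by
    simp [Fintype.sum_prod_type, ← mul_sum, hRN]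
    ring
  simp only [indepEst, cloneVec, hsum, Fintype.card_prod, Fintype.card_fin]
  rw [show s * m * (s * n) = m * n * s ^ 2 by ring]
  simp only [mul_comm s]
  rw [log_mul (mul_ne_zero (inv_ne_zero (hne hN _)) (prod_ne_zero_iff.2 fun _ _ => hne (hR _) _))
      (prod_ne_zero_iff.2 fun _ _ => hne (hC _) _),
    log_mul (inv_ne_zero (hne hN _)) (prod_ne_zero_iff.2 fun _ _ => hne (hR _) _), log_inv,
    log_prod fun _ _ => hne (hR _) _, log_prod fun _ _ => hne (hC _) _]
  simp only [Fintype.sum_prod_type, sum_const, card_univ, Fintype.card_fin, nsmul_eq_mul]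
  ring

theorem tendsto_log_indepEst_cloneVec {κ m n N : ℕ} {R : Fin m → ℕ} {C : Fin n → ℕ} (hm : 0 < m)
    (hn : 0 < n) (hRN : ∑ i, R i = N) (hR : ∀ i, R i < n * κ) (hC : ∀ j, C j < m * κ) :
    Tendsto (fun s : ℕ => 1 / (s : ℝ) ^ 2 * log (indepEst κ (cloneVec s R) (cloneVec s C))) atTop
      (𝓝 (n * ∑ i, Hmax κ (R i / n) + m * ∑ j, Hmax κ (C j / m) -
        m * n * Hmax κ (N / (m * n)))) := by
  have hN : N < m * n * κ := by
    have : Nonempty (Fin m) := Fin.pos_iff_nonempty.1 hm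
    calc N = ∑ i, R i := hRN.symm
      _ < ∑ _i : Fin m, n * κ := sum_lt_sum_of_nonempty univ_nonempty fun i _ => hR i
      _ = m * n * κ := by simp [mul_assoc]
  have hrow := tendsto_finsetSum univ fun i _ => tendsto_log_knomial_div hn (hR i)
  have hcol := tendsto_finsetSum univ fun j _ => tendsto_log_knomial_div hm (hC j)
  have htotal := (tendsto_log_knomial_div (by positivity) hN).comp
    (tendsto_pow_atTop (α := ℕ) two_ne_zero)
  have := (hrow.add hcol).sub htotal
  simp only [← mul_sum, Nat.cast_mul] at this
  refine this.congr' ((eventually_ne_atTop 0).mono fun s hs => ?_)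
  dsimp only [Function.comp_apply]
  rw [log_indepEst_cloneVec hRN hN.le (fun i => (hR i).le) (fun j => (hC j).le), ← sum_div,
    ← sum_div]
  push_cast
  field_simp

lemma sum_log_knomial_le_log_tableCount {κ M m n : ℕ} (hM : 0 < M) {R : Fin m → ℕ} {C : Fin n → ℕ}
    {d : Fin m → Fin n → ℕ} (hd : ∀ i j, d i j ≤ M * κ) (hR : ∀ i, ∑ j, d i j = M * R i)
    (hC : ∀ j, ∑ i, d i j = M * C j) :
    M ^ 3 * ∑ i, ∑ j, (log (knomial κ M (d i j)) - log (M * κ + 1)) ≤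
      log (tableCount (fun (_ : Fin (M * M) × Fin m) (_ : Fin (M * M) × Fin n) => (κ : ℕ∞))
        (cloneVec (M * M) R) (cloneVec (M * M) C)) := by
  set T : Fin m → Fin n → ℕ := fun i j => tableCount
    (fun (_ _ : Fin (M * M)) => (κ : ℕ∞)) (fun _ => M * d i j) (fun _ => M * d i j)
  have hT (i j) : knomial κ M (d i j) ^ M ^ 3 ≤ T i j * (M * κ + 1) ^ M ^ 3 :=
    knomial_pow_le_tableCount hM (hd i j)
  have hTpos (i j) : 0 < T i j :=
    Nat.pos_of_mul_pos_right ((pow_pos (knomial_pos (hd i j)) _).trans_le (hT i j))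
  have hlogT (i j) : M ^ 3 * (log (knomial κ M (d i j)) - log (M * κ + 1)) ≤ log (T i j) := by
    have hpos : (0 : ℝ) < knomial κ M (d i j) := by exact_mod_cast knomial_pos (hd i j)
    have hT0 : (T i j : ℝ) ≠ 0 := by exact_mod_cast (hTpos i j).ne'
    have hTreal : (knomial κ M (d i j) : ℝ) ^ M ^ 3 ≤ T i j * (M * κ + 1) ^ M ^ 3 := by
      exact_mod_cast hT i j
    have := log_le_log (pow_pos hpos _) hTreal
    rw [log_mul hT0 (by positivity), log_pow, log_pow] at this
    push_cast at this
    linarith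
  have hprod : ∏ i, ∏ j, T i j ≤
      tableCount (fun (_ : Fin (M * M) × Fin m) (_ : Fin (M * M) × Fin n) => (κ : ℕ∞))
        (cloneVec (M * M) R) (cloneVec (M * M) C) := by
    refine (prod_tableCount_le_tableCount_prod κ _ _).trans_eq ?_
    simp only [← mul_sum, hR, hC, ← mul_assoc]
    rfl
  calc M ^ 3 * ∑ i, ∑ j, (log (knomial κ M (d i j)) - log (M * κ + 1))
      ≤ ∑ i, ∑ j, log (T i j) := by
        simp only [mul_sum]
        exact sum_le_sum fun i _ => sum_le_sum fun j _ => hlogT i j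
    _ = log (∏ i, ∏ j, T i j : ℕ) := by
        have hne (i j) : (T i j : ℝ) ≠ 0 := by exact_mod_cast (hTpos i j).ne'
        push_cast
        rw [log_prod fun i _ => prod_ne_zero_iff.2 fun j _ => hne i j]
        exact sum_congr rfl fun i _ => (log_prod fun j _ => hne i j).symm
    _ ≤ _ := log_le_log
        (by exact_mod_cast prod_pos fun i _ => prod_pos fun j _ => hTpos i j)
        (by exact_mod_cast hprod)

theorem sum_Hmax_le_of_tendsto_log_tableCount {κ m n N : ℕ} {R : Fin m → ℕ} {C : Fin n → ℕ}
    (hN : 0 < N) (hRN : ∑ i, R i = N) (hCN : ∑ j, C j = N) (hlt : ∀ i j, R i * C j < N * κ) {L : ℝ}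
    (hL : Tendsto (fun s : ℕ => 1 / (s : ℝ) ^ 2 *
      log (tableCount (fun (_ : Fin s × Fin m) (_ : Fin s × Fin n) => (κ : ℕ∞))
        (cloneVec s R) (cloneVec s C))) atTop (𝓝 L)) :
    ∑ i, ∑ j, Hmax κ (R i * C j / N) ≤ L := by
  have hNt : Tendsto (fun t : ℕ => N * t) atTop atTop := tendsto_id.const_mul_atTop' hN
  have herr : Tendsto (fun t : ℕ => log (N * κ * t + 1) / t) atTop (𝓝 0) :=
    tendsto_log_mul_add_one_div (by positivity)
  have hlower : Tendsto (fun t : ℕ => (N : ℝ)⁻¹ * ∑ i, ∑ j,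
      (log (knomial κ (N * t) (R i * C j * t)) / t - log (N * κ * t + 1) / t)) atTop
      (𝓝 (∑ i, ∑ j, Hmax κ (R i * C j / N))) := by
    have := (tendsto_finsetSum univ fun i _ => tendsto_finsetSum univ fun j _ =>
      (tendsto_log_knomial_div hN (hlt i j)).sub herr).const_mul (N : ℝ)⁻¹
    simpa [← mul_sum, hN.ne'] using this
  refine le_of_tendsto_of_tendsto hlower (hL.comp (hNt.atTop_mul_atTop₀ hNt))
    ((eventually_gt_atTop 0).mono fun t ht => ?_)
  have := sum_log_knomial_le_log_tableCount (M := N * t) (by positivity)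
    (d := fun i j => R i * C j * t) (R := R) (C := C) (κ := κ)
    (fun i j => by rw [mul_right_comm N]; exact Nat.mul_le_mul_right _ (hlt i j).le)
    (fun i => by rw [← sum_mul, ← mul_sum, hCN]; ring)
    (fun j => by rw [← sum_mul, ← sum_mul, hRN]; ring)
  dsimp only [Function.comp_apply]
  rw [one_div, le_inv_mul_iff₀ (by positivity)]
  refine le_trans (le_of_eq ?_) this
  simp only [← sub_div, ← sum_div]
  push_cast
  rw [mul_right_comm (N : ℝ) t κ]
  field_simp

/-! ### Jensen gaps -/

section JensenGap

variable {ι ι' : Type*} [Fintype ι] [Fintype ι']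

/-- The amount by which the sum of `f` over the points `p i` exceeds its value with every point
moved to the mean; nonnegative for convex `f` by Jensen's inequality. -/
noncomputable def jensenGap (f : ℝ → ℝ) (p : ι → ℝ) : ℝ :=
  ∑ i, f (p i) - Fintype.card ι * f ((∑ i, p i) / Fintype.card ι)

/-- For `f = Hmax κ`, the entropy of independent truncated geometric entries with means
`r i * c j / N`, minus the exponential growth rate of `I_κ` at the margins `r` and `c`; here
`N = ∑ i, r i`, which is meant to equal `∑ j, c j`. -/
noncomputable def independenceGap (f : ℝ → ℝ) (r : ι → ℝ) (c : ι' → ℝ) : ℝ :=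
  ∑ i, ∑ j, f (r i * c j / ∑ k, r k) -
    (Fintype.card ι' * ∑ i, f (r i / Fintype.card ι') +
      Fintype.card ι * ∑ j, f (c j / Fintype.card ι) -
      Fintype.card ι * Fintype.card ι' * f ((∑ i, r i) / (Fintype.card ι * Fintype.card ι')))

lemma independenceGap_eq_jensenGap (f : ℝ → ℝ) {r : ι → ℝ} {c : ι' → ℝ}
    (hrc : ∑ i, r i = ∑ j, c j) (hr : ∑ i, r i ≠ 0) :
    independenceGap f r c =
      jensenGap (fun t => jensenGap f fun j => t * c j) fun i => r i / ∑ k, r k := by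
  have havg : (∑ i, r i / ∑ k, r k) / Fintype.card ι = (Fintype.card ι : ℝ)⁻¹ := by
    rw [← sum_div, div_self hr, one_div]
  have hrow (i : ι) : (∑ j, r i / (∑ k, r k) * c j) / Fintype.card ι' = r i / Fintype.card ι' := by
    rw [← mul_sum, ← hrc, div_mul_cancel₀ _ hr]
  have htotal : (∑ j, (Fintype.card ι : ℝ)⁻¹ * c j) / Fintype.card ι' =
      (∑ i, r i) / (Fintype.card ι * Fintype.card ι') := by
    rw [← mul_sum, ← hrc, inv_mul_eq_div, div_div]
  simp only [independenceGap, jensenGap, havg, hrow, htotal]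
  simp only [sum_sub_distrib, ← mul_sum, inv_mul_eq_div, div_mul_eq_mul_div]
  ring

lemma jensenGap_const (f : ℝ → ℝ) (a : ℝ) : jensenGap f (fun _ : ι => a) = 0 := by
  cases isEmpty_or_nonempty ι <;> simp [jensenGap]

lemma jensenGap_add (f g : ℝ → ℝ) (p : ι → ℝ) :
    jensenGap (fun x => f x + g x) p = jensenGap f p + jensenGap g p := by
  simp only [jensenGap, sum_add_distrib]
  ring

lemma jensenGap_mul_const (a : ℝ) (p : ι → ℝ) : jensenGap (fun x => x * a) p = 0 := by
  cases isEmpty_or_nonempty ι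
  · simp [jensenGap]
  · simp [jensenGap, ← sum_mul]
    field_simp
    simp

lemma jensenGap_negMulLog_mul (t : ℝ) (c : ι → ℝ) :
    jensenGap negMulLog (fun j => t * c j) = t * jensenGap negMulLog c := by
  have h := jensenGap_mul_const (negMulLog t) c
  simp only [jensenGap, ← mul_sum, mul_div_assoc, negMulLog_mul, sum_add_distrib] at h ⊢
  linear_combination h

lemma sum_div_card_mem [Nonempty ι] {s : Set ℝ} (hs : Convex ℝ s) {p : ι → ℝ}
    (hp : ∀ i, p i ∈ s) : (∑ i, p i) / Fintype.card ι ∈ s := by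
  have := hs.sum_mem (t := univ) (w := fun _ : ι => (Fintype.card ι : ℝ)⁻¹) (z := p)
    (fun _ _ => by positivity) (by simp) (fun i _ => hp i)
  simpa [← mul_sum, div_eq_inv_mul] using this

lemma jensenGap_congr [Nonempty ι] {s : Set ℝ} (hs : Convex ℝ s) {f g : ℝ → ℝ}
    (hfg : Set.EqOn f g s) {p : ι → ℝ} (hp : ∀ i, p i ∈ s) : jensenGap f p = jensenGap g p := by
  rw [jensenGap, jensenGap, hfg (sum_div_card_mem hs hp), sum_congr rfl fun i _ => hfg (hp i)]

lemma jensenGap_pos {s : Set ℝ} {f : ℝ → ℝ} (hf : StrictConvexOn ℝ s f) {p : ι → ℝ}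
    (hp : ∀ i, p i ∈ s) (hne : ∃ i j, p i ≠ p j) : 0 < jensenGap f p := by
  obtain ⟨i, j, hij⟩ := hne
  have : Nonempty ι := ⟨i⟩
  have hlt := hf.map_sum_lt (t := univ) (w := fun _ : ι => (Fintype.card ι : ℝ)⁻¹) (p := p)
    (fun _ _ => by positivity) (by simp) (fun i _ => hp i) ⟨i, mem_univ i, j, mem_univ j, hij⟩
  simp only [smul_eq_mul, ← mul_sum] at hlt
  rw [inv_mul_eq_div, lt_inv_mul_iff₀ (by positivity)] at hlt
  exact sub_pos.2 hlt

-- In terms of the Euler operator `x ↦ x * h' x`, differentiation commutes with `jensenGap`.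
lemma hasDerivAt_jensenGap_mul [Nonempty ι] {s : Set ℝ} (hs : Convex ℝ s) {h h' : ℝ → ℝ}
    (hh : ∀ x ∈ s, HasDerivAt h (h' x) x) {c : ι → ℝ} {t : ℝ} (ht : t ≠ 0)
    (hc : ∀ j, t * c j ∈ s) :
    HasDerivAt (fun u => jensenGap h fun j => u * c j)
      (t⁻¹ * jensenGap (fun x => x * h' x) fun j => t * c j) t := by
  have hscale (a : ℝ) (ha : t * a ∈ s) :
      HasDerivAt (fun u => h (u * a)) (h' (t * a) * a) t := by
    simpa [Function.comp_def] using (hh _ ha).comp t ((hasDerivAt_id t).mul_const a)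
  have havg := sum_div_card_mem hs hc
  simp only [jensenGap, ← mul_sum, mul_div_assoc] at havg ⊢
  refine ((HasDerivAt.fun_sum fun j _ => hscale _ (hc j)).sub
    ((hscale _ havg).const_mul _)).congr_deriv ?_
  rw [mul_sub, mul_sum]
  congr 1
  · exact sum_congr rfl fun j _ => by field_simp
  · field_simp

lemma hasDerivAt_deriv_jensenGap_mul [Nonempty ι] {s : Set ℝ} (hs : Convex ℝ s) {h : ℝ → ℝ}
    (hh : ∀ x ∈ s, AnalyticAt ℝ h x) {c : ι → ℝ} {t : ℝ} (ht : t ≠ 0)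
    (hc : ∀ᶠ u in 𝓝 t, ∀ j, u * c j ∈ s) :
    HasDerivAt (deriv fun u => jensenGap h fun j => u * c j)
      ((t ^ 2)⁻¹ * jensenGap (fun x => x ^ 2 * deriv (deriv h) x) fun j => t * c j) t := by
  have hderiv : deriv (fun u => jensenGap h fun j => u * c j) =ᶠ[𝓝 t]
      fun u => u⁻¹ * jensenGap (fun x => x * deriv h x) fun j => u * c j := by
    filter_upwards [hc, eventually_ne_nhds ht] with u hu hu0
    exact (hasDerivAt_jensenGap_mul hs (fun x hx => (hh x hx).differentiableAt.hasDerivAt) hu0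
      hu).deriv
  have heuler : (fun x => x * (1 * deriv h x + x * deriv (deriv h) x)) =
      fun x => x * deriv h x + x ^ 2 * deriv (deriv h) x := by
    ext x
    ring
  refine (((hasDerivAt_inv ht).fun_mul (hasDerivAt_jensenGap_mul hs
    (fun x hx => (hasDerivAt_id' x).fun_mul (hh x hx).deriv.differentiableAt.hasDerivAt) ht
    hc.self_of_nhds)).congr_of_eventuallyEq hderiv).congr_deriv ?_
  rw [heuler, jensenGap_add]
  ring

lemma continuousAt_jensenGap_mul [Nonempty ι] {s : Set ℝ} (hs : Convex ℝ s) {h : ℝ → ℝ}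
    (hh : ∀ x ∈ s, ContinuousAt h x) {c : ι → ℝ} {t : ℝ} (hc : ∀ j, t * c j ∈ s) :
    ContinuousAt (fun u => jensenGap h fun j => u * c j) t := by
  have hscale (a : ℝ) (ha : t * a ∈ s) : ContinuousAt (fun u => h (u * a)) t :=
    (hh _ ha).comp (f := fun u => u * a) (by fun_prop)
  have havg := sum_div_card_mem hs hc
  simp only [jensenGap, ← mul_sum, mul_div_assoc] at havg ⊢
  exact ContinuousAt.sub (tendsto_finsetSum _ fun j _ => hscale _ (hc j))
    ((hscale _ havg).const_mul _)

lemma strictConvexOn_jensenGap_mul {x₀ ρ : ℝ} {h : ℝ → ℝ}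
    (hh : ∀ x ∈ Set.Ico 0 x₀, AnalyticAt ℝ h x)
    (hconv : StrictConvexOn ℝ (Set.Ico 0 x₀) fun x => x ^ 2 * deriv (deriv h) x) {c : ι → ℝ}
    (hc : ∀ j, 0 ≤ c j) (hρ : ∀ j, ρ * c j < x₀) (hne : ∃ i j, c i ≠ c j) :
    StrictConvexOn ℝ (Set.Icc 0 ρ) fun t => jensenGap h fun j => t * c j := by
  have : Nonempty ι := ⟨hne.choose⟩
  have hmem {t : ℝ} (ht : t ∈ Set.Icc 0 ρ) (j : ι) : t * c j ∈ Set.Ico 0 x₀ :=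
    ⟨mul_nonneg ht.1 (hc j), (mul_le_mul_of_nonneg_right ht.2 (hc j)).trans_lt (hρ j)⟩
  have hcont : ContinuousOn (fun t => jensenGap h fun j => t * c j) (Set.Icc 0 ρ) :=
    fun t ht => (continuousAt_jensenGap_mul (convex_Ico 0 x₀)
      (fun x hx => (hh x hx).continuousAt) (hmem ht)).continuousWithinAt
  refine strictConvexOn_of_deriv2_pos (convex_Icc _ _) hcont fun t ht => ?_
  rw [interior_Icc] at ht
  have hmem_nhds : ∀ᶠ u in 𝓝 t, ∀ j, u * c j ∈ Set.Ico 0 x₀ :=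
    Filter.Eventually.mono (Icc_mem_nhds ht.1 ht.2) fun u hu => hmem hu
  rw [Function.iterate_succ_apply, Function.iterate_one,
    (hasDerivAt_deriv_jensenGap_mul (convex_Ico 0 x₀) hh ht.1.ne' hmem_nhds).deriv]
  obtain ⟨i, j, hij⟩ := hne
  exact mul_pos (inv_pos.2 (pow_pos ht.1 2)) (jensenGap_pos hconv hmem_nhds.self_of_nhds
    ⟨i, j, by simpa [ht.1.ne'] using hij⟩)

lemma independenceGap_eq_zero_of_const_left (f : ℝ → ℝ) {r : ι → ℝ} {c : ι' → ℝ}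
    (hrc : ∑ i, r i = ∑ j, c j) (hr : ∑ i, r i ≠ 0) (hconst : ∀ i i', r i = r i') :
    independenceGap f r c = 0 := by
  rw [independenceGap_eq_jensenGap f hrc hr]
  cases isEmpty_or_nonempty ι
  · simp [jensenGap]
  · simp only [hconst _ (Classical.arbitrary ι), jensenGap_const]

lemma independenceGap_eq_zero_of_const_right (f : ℝ → ℝ) {r : ι → ℝ} {c : ι' → ℝ}
    (hrc : ∑ i, r i = ∑ j, c j) (hr : ∑ i, r i ≠ 0) (hconst : ∀ j j', c j = c j') :
    independenceGap f r c = 0 := by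
  rw [independenceGap_eq_jensenGap f hrc hr]
  cases isEmpty_or_nonempty ι'
  · simp [jensenGap]
  · simp only [hconst _ (Classical.arbitrary ι'), jensenGap_const]
    simp [jensenGap]

lemma independenceGap_pos {x₀ : ℝ} {f h : ℝ → ℝ}
    (hf : ∀ x ∈ Set.Ico 0 x₀, f x = negMulLog x + h x) (hh : ∀ x ∈ Set.Ico 0 x₀, AnalyticAt ℝ h x)
    (hconv : StrictConvexOn ℝ (Set.Ico 0 x₀) fun x => x ^ 2 * deriv (deriv h) x)
    {r : ι → ℝ} {c : ι' → ℝ} (hr : ∀ i, 0 ≤ r i) (hc : ∀ j, 0 ≤ c j) (hrc : ∑ i, r i = ∑ j, c j)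
    (hsparse : ∀ i j, r i * c j < x₀ * ∑ k, r k) (hrne : ∃ i i', r i ≠ r i')
    (hcne : ∃ j j', c j ≠ c j') : 0 < independenceGap f r c := by
  have hιne : Nonempty ι := ⟨hrne.choose⟩
  have hι'ne : Nonempty ι' := ⟨hcne.choose⟩
  have hNpos : 0 < ∑ k, r k := by
    refine (sum_nonneg fun i _ => hr i).lt_of_ne fun h0 => ?_
    obtain ⟨i, i', hii'⟩ := hrne
    have := (sum_eq_zero_iff_of_nonneg fun i _ => hr i).1 h0.symm
    exact hii' ((this i (mem_univ i)).trans (this i' (mem_univ i')).symm)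
  set N := ∑ k, r k
  obtain ⟨i₀, -, hmax⟩ := exists_max_image univ (fun i => r i / N) univ_nonempty
  set ρ := r i₀ / N
  have hρ (j : ι') : ρ * c j < x₀ := by
    rw [div_mul_eq_mul_div, div_lt_iff₀ hNpos]
    exact hsparse i₀ j
  have hmem (i : ι) : r i / N ∈ Set.Icc 0 ρ := ⟨div_nonneg (hr i) hNpos.le, hmax i (mem_univ i)⟩
  have hsplit : Set.EqOn (fun t => jensenGap f fun j => t * c j)
      (fun t => t * jensenGap negMulLog c + jensenGap h fun j => t * c j) (Set.Icc 0 ρ) := by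
    intro t ht
    dsimp only
    rw [jensenGap_congr (convex_Ico 0 x₀) hf fun j => ⟨mul_nonneg ht.1 (hc j),
      (mul_le_mul_of_nonneg_right ht.2 (hc j)).trans_lt (hρ j)⟩, jensenGap_add,
      jensenGap_negMulLog_mul]
  rw [independenceGap_eq_jensenGap f hrc hNpos.ne', jensenGap_congr (convex_Icc 0 ρ) hsplit hmem,
    jensenGap_add, jensenGap_mul_const, zero_add]
  refine jensenGap_pos (strictConvexOn_jensenGap_mul hh hconv hc hρ hcne) hmem ?_
  obtain ⟨i, i', hii'⟩ := hrne
  exact ⟨i, i', fun h => hii' ((div_left_inj' hNpos.ne').1 h)⟩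

end JensenGap

/-! ### Entropy near zero -/

lemma exists_strictConvexOn_sq_mul_deriv_deriv {h : ℝ → ℝ} (hh : AnalyticAt ℝ h 0)
    (hpos : 0 < deriv (deriv h) 0) :
    ∃ x₀ > 0, (∀ x ∈ Set.Ico 0 x₀, AnalyticAt ℝ h x) ∧
      StrictConvexOn ℝ (Set.Ico 0 x₀) fun x => x ^ 2 * deriv (deriv h) x := by
  set k := deriv (deriv h)
  have hk : AnalyticAt ℝ k 0 := hh.deriv.deriv
  have hk1 {x : ℝ} (hx : AnalyticAt ℝ k x) :
      HasDerivAt (fun x => x ^ 2 * k x) (2 * x * k x + x ^ 2 * deriv k x) x := by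
    simpa using (hasDerivAt_pow 2 x).fun_mul hx.differentiableAt.hasDerivAt
  have hk2 {x : ℝ} (hx : AnalyticAt ℝ k x) : deriv^[2] (fun x => x ^ 2 * k x) x =
      2 * k x + 4 * x * deriv k x + x ^ 2 * deriv (deriv k) x := by
    have hderiv : deriv (fun x => x ^ 2 * k x) =ᶠ[𝓝 x] fun x => 2 * x * k x + x ^ 2 * deriv k x :=
      hx.eventually_analyticAt.mono fun y hy => (hk1 hy).deriv
    rw [Function.iterate_succ_apply, Function.iterate_one, hderiv.deriv_eq]
    have := (((hasDerivAt_id' x).const_mul 2).fun_mul hx.differentiableAt.hasDerivAt).fun_add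
      ((hasDerivAt_pow 2 x).fun_mul hx.deriv.differentiableAt.hasDerivAt)
    rw [this.deriv]
    push_cast
    ring
  have hlim : ∀ᶠ x in 𝓝 0, 0 < 2 * k x + 4 * x * deriv k x + x ^ 2 * deriv (deriv k) x := by
    have hcont : ContinuousAt
        (fun x => 2 * k x + 4 * x * deriv k x + x ^ 2 * deriv (deriv k) x) 0 := by
      have := hk.continuousAt
      have := hk.deriv.continuousAt
      have := hk.deriv.deriv.continuousAt
      fun_prop
    exact hcont.eventually_const_lt (by simpa using hpos)
  obtain ⟨x₀, hx₀, hball⟩ := Metric.eventually_nhds_iff.1 (hh.eventually_analyticAt.and hlim)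
  have hIco {x : ℝ} (hx : x ∈ Set.Ico 0 x₀) := hball (y := x) (by
    simpa [abs_of_nonneg hx.1] using hx.2)
  refine ⟨x₀, hx₀, fun x hx => (hIco hx).1, ?_⟩
  refine strictConvexOn_of_deriv2_pos (convex_Ico _ _)
    (fun x hx => (hk1 (hIco hx).1.deriv.deriv).continuousAt.continuousWithinAt) fun x hx => ?_
  have hx := hIco (interior_subset hx)
  rw [hk2 hx.1.deriv.deriv]
  exact hx.2

-- Differentiating `g x * φ (g x) = x` gives `g' * (φ + g * φ') = 1`, which collapses the first
-- derivative to `1 + log (φ (g x))`.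
lemma deriv_deriv_add_mul_log_pos {ℓ φ g : ℝ → ℝ} (hℓ : ∀ᶠ q in 𝓝 0, HasDerivAt ℓ (φ q) q)
    (hφ : AnalyticAt ℝ φ 0) (hφ0 : 0 < φ 0) (hφ' : 0 < deriv φ 0) (hg : AnalyticAt ℝ g 0)
    (hg0 : g 0 = 0) (hinv : ∀ᶠ x in 𝓝 0, g x * φ (g x) = x) :
    0 < deriv (deriv fun x => ℓ (g x) + x * log (φ (g x))) 0 := by
  have hgt : Tendsto g (𝓝 0) (𝓝 0) := by simpa [hg0] using hg.continuousAt.tendsto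
  have hφg {x : ℝ} (hgx : AnalyticAt ℝ g x) (hφx : AnalyticAt ℝ φ (g x)) :
      HasDerivAt (fun x => φ (g x)) (deriv φ (g x) * deriv g x) x :=
    hφx.differentiableAt.hasDerivAt.comp x hgx.differentiableAt.hasDerivAt
  have hinv' {x : ℝ} (hgx : AnalyticAt ℝ g x) (hφx : AnalyticAt ℝ φ (g x))
      (h : ∀ᶠ y in 𝓝 x, g y * φ (g y) = y) :
      deriv g x * φ (g x) + g x * (deriv φ (g x) * deriv g x) = 1 :=
    ((hgx.differentiableAt.hasDerivAt.fun_mul (hφg hgx hφx)).congr_of_eventuallyEq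
      (h.mono fun y hy => hy.symm)).unique (hasDerivAt_id' x)
  have hderiv : deriv (fun x => ℓ (g x) + x * log (φ (g x))) =ᶠ[𝓝 0]
      fun x => 1 + log (φ (g x)) := by
    have hφpos := hφ.continuousAt.eventually_const_lt hφ0
    filter_upwards [hg.eventually_analyticAt, hgt.eventually hφ.eventually_analyticAt,
      hinv.eventually_nhds, hgt.eventually hℓ, hgt.eventually hφpos] with x hgx hφx hx hℓx hpos
    have := (hℓx.comp x hgx.differentiableAt.hasDerivAt).fun_add
      ((hasDerivAt_id' x).fun_mul ((hφg hgx hφx).log hpos.ne'))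
    refine this.deriv.trans ?_
    have h1 := hinv' hgx hφx hx
    have h2 := hx.self_of_nhds
    field_simp
    linear_combination φ (g x) * h1 - (deriv φ (g x) * deriv g x) * h2
  have hφg0 : AnalyticAt ℝ φ (g 0) := by rwa [hg0]
  have hφg0ne : φ (g 0) ≠ 0 := by simpa only [hg0] using hφ0.ne'
  have h1 := hinv' hg hφg0 hinv
  rw [hderiv.deriv_eq, (((hφg hg hφg0).log hφg0ne).const_add 1).deriv]
  rw [hg0] at h1 ⊢
  have hg' : 0 < deriv g 0 := pos_of_mul_pos_left (by linarith) hφ0.le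
  positivity

lemma analyticAt_aeval_nat (p : ℕ[X]) (x : ℝ) : AnalyticAt ℝ (fun q => p.aeval q) x := by
  simp only [← Polynomial.eval_map_algebraMap]
  exact AnalyticOnNhd.eval_polynomial _ x (Set.mem_univ x)

lemma analyticAt_logDeriv_geomPoly (κ : ℕ) :
    AnalyticAt ℝ (fun q : ℝ => (geomPoly κ).derivative.aeval q / (geomPoly κ).aeval q) 0 :=
  (analyticAt_aeval_nat _ 0).fun_div (analyticAt_aeval_nat _ 0) (aeval_geomPoly_pos κ le_rfl).ne'

lemma logDeriv_geomPoly_zero {κ : ℕ} (hκ : 1 ≤ κ) :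
    (geomPoly κ).derivative.aeval (0 : ℝ) / (geomPoly κ).aeval (0 : ℝ) = 1 := by
  simp [← Polynomial.coeff_zero_eq_aeval_zero', Polynomial.coeff_derivative, coeff_geomPoly, hκ]

lemma deriv_logDeriv_geomPoly_zero {κ : ℕ} (hκ : 2 ≤ κ) :
    deriv (fun q : ℝ => (geomPoly κ).derivative.aeval q / (geomPoly κ).aeval q) 0 = 1 := by
  have hderiv := HasDerivAt.fun_div (Polynomial.hasDerivAt_aeval (geomPoly κ).derivative (0 : ℝ))
    (Polynomial.hasDerivAt_aeval (geomPoly κ) 0) (aeval_geomPoly_pos κ le_rfl).ne'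
  rw [hderiv.deriv]
  simp only [← Polynomial.coeff_zero_eq_aeval_zero', Polynomial.coeff_derivative, zero_add,
    coeff_geomPoly hκ, coeff_geomPoly (one_le_two.trans hκ), coeff_geomPoly (Nat.zero_le κ)]
  norm_num

lemma exists_analyticAt_inverse_tgMean {κ : ℕ} (hκ : 1 ≤ κ) :
    ∃ g : ℝ → ℝ, AnalyticAt ℝ g 0 ∧ g 0 = 0 ∧ (∀ᶠ q in 𝓝 0, g (tgMean κ q) = q) ∧
      ∀ᶠ x in 𝓝 0, tgMean κ (g x) = x := by
  have hφ := analyticAt_logDeriv_geomPoly κ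
  have hm : AnalyticAt ℝ (tgMean κ) 0 := by
    simpa only [id_eq, ← tgMean_eq_mul_logDeriv] using analyticAt_id.fun_mul hφ
  have hderiv : deriv (tgMean κ) 0 ≠ 0 := by
    have := (hasDerivAt_id' (0 : ℝ)).fun_mul hφ.differentiableAt.hasDerivAt
    simp only [← tgMean_eq_mul_logDeriv] at this
    rw [this.deriv, logDeriv_geomPoly_zero hκ]
    simp
  have hright := hm.hasStrictDerivAt.eventually_right_inverse hderiv
  have hanalytic := hm.analyticAt_localInverse hderiv
  have hleft := hm.hasStrictDerivAt.eventually_left_inverse hderiv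
  rw [tgMean_zero] at hright hanalytic
  refine ⟨_, hanalytic, ?_, hleft, hright⟩
  simpa [tgMean_zero] using hleft.self_of_nhds

lemma Hmax_tgMean_eq_negMulLog_add {κ : ℕ} (hκ : 1 ≤ κ) {q : ℝ} (hq : 0 ≤ q) :
    Hmax κ (tgMean κ q) = negMulLog (tgMean κ q) + (log ((geomPoly κ).aeval q) +
      tgMean κ q * log ((geomPoly κ).derivative.aeval q / (geomPoly κ).aeval q)) := by
  rw [Hmax_tgMean hκ hq, negMulLog]
  rcases eq_or_ne (tgMean κ q) 0 with h0 | h0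
  · simp [h0]
  · have hne := h0
    rw [tgMean_eq_mul_logDeriv] at hne
    nth_rw 3 [tgMean_eq_mul_logDeriv]
    rw [log_mul (left_ne_zero_of_mul hne) (right_ne_zero_of_mul hne)]
    ring

-- Parametrised by the ratio `q`, the mean is `x = q * φ q` with `φ = (log S)'` and `S` the
-- generating polynomial, so `log q = log x - log (φ q)` isolates the singular term `-x * log x`.
theorem exists_Hmax_eq_negMulLog_add {κ : ℕ} (hκ : 2 ≤ κ) :
    ∃ h : ℝ → ℝ, AnalyticAt ℝ h 0 ∧ 0 < deriv (deriv h) 0 ∧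
      ∃ x₀ > 0, ∀ x ∈ Set.Ico 0 x₀, Hmax κ x = negMulLog x + h x := by
  have hκ1 : 1 ≤ κ := one_le_two.trans hκ
  obtain ⟨g, hg, hg0, hleft, hright⟩ := exists_analyticAt_inverse_tgMean hκ1
  set S : ℝ → ℝ := fun q => (geomPoly κ).aeval q
  set φ : ℝ → ℝ := fun q => (geomPoly κ).derivative.aeval q / (geomPoly κ).aeval q
  have hφ : AnalyticAt ℝ φ 0 := analyticAt_logDeriv_geomPoly κ
  have hφ0 : φ 0 = 1 := logDeriv_geomPoly_zero hκ1
  have hSpos : 0 < S 0 := aeval_geomPoly_pos κ le_rfl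
  have hS : ∀ᶠ q in 𝓝 0, HasDerivAt (fun q => log (S q)) (φ q) q :=
    ((Polynomial.continuous_aeval _).continuousAt.eventually_const_lt hSpos).mono fun q hq =>
      (Polynomial.hasDerivAt_aeval _ q).log hq.ne'
  refine ⟨fun x => log (S (g x)) + x * log (φ (g x)), ?_, ?_, ?_⟩
  · have hφg : AnalyticAt ℝ φ (g 0) := by rwa [hg0]
    have hlogS : AnalyticAt ℝ (fun x => log (S (g x))) 0 :=
      ((analyticAt_aeval_nat _ _).comp hg).log
        (by simpa only [Function.comp_apply, hg0] using hSpos)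
    exact hlogS.fun_add (analyticAt_id.fun_mul ((hφg.comp hg).log (by simp [hg0, hφ0])))
  · refine deriv_deriv_add_mul_log_pos hS hφ (by simp [hφ0])
      (by simp [φ, deriv_logDeriv_geomPoly_zero hκ]) hg hg0 ?_
    simpa only [φ, ← tgMean_eq_mul_logDeriv] using hright
  · obtain ⟨ε, hε, hball⟩ := Metric.eventually_nhds_iff.1 hleft
    have hmono := strictMonoOn_tgMean hκ1
    refine ⟨min (tgMean κ ε) κ, lt_min ?_ (by positivity), fun x ⟨hx0, hx⟩ => ?_⟩
    · simpa [tgMean_zero] using hmono Set.self_mem_Ici hε.le hε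
    obtain ⟨q, hq, rfl⟩ := exists_tgMean_eq κ hx0 (hx.trans_le (min_le_right _ _))
    have hqε : q < ε := (hmono.lt_iff_lt hq hε.le).1 (hx.trans_le (min_le_left _ _))
    dsimp only
    rw [hball (by simpa [abs_of_nonneg hq] using hqε)]
    exact Hmax_tgMean_eq_negMulLog_add hκ1 hq

/-! ### Sparse margins -/

theorem exists_independenceGap_Hmax_nonneg_and_pos {κ : ℕ} (hκ : 2 ≤ κ) :
    ∃ x₀ ∈ Set.Ioo (0 : ℝ) 1, ∀ (m n : ℕ) (r : Fin m → ℝ) (c : Fin n → ℝ),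
      (∀ i, 0 ≤ r i) → (∀ j, 0 ≤ c j) →
      ∑ i, r i = ∑ j, c j → ∑ i, r i ≠ 0 → (∀ i j, r i * c j < x₀ * ∑ k, r k) →
      0 ≤ independenceGap (Hmax κ) r c ∧
        ((¬ ∀ i i', r i = r i') → (¬ ∀ j j', c j = c j') → 0 < independenceGap (Hmax κ) r c) := by
  obtain ⟨h, hh, hpos, x₁, hx₁, hf⟩ := exists_Hmax_eq_negMulLog_add hκ
  obtain ⟨x₂, hx₂, hanalytic, hconv⟩ := exists_strictConvexOn_sq_mul_deriv_deriv hh hpos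
  obtain ⟨x₀, hx₀, hlt⟩ : ∃ x₀, 0 < x₀ ∧ x₀ < min 1 (min x₁ x₂) := exists_between (by positivity)
  obtain ⟨hlt1, hlt₁, hlt₂⟩ : x₀ < 1 ∧ x₀ < x₁ ∧ x₀ < x₂ := by simpa using hlt
  have hsub₁ : Set.Ico 0 x₀ ⊆ Set.Ico 0 x₁ := Set.Ico_subset_Ico_right hlt₁.le
  have hsub₂ : Set.Ico 0 x₀ ⊆ Set.Ico 0 x₂ := Set.Ico_subset_Ico_right hlt₂.le
  refine ⟨x₀, ⟨hx₀, hlt1⟩, fun m n r c hr hc hrc hr0 hsparse => ?_⟩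
  have hstrict (hrne : ¬ ∀ i i', r i = r i') (hcne : ¬ ∀ j j', c j = c j') :
      0 < independenceGap (Hmax κ) r c := by
    push Not at hrne hcne
    exact independenceGap_pos (fun x hx => hf x (hsub₁ hx)) (fun x hx => hanalytic x (hsub₂ hx))
      (hconv.subset hsub₂ (convex_Ico _ _)) hr hc hrc hsparse hrne hcne
  refine ⟨?_, hstrict⟩
  by_cases hrconst : ∀ i i', r i = r i'
  · exact (independenceGap_eq_zero_of_const_left _ hrc hr0 hrconst).ge
  by_cases hcconst : ∀ j j', c j = c j'
  · exact (independenceGap_eq_zero_of_const_right _ hrc hr0 hcconst).ge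
  exact (hstrict hrconst hcconst).le

theorem independenceGap_Hmax_le_sub {κ m n N : ℕ} {R : Fin m → ℕ} {C : Fin n → ℕ} (hN : 0 < N)
    (hRN : ∑ i, R i = N) (hCN : ∑ j, C j = N) (hlt : ∀ i j, R i * C j < N * κ) {LT LI : ℝ}
    (hLT : Tendsto (fun s : ℕ => 1 / (s : ℝ) ^ 2 *
      log (tableCount (fun (_ : Fin s × Fin m) (_ : Fin s × Fin n) => (κ : ℕ∞))
        (cloneVec s R) (cloneVec s C))) atTop (𝓝 LT))
    (hLI : Tendsto (fun s : ℕ => 1 / (s : ℝ) ^ 2 *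
      log (indepEst κ (cloneVec s R) (cloneVec s C))) atTop (𝓝 LI)) :
    independenceGap (Hmax κ) (fun i => (R i : ℝ)) (fun j => (C j : ℝ)) ≤ LT - LI := by
  have hm : (univ : Finset (Fin m)).Nonempty := nonempty_of_sum_ne_zero (hRN.trans_ne hN.ne')
  have hn : (univ : Finset (Fin n)).Nonempty := nonempty_of_sum_ne_zero (hCN.trans_ne hN.ne')
  have hR (i : Fin m) : R i < n * κ := by
    refine lt_of_mul_lt_mul_right ?_ (Nat.zero_le N)
    calc R i * N = ∑ j, R i * C j := by rw [← hCN, mul_sum]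
      _ < ∑ _j : Fin n, N * κ := sum_lt_sum_of_nonempty hn fun j _ => hlt i j
      _ = n * κ * N := by simp; ring
  have hC (j : Fin n) : C j < m * κ := by
    refine lt_of_mul_lt_mul_left ?_ (Nat.zero_le N)
    calc N * C j = ∑ i, R i * C j := by rw [← hRN, sum_mul]
      _ < ∑ _i : Fin m, N * κ := sum_lt_sum_of_nonempty hm fun i _ => hlt i j
      _ = N * (m * κ) := by simp; ring
  have hLI_eq := tendsto_nhds_unique hLI (tendsto_log_indepEst_cloneVec
    (by simpa using card_pos.2 hm) (by simpa using card_pos.2 hn) hRN hR hC)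
  have hLT_ge := sum_Hmax_le_of_tendsto_log_tableCount hN hRN hCN hlt hLT
  have hsum : ∑ i, (R i : ℝ) = N := by exact_mod_cast hRN
  simp only [independenceGap, hsum, Fintype.card_fin]
  linarith

lemma mul_le_iSup_mul_iSup {ι ι' : Type*} [Finite ι] [Finite ι'] {a : ι → ℝ} {b : ι' → ℝ}
    (ha : ∀ i, 0 ≤ a i) (hb : ∀ j, 0 ≤ b j) (i : ι) (j : ι') :
    a i * b j ≤ (⨆ i, a i) * ⨆ j, b j :=
  mul_le_mul (le_ciSup (Set.finite_range a).bddAbove i) (le_ciSup (Set.finite_range b).bddAbove j)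
    (hb j) (iSup_nonneg ha)

/-- **Theorem 4.** For `κ ≥ 2` and sufficiently sparse margins, the margins are
asymptotically positively correlated: the limit for `T_κ` dominates the limit for `I_κ`. -/
theorem attraction_of_sparse_margins (κ : ℕ) (hκ : 2 ≤ κ) :
    ∃ δ : ℝ, δ ∈ Set.Ioo (0 : ℝ) 1 ∧
      ∀ (m n : ℕ) (R : Fin m → ℕ) (C : Fin n → ℕ) (N : ℕ),
        ∑ i, R i = N → ∑ j, C j = N →
        0 < tableCount (fun (_ : Fin m) (_ : Fin n) => (κ : ℕ∞)) R C →
        (⨆ i, (R i : ℝ)) * (⨆ j, (C j : ℝ)) < δ * κ * N →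
        ∀ LT LI : ℝ,
          Filter.Tendsto (fun s : ℕ => (1 / (s : ℝ) ^ 2) *
            Real.log (tableCount (fun (_ : Fin s × Fin m) (_ : Fin s × Fin n) => (κ : ℕ∞))
              (cloneVec s R) (cloneVec s C))) Filter.atTop (nhds LT) →
          Filter.Tendsto (fun s : ℕ => (1 / (s : ℝ) ^ 2) *
            Real.log (indepEst (κ : ℕ∞) (cloneVec s R) (cloneVec s C)))
            Filter.atTop (nhds LI) →
          LI ≤ LT ∧
          ((¬ ∀ i i', R i = R i') → (¬ ∀ j j', C j = C j') → LI < LT) := by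
  obtain ⟨x₀, ⟨hx₀, hx₀1⟩, hgap⟩ := exists_independenceGap_Hmax_nonneg_and_pos hκ
  have hκ1 : (1 : ℝ) < κ := by exact_mod_cast hκ
  refine ⟨x₀ / κ, ⟨by positivity, (div_lt_one (by positivity)).2 (hx₀1.trans hκ1)⟩, ?_⟩
  intro m n R C N hRN hCN _ hsparse LT LI hLT hLI
  rw [div_mul_cancel₀ _ (by positivity)] at hsparse
  have hR0 (i) : (0 : ℝ) ≤ R i := (R i).cast_nonneg
  have hC0 (j) : (0 : ℝ) ≤ C j := (C j).cast_nonneg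
  have hN : (0 : ℝ) < N := pos_of_mul_pos_right
    ((mul_nonneg (iSup_nonneg hR0) (iSup_nonneg hC0)).trans_lt hsparse) hx₀.le
  have hsumR : ∑ i, (R i : ℝ) = N := by exact_mod_cast hRN
  have hsumC : ∑ j, (C j : ℝ) = N := by exact_mod_cast hCN
  have hprod (i j) : (R i * C j : ℝ) < x₀ * N := (mul_le_iSup_mul_iSup hR0 hC0 i j).trans_lt hsparse
  have hprodκ (i j) : R i * C j < N * κ := by
    exact_mod_cast (hprod i j).trans (by nlinarith : x₀ * N < N * (κ : ℝ))
  obtain ⟨hnonneg, hpos⟩ := hgap m n _ _ hR0 hC0 (hsumR.trans hsumC.symm)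
    (hsumR.trans_ne hN.ne') (by simpa only [hsumR] using hprod)
  have hle := independenceGap_Hmax_le_sub (by exact_mod_cast hN) hRN hCN hprodκ hLT hLI
  refine ⟨by linarith, fun hR hC => ?_⟩
  linarith [hpos (by exact_mod_cast hR) (by exact_mod_cast hC)]
end

section
/- Suppose R ∈ ℤ_{>0}^m, C ∈ ℤ_{≥0}^n, and K ∈ ℤ_{>0}^{m×n}. Define C̃ = (c̃_1,…,c̃_n) by c̃_j := (Σ_{i=1}^m k_{ij}) − c_j, and suppose C̃ ∈ ℤ_{>0}^n. Then f_K(R,C) − ln T_K(R,C) ≤ −ln√(2π|K|) + Σ_{i=1}^m ln√(2π r_i) + Σ_{j=1}^n ln√(2π c̃_j) + (m+n)·ln(e/√(2π)). -/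
open Real Filter Finset

/-!
A table bounded by `K` is the same thing as an orientation of the bipartite multigraph with `K i j`
parallel edges between row `i` and column `j`, with in-degree `R i` at row `i` and
`∑ i, K i j - C j` at column `j`. For an arbitrary multigraph whose edge `e` joins `a e` to `b e`
with multiplicity `K e`, the beta integral shows that the number of orientations with in-degree
vector `m` is `∏ e, (K e + 1)` times the integral over `u ∈ [0, 1]^E` of the coefficient of `x ^ m`
in `p_u = ∏ e, (u e * x (a e) + (1 - u e) * x (b e)) ^ K e`.

The capacity `inf_{x > 0} p_u(x) / x ^ m` is log-concave in `(u, m)` jointly, because AM-GM makes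
the linear forms so. It dominates the coefficient, and for products of linear forms it exceeds the
coefficient by a factor of at most `ω(∑ e, K e) / ∏ s, ω(m s)`: this is Gurvits' generalization of
van der Waerden's inequality. So the coefficient is log-concave in `(u, m)` up to that factor,
and by the Prékopa–Leindler inequality so is its integral over the cube. Stirling's formula for `ω`
turns the factor into the error term.
-/

section Omega

lemma omegaFn_pos (n : ℕ) : 0 < omegaFn n := by
  have : 0 < (n : ℝ) ^ n := by exact_mod_cast Nat.pow_self_pos
  unfold omegaFn
  positivity

lemma log_omegaFn (n : ℕ) : log (omegaFn n) = n * log n - log n.factorial := by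
  have : (n : ℝ) ^ n ≠ 0 := by exact_mod_cast Nat.pow_self_pos.ne'
  rw [omegaFn, log_div this (by positivity), log_pow]

lemma log_omegaFn_le (n : ℕ) : log (omegaFn n) ≤ n - log √(2 * π * n) := by
  rcases n.eq_zero_or_pos with rfl | hn
  · simp [omegaFn]
  have hStirling := log_le_log (by positivity) (Stirling.le_factorial_stirling n)
  rw [log_mul (by positivity) (by positivity), log_pow,
    log_div (by positivity) (by positivity), log_exp] at hStirling
  rw [log_omegaFn]
  linarith

lemma neg_log_omegaFn_le {n : ℕ} (hn : 0 < n) :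
    -log (omegaFn n) ≤ log √(2 * π * n) + log (exp 1 / √(2 * π)) - n := by
  have hStirling := Stirling.stirlingSeq'_antitone (Nat.zero_le (n - 1))
  simp only [Function.comp_apply, Nat.succ_eq_add_one, Nat.sub_add_cancel hn, zero_add,
    Stirling.stirlingSeq_one] at hStirling
  rw [Stirling.stirlingSeq, div_le_iff₀ (by positivity)] at hStirling
  have hlog := log_le_log (by positivity) hStirling
  rw [log_mul (by positivity) (by positivity), log_mul (by positivity) (by positivity), log_pow,
    log_div (by positivity) (by positivity), log_div (by positivity) (by positivity), log_exp,
    sqrt_mul (by positivity), log_mul (by positivity) (by positivity)] at hlog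
  rw [log_omegaFn, log_div (by positivity) (by positivity), log_exp, sqrt_mul (by positivity),
    log_mul (by positivity) (by positivity)]
  linarith

lemma sum_neg_log_omegaFn_le {ι : Type*} [Fintype ι] {v : ι → ℕ} (hv : ∀ i, 0 < v i) :
    -∑ i, log (omegaFn (v i)) ≤ ∑ i, log √(2 * π * v i) +
      Fintype.card ι * log (exp 1 / √(2 * π)) - ∑ i, (v i : ℝ) := by
  have hsum := Finset.sum_le_sum fun i (_ : i ∈ univ) => neg_log_omegaFn_le (hv i)
  simpa only [Finset.sum_neg_distrib, Finset.sum_sub_distrib, Finset.sum_add_distrib,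
    Finset.sum_const, Finset.card_univ, nsmul_eq_mul] using hsum

lemma succ_mul_omegaFn_succ (n : ℕ) :
    (n + 1) * omegaFn (n + 1) = ((n : ℝ) + 1) ^ (n + 1) / n.factorial := by
  rw [omegaFn, Nat.factorial_succ]
  push_cast
  field_simp

end Omega

section AMGM

lemma pow_le_pow_self_mul_exp (a : ℕ) {y : ℝ} (hy : 0 ≤ y) :
    y ^ a ≤ (a : ℝ) ^ a * exp (y - a) := by
  rcases a.eq_zero_or_pos with rfl | ha
  · simpa using hy
  have hlinear : y ≤ a * exp (y / a - 1) := by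
    calc y = a * (y / a - 1 + 1) := by field_simp; ring
      _ ≤ _ := by gcongr; exact add_one_le_exp _
  calc y ^ a ≤ (a * exp (y / a - 1)) ^ a := by gcongr
    _ = _ := by
      rw [mul_pow, ← exp_nat_mul]
      congr 2
      field_simp

lemma pow_mul_pow_le_of_add_eq (a b : ℕ) {y z : ℝ} (hy : 0 ≤ y) (hz : 0 ≤ z)
    (h : y + z = a + b) : y ^ a * z ^ b ≤ (a : ℝ) ^ a * (b : ℝ) ^ b := by
  calc y ^ a * z ^ b ≤ ((a : ℝ) ^ a * exp (y - a)) * ((b : ℝ) ^ b * exp (z - b)) := by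
        gcongr <;> exact pow_le_pow_self_mul_exp _ ‹_›
    _ = (a : ℝ) ^ a * (b : ℝ) ^ b * exp (y - a + (z - b)) := by rw [exp_add]; ring
    _ = _ := by rw [show y - a + (z - b) = 0 by linarith, exp_zero, mul_one]

lemma multiset_prod_le_sum_div_card_pow {s : Multiset ℝ} (hs : ∀ x ∈ s, 0 ≤ x) :
    s.prod ≤ (s.sum / s.card) ^ s.card := by
  rcases s.empty_or_exists_mem with rfl | ⟨x₀, hx₀⟩
  · simp
  have hcard : 0 < s.card := Multiset.card_pos_iff_exists_mem.2 ⟨x₀, hx₀⟩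
  have hcount : ∑ x ∈ s.toFinset, (s.count x : ℝ) = s.card := by
    exact_mod_cast s.toFinset_sum_count_eq
  have hmean := geom_mean_le_arith_mean s.toFinset (fun x => (s.count x : ℝ)) id
    (fun _ _ => by positivity) (by rw [hcount]; positivity)
    (fun x hx => hs x (Multiset.mem_toFinset.1 hx))
  simp only [rpow_natCast, id, hcount, ← Finset.prod_multiset_count, ← nsmul_eq_mul,
    ← Finset.sum_multiset_count] at hmean
  calc s.prod = (s.prod ^ (s.card : ℝ)⁻¹) ^ s.card :=
        (rpow_inv_natCast_pow (Multiset.prod_nonneg hs) hcard.ne').symm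
    _ ≤ _ := by have := Multiset.prod_nonneg hs; gcongr

end AMGM

section RealRooted

open Polynomial

/-- A real-rooted polynomial with positive leading coefficient and no positive root. -/
structure IsNonposRooted (f : ℝ[X]) : Prop where
  splits : f.Splits
  roots_nonpos : ∀ ρ ∈ f.roots, ρ ≤ 0
  leadingCoeff_pos : 0 < f.leadingCoeff

namespace IsNonposRooted

variable {f : ℝ[X]} (hf : IsNonposRooted f) {y : ℝ}
include hf

lemma sub_root_pos (hy : 0 < y) {ρ : ℝ} (hρ : ρ ∈ f.roots) : 0 < y - ρ := by
  linarith [hf.roots_nonpos ρ hρ]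

lemma card_roots : f.roots.card = f.natDegree :=
  splits_iff_card_roots.1 hf.splits

lemma eval_eq_mul_prod (x : ℝ) :
    f.eval x = f.leadingCoeff * (f.roots.map fun ρ => x - ρ).prod := by
  conv_lhs => rw [hf.splits.eq_prod_roots]
  rw [eval_mul, eval_C, eval_multiset_prod, Multiset.map_map]
  simp

lemma eval_pos (hy : 0 < y) : 0 < f.eval y := by
  rw [hf.eval_eq_mul_prod]
  refine mul_pos hf.leadingCoeff_pos (Multiset.prod_pos fun b hb => ?_)
  obtain ⟨ρ, hρ, rfl⟩ := Multiset.mem_map.1 hb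
  exact hf.sub_root_pos hy hρ

lemma eval_derivative_div_eval (hy : 0 < y) :
    f.derivative.eval y / f.eval y = (f.roots.map fun ρ => 1 / (y - ρ)).sum :=
  hf.splits.eval_derivative_div_eval_of_ne_zero (hf.eval_pos hy).ne'

lemma eval_derivative_pos (hdeg : 0 < f.natDegree) (hy : 0 < y) : 0 < f.derivative.eval y := by
  have hsum : 0 < (f.roots.map fun ρ => 1 / (y - ρ)).sum := by
    have hterm : ∀ b ∈ f.roots.map (fun ρ => 1 / (y - ρ)), 0 < b := fun b hb => by
      obtain ⟨ρ, hρ, rfl⟩ := Multiset.mem_map.1 hb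
      exact one_div_pos.2 (hf.sub_root_pos hy hρ)
    obtain ⟨b, hb⟩ := Multiset.card_pos_iff_exists_mem.1
      (by rwa [Multiset.card_map, hf.card_roots] :
        0 < (f.roots.map fun ρ => 1 / (y - ρ)).card)
    exact (hterm b hb).trans_le (Multiset.single_le_sum (fun c hc => (hterm c hc).le) b hb)
  rw [← hf.eval_derivative_div_eval hy] at hsum
  exact (div_pos_iff_of_pos_right (hf.eval_pos hy)).1 hsum

lemma mul_eval_derivative_le (hy : 0 < y) : y * f.derivative.eval y ≤ f.natDegree * f.eval y := by
  rw [← div_le_iff₀ (hf.eval_pos hy), mul_div_assoc, hf.eval_derivative_div_eval hy,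
    ← le_div_iff₀' hy, ← hf.card_roots, div_eq_mul_one_div, ← nsmul_eq_mul,
    ← Multiset.card_map (fun ρ => 1 / (y - ρ)) f.roots]
  refine Multiset.sum_le_card_nsmul _ _ fun b hb => ?_
  obtain ⟨ρ, hρ, rfl⟩ := Multiset.mem_map.1 hb
  exact one_div_le_one_div_of_le hy (by linarith [hf.roots_nonpos ρ hρ])

-- AM-GM over the ratios `(τ - ρ) / (y - ρ)` at the roots `ρ`.
lemma eval_le_eval_mul_pow (hdeg : 0 < f.natDegree) {τ : ℝ} (hy : 0 < y) (hτ : 0 < τ) :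
    f.eval τ ≤ f.eval y *
      (1 + (τ - y) * (f.derivative.eval y / f.eval y) / f.natDegree) ^ f.natDegree := by
  have hne : ∀ ρ ∈ f.roots, y - ρ ≠ 0 := fun ρ hρ => (hf.sub_root_pos hy hρ).ne'
  set ratios := f.roots.map fun ρ => (τ - ρ) / (y - ρ) with hratios
  have hprod : f.eval τ = f.eval y * ratios.prod := by
    rw [hf.eval_eq_mul_prod τ, hf.eval_eq_mul_prod y, mul_assoc, hratios, ← Multiset.prod_map_mul]
    congr 2
    exact Multiset.map_congr rfl fun ρ hρ => (mul_div_cancel₀ _ (hne ρ hρ)).symm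
  have hsum : ratios.sum =
      f.natDegree + (τ - y) * (f.derivative.eval y / f.eval y) := by
    have hratio : ∀ ρ ∈ f.roots, (τ - ρ) / (y - ρ) = 1 + (τ - y) * (1 / (y - ρ)) := fun ρ hρ => by
      have := hne ρ hρ
      field_simp
      ring
    rw [hratios, Multiset.map_congr rfl hratio, Multiset.sum_map_add, Multiset.sum_map_mul_left,
      ← hf.eval_derivative_div_eval hy, ← hf.card_roots]
    simp
  have hcard : ratios.card = f.natDegree := by rw [hratios, Multiset.card_map, hf.card_roots]
  have hnonneg : ∀ b ∈ ratios, 0 ≤ b := fun b hb => by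
    obtain ⟨ρ, hρ, rfl⟩ := Multiset.mem_map.1 hb
    exact (div_pos (hf.sub_root_pos hτ hρ) (hf.sub_root_pos hy hρ)).le
  have hmean := multiset_prod_le_sum_div_card_pow hnonneg
  rw [hcard, hsum, add_div, div_self (by positivity)] at hmean
  rw [hprod]
  exact mul_le_mul_of_nonneg_left hmean (hf.eval_pos hy).le

end IsNonposRooted

-- The bound on `B` comes from evaluating the hypothesis at `τ = w * (q + 1) / e`.
lemma mul_pow_le_of_forall_mul_pow_le {e q : ℕ} (he : 0 < e) {B F w y : ℝ} (hF : 0 ≤ F)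
    (hy : 0 < y) (hyw : y ≤ w)
    (h : ∀ τ, 0 < τ → B * τ ^ (q + 1) ≤ F * ((w - y + τ) / w) ^ (e + 1)) :
    B * ((q : ℝ) + 1) ^ (q + 1) * e ^ e * y ^ q * w ≤ F * ((e : ℝ) + 1) ^ (e + 1) * q ^ q := by
  have hw : 0 < w := hy.trans_le hyw
  have hAMGM : (e * y / w) ^ q * (e + (q + 1) - e * y / w) ^ (e + 1) ≤
      (q : ℝ) ^ q * ((e + 1 : ℕ) : ℝ) ^ (e + 1) := by
    refine pow_mul_pow_le_of_add_eq q (e + 1) (by positivity) ?_ (by push_cast; ring)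
    have : e * y / w ≤ e := by rw [div_le_iff₀ hw]; gcongr
    linarith
  have hbase : (w - y + w * (q + 1) / e) / w = (e + (q + 1) - e * y / w) / e := by
    field_simp
    ring
  have hτ := h (w * (q + 1) / e) (by positivity)
  rw [hbase] at hτ
  calc B * ((q : ℝ) + 1) ^ (q + 1) * e ^ e * y ^ q * w
      = B * (w * (q + 1) / e) ^ (q + 1) * ((e * y / w) ^ q * e ^ (e + 1)) := by
        rw [div_pow, div_pow, mul_pow, mul_pow]
        field_simp
        ring
    _ ≤ F * ((e + (q + 1) - e * y / w) / e) ^ (e + 1) * ((e * y / w) ^ q * e ^ (e + 1)) := by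
        gcongr
    _ = F * ((e * y / w) ^ q * (e + (q + 1) - e * y / w) ^ (e + 1)) := by
        rw [div_pow]
        field_simp
    _ ≤ F * ((q : ℝ) ^ q * ((e + 1 : ℕ) : ℝ) ^ (e + 1)) := by gcongr
    _ = _ := by push_cast; ring

lemma le_of_forall_mul_le_add_mul {B D F : ℝ} (hF : 0 ≤ F) (h : ∀ τ, 0 < τ → B * τ ≤ F + D * τ) :
    B ≤ D := by
  by_contra! hlt
  have hpos : 0 < B - D := sub_pos.2 hlt
  have hτ := h ((F + 1) / (B - D)) (div_pos (by linarith) hpos)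
  have : (B - D) * ((F + 1) / (B - D)) = F + 1 := by field_simp
  linarith

lemma IsNonposRooted.mul_pow_le_eval_derivative {f : ℝ[X]} (hf : IsNonposRooted f) {e q : ℕ}
    (hdeg : f.natDegree = e + 1) (hqe : q ≤ e) {B : ℝ}
    (hB : ∀ τ, 0 < τ → B * τ ^ (q + 1) ≤ f.eval τ) {y : ℝ} (hy : 0 < y) :
    B * ((q + 1) * omegaFn (q + 1)) * omegaFn e * y ^ q ≤
      f.derivative.eval y * omegaFn (e + 1) * omegaFn q := by
  have hF := hf.eval_pos hy
  have hD := hf.eval_derivative_pos (hdeg ▸ e.succ_pos) hy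
  have htangent := fun τ hτ => (hB τ hτ).trans (hf.eval_le_eval_mul_pow (hdeg ▸ e.succ_pos) hy hτ)
  have hyD := hf.mul_eval_derivative_le hy
  rw [hdeg] at htangent hyD
  generalize f.eval y = F, f.derivative.eval y = D at *
  rcases e.eq_zero_or_pos with rfl | he
  · obtain rfl : q = 0 := by omega
    simp only [zero_add, pow_one, Nat.cast_one, div_one, pow_zero, mul_one, CharP.cast_eq_zero,
      omegaFn, Nat.factorial] at htangent ⊢
    refine le_of_forall_mul_le_add_mul (F := F) hF.le fun τ hτ => (htangent τ hτ).trans ?_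
    have : F * (1 + (τ - y) * (D / F)) = F + D * τ - D * y := by field_simp; ring
    nlinarith [mul_pos hD hy]
  push_cast at htangent hyD
  have hkey := mul_pow_le_of_forall_mul_pow_le (B := B) (q := q) (w := (e + 1) * F / D) he hF.le hy
    (by rwa [le_div_iff₀ hD]) fun τ hτ => (htangent τ hτ).trans_eq <| by
      congr 2
      field_simp
      ring
  have hω : (e : ℝ) + 1 ≠ 0 := by positivity
  have hsucc : omegaFn (e + 1) = ((e : ℝ) + 1) ^ (e + 1) / e.factorial / (e + 1) := by
    rw [eq_div_iff hω, mul_comm, succ_mul_omegaFn_succ]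
  rw [succ_mul_omegaFn_succ, hsucc, omegaFn, omegaFn]
  have hscale : 0 < (e + 1) * F / D * (q.factorial * e.factorial) := by positivity
  refine le_of_mul_le_mul_right ?_ hscale
  refine (Eq.le ?_).trans (hkey.trans_eq ?_) <;> field_simp

end RealRooted

section Homogeneous

open MvPolynomial

lemma eq_single_of_apply_eq_degree {σ : Type*} {m : σ →₀ ℕ} {i : σ} (h : m i = m.degree) :
    m = Finsupp.single i m.degree := by
  classical
  have hdecomp := Finsupp.single_add_erase i m
  have herase : (m.erase i).degree = 0 := by
    have := congrArg Finsupp.degree hdecomp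
    rw [map_add, Finsupp.degree_single] at this
    omega
  rw [Finsupp.degree_eq_zero_iff] at herase
  rw [herase, add_zero, h] at hdecomp
  exact hdecomp.symm

variable {σ R : Type*} [CommSemiring R] {p : MvPolynomial σ R} {d : ℕ} (hp : p.IsHomogeneous d)
include hp

lemma degree_eq_of_mem_support {m : σ →₀ ℕ} (hm : m ∈ p.support) : m.degree = d := by
  by_contra h
  exact mem_support_iff.1 hm (hp.coeff_eq_zero h)

lemma aeval_mul_of_isHomogeneous {S : Type*} [CommSemiring S] [Algebra R S] (c : S) (z : σ → S) :
    aeval (fun j => c * z j) p = c ^ d * aeval z p := by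
  rw [aeval_def, aeval_def, eval₂_eq, eval₂_eq, Finset.mul_sum]
  refine Finset.sum_congr rfl fun m hm => ?_
  simp_rw [mul_pow]
  rw [Finset.prod_mul_distrib, Finset.prod_pow_eq_pow_sum, ← Finsupp.degree_apply,
    degree_eq_of_mem_support hp hm]
  ring

end Homogeneous

section VarSlice

open MvPolynomial

variable {σ R S : Type*} [DecidableEq σ] [CommSemiring R] [CommSemiring S] [Algebra R S]

/-- The univariate polynomial obtained from `p` by giving every variable other than the `i`-th
its value under `z`. -/
noncomputable def varSlice (p : MvPolynomial σ R) (i : σ) (z : σ → S) : Polynomial S :=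
  aeval (Function.update (fun j => Polynomial.C (z j)) i Polynomial.X) p

lemma eval_varSlice (p : MvPolynomial σ R) (i : σ) (z : σ → S) (w : S) :
    (varSlice p i z).eval w = aeval (Function.update z i w) p := by
  rw [varSlice, ← Polynomial.coe_aeval_eq_eval,
    ← AlgHom.restrictScalars_apply R (Polynomial.aeval w : Polynomial S →ₐ[S] S),
    MvPolynomial.comp_aeval_apply]
  congr 2
  funext j
  rcases eq_or_ne j i with rfl | hj <;> simp [*]

lemma map_varSlice {T : Type*} [CommSemiring T] [Algebra R T] (φ : S →ₐ[R] T)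
    (p : MvPolynomial σ R) (i : σ) (z : σ → S) :
    (varSlice p i z).map φ = varSlice p i (φ ∘ z) := by
  rw [varSlice, varSlice, ← Polynomial.coe_mapAlgHom, MvPolynomial.comp_aeval_apply]
  congr 2
  funext j
  rcases eq_or_ne j i with rfl | hj <;> simp [*]

lemma derivative_varSlice (p : MvPolynomial σ R) (i : σ) (z : σ → S) :
    Polynomial.derivative (varSlice p i z) = varSlice (pderiv i p) i z := by
  unfold varSlice
  induction p using MvPolynomial.induction_on with
  | C a => simp [Polynomial.algebraMap_apply]
  | add p q hp hq => simp [hp, hq]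
  | mul_X p j hp =>
    rw [map_mul, Polynomial.derivative_mul, hp, pderiv_mul, map_add, map_mul, map_mul, aeval_X,
      pderiv_X]
    rcases eq_or_ne j i with rfl | hj <;> simp [*]

lemma varSlice_eq_sum [Fintype σ] (p : MvPolynomial σ R) (i : σ) (z : σ → S) :
    varSlice p i z = ∑ m ∈ p.support, Polynomial.C (algebraMap R S (p.coeff m) *
      ∏ j ∈ univ.erase i, z j ^ m j) * Polynomial.X ^ m i := by
  rw [varSlice, aeval_def, eval₂_eq']
  refine Finset.sum_congr rfl fun m _ => ?_
  have hfrozen : ∏ j ∈ univ.erase i, Function.update (fun j => Polynomial.C (z j)) i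
      Polynomial.X j ^ m j = ∏ j ∈ univ.erase i, Polynomial.C (z j ^ m j) :=
    Finset.prod_congr rfl fun j hj => by simp [Finset.ne_of_mem_erase hj]
  rw [← Finset.mul_prod_erase _ _ (Finset.mem_univ i), hfrozen, Function.update_self, map_mul,
    map_prod, Polynomial.algebraMap_apply]
  ring

variable [Finite σ] {p : MvPolynomial σ R} {d : ℕ} (hp : p.IsHomogeneous d)
include hp

lemma natDegree_varSlice_le (i : σ) (z : σ → S) : (varSlice p i z).natDegree ≤ d := by
  cases nonempty_fintype σ
  rw [varSlice_eq_sum]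
  refine Polynomial.natDegree_sum_le_of_forall_le _ _ fun m hm => ?_
  exact (Polynomial.natDegree_C_mul_X_pow_le _ _).trans
    ((Finsupp.le_degree i m).trans_eq (degree_eq_of_mem_support hp hm))

lemma coeff_varSlice (i : σ) (z : σ → S) :
    (varSlice p i z).coeff d = algebraMap R S (p.coeff (Finsupp.single i d)) := by
  cases nonempty_fintype σ
  rw [varSlice_eq_sum, Polynomial.finsetSum_coeff, Finset.sum_eq_single (Finsupp.single i d)]
  · rw [Polynomial.coeff_C_mul_X_pow, Finsupp.single_eq_same, if_pos rfl, Finset.prod_eq_one,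
      mul_one]
    intro j hj
    rw [Finsupp.single_eq_of_ne (Finset.ne_of_mem_erase hj), pow_zero]
  · intro m hm hne
    rw [Polynomial.coeff_C_mul_X_pow, if_neg]
    intro h
    have hdeg := degree_eq_of_mem_support hp hm
    exact hne (hdeg ▸ eq_single_of_apply_eq_degree (h.symm.trans hdeg.symm))
  · intro h
    simp [notMem_support_iff.1 h]

lemma natDegree_varSlice (i : σ) (z : σ → S)
    (hc : algebraMap R S (p.coeff (Finsupp.single i d)) ≠ 0) : (varSlice p i z).natDegree = d :=
  Polynomial.natDegree_eq_of_le_of_coeff_ne_zero (natDegree_varSlice_le hp i z)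
    (by rwa [coeff_varSlice hp])

lemma leadingCoeff_varSlice (i : σ) (z : σ → S)
    (hc : algebraMap R S (p.coeff (Finsupp.single i d)) ≠ 0) :
    (varSlice p i z).leadingCoeff = algebraMap R S (p.coeff (Finsupp.single i d)) := by
  rw [Polynomial.leadingCoeff, natDegree_varSlice hp i z hc, coeff_varSlice hp]

end VarSlice

section Capacity

open MvPolynomial

variable {σ : Type*} {p : MvPolynomial σ ℝ} {m : σ →₀ ℕ}

lemma eval_nonneg_of_coeff_nonneg (hp : ∀ m, 0 ≤ p.coeff m) {x : σ → ℝ} (hx : ∀ i, 0 ≤ x i) :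
    0 ≤ eval x p := by
  rw [eval_eq]
  exact Finset.sum_nonneg fun m _ =>
    mul_nonneg (hp m) (Finset.prod_nonneg fun i _ => pow_nonneg (hx i) _)

variable [Fintype σ]

/-- The capacity of `p` at the monomial `x ^ m`: the infimum of `p(x) / x ^ m` over the positive
orthant. -/
noncomputable def capacity (p : MvPolynomial σ ℝ) (m : σ →₀ ℕ) : ℝ :=
  ⨅ x : {x : σ → ℝ // ∀ i, 0 < x i}, eval (x : σ → ℝ) p / ∏ i, (x : σ → ℝ) i ^ m i

lemma prod_add_single {M : Type*} [CommMonoid M] (f : σ → ℕ → M) (m : σ →₀ ℕ) (i : σ) :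
    (∏ j, f j ((m + Finsupp.single i 1 : σ →₀ ℕ) j)) * f i (m i) =
      (∏ j, f j (m j)) * f i (m i + 1) := by
  classical
  have herase : ∏ j ∈ univ.erase i, f j ((m + Finsupp.single i 1 : σ →₀ ℕ) j) =
      ∏ j ∈ univ.erase i, f j (m j) :=
    Finset.prod_congr rfl fun j hj => by simp [Finset.ne_of_mem_erase hj]
  rw [← Finset.mul_prod_erase _ _ (Finset.mem_univ i), herase,
    ← Finset.mul_prod_erase _ (fun j => f j (m j)) (Finset.mem_univ i)]
  simp only [Finsupp.add_apply, Finsupp.single_eq_same]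
  exact (mul_rotate _ _ _).trans (by rw [mul_comm (f i (m i)), mul_right_comm])

lemma prod_update_pow_add_single [DecidableEq σ] (x : σ → ℝ) (m : σ →₀ ℕ) (i : σ) (τ : ℝ) :
    ∏ j, Function.update x i τ j ^ (m + Finsupp.single i 1 : σ →₀ ℕ) j =
      τ ^ (m i + 1) * ∏ j ∈ univ.erase i, x j ^ m j := by
  rw [← Finset.mul_prod_erase _ _ (Finset.mem_univ i)]
  congr 1
  · simp
  · exact Finset.prod_congr rfl fun j hj => by simp [Finset.ne_of_mem_erase hj]

lemma le_capacity {B : ℝ}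
    (h : ∀ x : σ → ℝ, (∀ i, 0 < x i) → B * ∏ i, x i ^ m i ≤ eval x p) : B ≤ capacity p m := by
  have : Nonempty {x : σ → ℝ // ∀ i, 0 < x i} := ⟨⟨1, fun _ => one_pos⟩⟩
  refine le_ciInf fun x => ?_
  rw [le_div_iff₀ (Finset.prod_pos fun i _ => pow_pos (x.2 i) _)]
  exact h x x.2

lemma coeff_mul_prod_le_eval (hp : ∀ m, 0 ≤ p.coeff m) {x : σ → ℝ} (hx : ∀ i, 0 < x i) :
    p.coeff m * ∏ i, x i ^ m i ≤ eval x p := by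
  have hterm : ∀ m' : σ →₀ ℕ, 0 ≤ p.coeff m' * ∏ i, x i ^ m' i := fun m' =>
    mul_nonneg (hp m') (Finset.prod_nonneg fun i _ => (pow_pos (hx i) _).le)
  rw [eval_eq']
  by_cases hm : m ∈ p.support
  · exact Finset.single_le_sum (fun m' _ => hterm m') hm
  · rw [notMem_support_iff.1 hm, zero_mul]
    exact Finset.sum_nonneg fun m' _ => hterm m'

lemma capacity_mul_prod_le_eval (hp : ∀ m, 0 ≤ p.coeff m) {x : σ → ℝ} (hx : ∀ i, 0 < x i) :
    capacity p m * ∏ i, x i ^ m i ≤ eval x p := by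
  rw [← le_div_iff₀ (Finset.prod_pos fun i _ => pow_pos (hx i) _)]
  refine ciInf_le (f := fun x : {x : σ → ℝ // ∀ i, 0 < x i} =>
    eval (x : σ → ℝ) p / ∏ i, (x : σ → ℝ) i ^ m i) ⟨0, ?_⟩ ⟨x, hx⟩
  rintro _ ⟨y, rfl⟩
  exact div_nonneg (eval_nonneg_of_coeff_nonneg hp fun i => (y.2 i).le)
    (Finset.prod_nonneg fun i _ => (pow_pos (y.2 i) _).le)

lemma coeff_le_capacity (hp : ∀ m, 0 ≤ p.coeff m) : p.coeff m ≤ capacity p m :=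
  le_capacity fun _ hx => coeff_mul_prod_le_eval hp hx

lemma capacity_mono {q : MvPolynomial σ ℝ} (hp : ∀ m, 0 ≤ p.coeff m)
    (hpq : ∀ x : σ → ℝ, (∀ i, 0 < x i) → eval x p ≤ eval x q) : capacity p m ≤ capacity q m :=
  le_capacity fun x hx => (capacity_mul_prod_le_eval hp hx).trans (hpq x hx)

end Capacity

section HalfPlaneStable

open MvPolynomial

/-- Homogeneous polynomials of degree `d`, all of whose degree-`d` coefficients are positive, which
do not vanish when all variables lie in the open right half-plane. For homogeneous polynomials this
half-plane is as good as any other; positivity of the coefficients keeps all slices of degree `d`.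
-/
structure IsHalfPlaneStable {σ : Type*} (p : MvPolynomial σ ℝ) (d : ℕ) : Prop where
  homogeneous : p.IsHomogeneous d
  coeff_pos : ∀ m : σ →₀ ℕ, m.degree = d → 0 < p.coeff m
  aeval_ne_zero : ∀ z : σ → ℂ, (∀ i, 0 < (z i).re) → aeval z p ≠ 0

lemma exists_nonpos_ofReal_eq {ρ : ℂ} (hρ : ‖ρ‖ + ρ.re ≤ 0) : ∃ t : ℝ, t ≤ 0 ∧ (t : ℂ) = ρ := by
  have hre : ρ.re = -‖ρ‖ := by linarith [(abs_le.1 (Complex.abs_re_le_norm ρ)).1]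
  have him : ρ.im = 0 := Complex.abs_re_eq_norm.1 (by rw [hre, abs_neg, abs_norm])
  exact ⟨ρ.re, by simp [hre], Complex.ext rfl (by simp [him])⟩

namespace IsHalfPlaneStable

variable {σ : Type*} {p : MvPolynomial σ ℝ} {d : ℕ}

lemma coeff_nonneg (hp : IsHalfPlaneStable p d) (m : σ →₀ ℕ) : 0 ≤ p.coeff m := by
  by_cases h : m.degree = d
  · exact (hp.coeff_pos m h).le
  · exact (hp.homogeneous.coeff_eq_zero h).ge

lemma one : IsHalfPlaneStable (1 : MvPolynomial σ ℝ) 0 where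
  homogeneous := isHomogeneous_one σ ℝ
  coeff_pos m hm := by simp [(Finsupp.degree_eq_zero_iff m).1 hm]
  aeval_ne_zero z _ := by simp

lemma coeff_single_pos (hp : IsHalfPlaneStable p d) (i : σ) :
    0 < p.coeff (Finsupp.single i d) :=
  hp.coeff_pos _ (Finsupp.degree_single i d)

-- Multiplying all variables by `conj ρ + ‖ρ‖` moves `ρ` and the positive reals into the right
-- half-plane, unless `ρ` is real and nonpositive.
lemma exists_nonpos_of_eval_varSlice_eq_zero [DecidableEq σ] (hp : IsHalfPlaneStable p d) (i : σ)
    {x : σ → ℝ} (hx : ∀ j, 0 < x j) {ρ : ℂ}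
    (hρ : (varSlice p i fun j => (x j : ℂ)).eval ρ = 0) : ∃ t : ℝ, t ≤ 0 ∧ (t : ℂ) = ρ := by
  refine exists_nonpos_ofReal_eq (not_lt.1 fun hlt => ?_)
  have hnorm : 0 < ‖ρ‖ := norm_pos_iff.2 (by rintro rfl; simp at hlt)
  rw [eval_varSlice] at hρ
  have hrotate := aeval_mul_of_isHomogeneous hp.homogeneous ((starRingEnd ℂ) ρ + ‖ρ‖)
    (Function.update (fun j => (x j : ℂ)) i ρ)
  rw [hρ, mul_zero] at hrotate
  refine hp.aeval_ne_zero _ (fun j => ?_) hrotate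
  rcases eq_or_ne j i with rfl | hj
  · rw [Function.update_self, add_mul, mul_comm, Complex.mul_conj, Complex.add_re,
      Complex.re_ofReal_mul, Complex.ofReal_re, Complex.normSq_eq_norm_sq]
    nlinarith
  · rw [Function.update_of_ne hj, Complex.re_mul_ofReal, Complex.add_re, Complex.conj_re,
      Complex.ofReal_re]
    exact mul_pos (by linarith) (hx j)

-- Gauss–Lucas, applied in the `i`-th variable.
lemma pderiv [Finite σ] (hp : IsHalfPlaneStable p (d + 1)) (i : σ) :
    IsHalfPlaneStable (pderiv i p) d where
  homogeneous := hp.homogeneous.pderiv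
  coeff_pos m hm := by
    rw [coeff_pderiv]
    exact mul_pos (hp.coeff_pos _ (by rw [map_add, hm, Finsupp.degree_single])) (by positivity)
  aeval_ne_zero z hz h0 := by
    classical
    have hdeg : (varSlice p i z).natDegree = d + 1 :=
      natDegree_varSlice hp.homogeneous i z (by simpa using (hp.coeff_single_pos i).ne')
    have hroot : z i ∈ (Polynomial.derivative (varSlice p i z)).rootSet ℂ := by
      rw [Polynomial.mem_rootSet]
      refine ⟨fun h => ?_, ?_⟩
      · have := Polynomial.derivative_eq_zero.1 h
        omega
      · rw [Polynomial.coe_aeval_eq_eval, derivative_varSlice, eval_varSlice,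
          Function.update_eq_self, h0]
    have hhalfPlane : (varSlice p i z).rootSet ℂ ⊆ {w : ℂ | w.re ≤ 0} := fun w hw => by
      rw [Polynomial.mem_rootSet, Polynomial.coe_aeval_eq_eval, eval_varSlice] at hw
      by_contra hre
      refine hp.aeval_ne_zero _ (fun j => ?_) hw.2
      rw [Set.mem_ofPred_eq, not_le] at hre
      rcases eq_or_ne j i with rfl | hj <;> simp [*]
    have hconvexHull := Polynomial.rootSet_derivative_subset_convexHull_rootSet
      (Polynomial.natDegree_pos_iff_degree_pos.1 (by omega)) hroot
    have hre : (z i).re ≤ 0 := convexHull_min hhalfPlane (convex_halfSpace_re_le 0) hconvexHull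
    exact hre.not_gt (hz i)

lemma isNonposRooted_varSlice [DecidableEq σ] [Finite σ] (hp : IsHalfPlaneStable p d) (i : σ)
    {x : σ → ℝ} (hx : ∀ j, 0 < x j) : IsNonposRooted (varSlice p i x) := by
  have hroots : ∀ ρ ∈ ((varSlice p i x).map (algebraMap ℝ ℂ)).roots,
      ∃ t : ℝ, t ≤ 0 ∧ (t : ℂ) = ρ := fun ρ hρ => by
    refine hp.exists_nonpos_of_eval_varSlice_eq_zero i hx ?_
    exact map_varSlice (Algebra.ofId ℝ ℂ) p i x ▸ Polynomial.isRoot_of_mem_roots hρ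
  have hsplits : (varSlice p i x).Splits :=
    Polynomial.Splits.of_splits_map (algebraMap ℝ ℂ) (IsAlgClosed.splits _) fun ρ hρ => by
      obtain ⟨t, -, rfl⟩ := hroots ρ hρ
      exact ⟨t, rfl⟩
  refine ⟨hsplits, fun ρ hρ => ?_, ?_⟩
  · obtain ⟨t, ht, htρ⟩ := hroots (ρ : ℂ) (by
      rw [hsplits.roots_map]
      exact Multiset.mem_map_of_mem _ hρ)
    rwa [← Complex.ofReal_injective htρ]
  · rw [leadingCoeff_varSlice hp.homogeneous]
    exacts [hp.coeff_single_pos i, (hp.coeff_single_pos i).ne']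

variable [Fintype σ]

lemma capacity_mul_le_capacity_pderiv {e : ℕ} (hp : IsHalfPlaneStable p (e + 1)) (i : σ)
    {m : σ →₀ ℕ} (hm : m.degree = e) :
    capacity p (m + Finsupp.single i 1) * ((m i + 1) * omegaFn (m i + 1)) * omegaFn e ≤
      capacity (MvPolynomial.pderiv i p) m * omegaFn (e + 1) * omegaFn (m i) := by
  classical
  have hω : 0 < omegaFn (e + 1) * omegaFn (m i) := mul_pos (omegaFn_pos _) (omegaFn_pos _)
  rw [mul_assoc (capacity _ m), ← div_le_iff₀ hω]
  refine le_capacity fun x hx => ?_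
  have hslice := (hp.isNonposRooted_varSlice i hx).mul_pow_le_eval_derivative
    (natDegree_varSlice hp.homogeneous i x (hp.coeff_single_pos i).ne')
    (hm ▸ Finsupp.le_degree i m)
    (B := capacity p (m + Finsupp.single i 1) * ∏ j ∈ univ.erase i, x j ^ m j)
    (fun τ hτ => by
      have hupdate : ∀ j, 0 < Function.update x i τ j := fun j => by
        rcases eq_or_ne j i with rfl | hj <;> simp [*]
      have := capacity_mul_prod_le_eval (m := m + Finsupp.single i 1) hp.coeff_nonneg hupdate
      rw [prod_update_pow_add_single] at this
      rw [eval_varSlice, aeval_eq_eval]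
      exact (Eq.le (by ring)).trans this)
    (hx i)
  rw [derivative_varSlice, eval_varSlice, Function.update_eq_self, aeval_eq_eval] at hslice
  rw [div_mul_eq_mul_div, div_le_iff₀ hω, ← Finset.mul_prod_erase _ _ (Finset.mem_univ i)]
  refine (Eq.le ?_).trans (hslice.trans_eq ?_) <;> ring

-- Gurvits' form of the van der Waerden inequality.
theorem capacity_mul_prod_omegaFn_le (d : ℕ) {p : MvPolynomial σ ℝ} (hp : IsHalfPlaneStable p d)
    {m : σ →₀ ℕ} (hm : m.degree = d) :
    capacity p m * ∏ j, omegaFn (m j) ≤ omegaFn d * p.coeff m := by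
  induction d generalizing p m with
  | zero =>
    obtain rfl : m = 0 := (Finsupp.degree_eq_zero_iff m).1 hm
    obtain ⟨c, rfl⟩ : ∃ c, p = C c := ⟨_, totalDegree_eq_zero_iff_eq_C.1
      (Nat.le_zero.1 hp.homogeneous.totalDegree_le)⟩
    have : Nonempty {x : σ → ℝ // ∀ i, 0 < x i} := ⟨⟨1, fun _ => one_pos⟩⟩
    simp [capacity, omegaFn]
  | succ e ih =>
    obtain ⟨i, hi⟩ : ∃ i, m i ≠ 0 := by
      by_contra! h
      simp [show m = 0 from Finsupp.ext h] at hm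
    obtain ⟨m', rfl⟩ : ∃ m', m = m' + Finsupp.single i 1 := ⟨m - Finsupp.single i 1,
      (tsub_add_cancel_of_le (Finsupp.single_le_iff.2 (Nat.one_le_iff_ne_zero.2 hi))).symm⟩
    have hm' : m'.degree = e := by simpa using hm
    have hih := ih (hp.pderiv i) hm'
    rw [coeff_pderiv] at hih
    have hstep := hp.capacity_mul_le_capacity_pderiv i hm'
    have hprod := prod_add_single (fun _ => omegaFn) m' i
    have hω := omegaFn_pos
    have hωprod : 0 < ∏ j, omegaFn (m' j) := Finset.prod_pos fun j _ => hω _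
    have hscale : 0 < (m' i + 1) * omegaFn e * omegaFn (m' i) := by
      have := hω e; have := hω (m' i); positivity
    refine le_of_mul_le_mul_right ?_ hscale
    calc _ = capacity p (m' + Finsupp.single i 1) * (m' i + 1) * omegaFn e *
          ((∏ j, omegaFn ((m' + Finsupp.single i 1 : σ →₀ ℕ) j)) * omegaFn (m' i)) := by ring
      _ = capacity p (m' + Finsupp.single i 1) * ((m' i + 1) * omegaFn (m' i + 1)) * omegaFn e *
          ∏ j, omegaFn (m' j) := by rw [hprod]; ring
      _ ≤ capacity (MvPolynomial.pderiv i p) m' * omegaFn (e + 1) * omegaFn (m' i) *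
          ∏ j, omegaFn (m' j) := by gcongr
      _ = capacity (MvPolynomial.pderiv i p) m' * (∏ j, omegaFn (m' j)) *
          (omegaFn (e + 1) * omegaFn (m' i)) := by ring
      _ ≤ omegaFn e * (p.coeff (m' + Finsupp.single i 1) * (m' i + 1)) *
          (omegaFn (e + 1) * omegaFn (m' i)) :=
        mul_le_mul_of_nonneg_right hih (mul_pos (hω _) (hω _)).le
      _ = _ := by ring

end IsHalfPlaneStable

end HalfPlaneStable

section LinearForms

open MvPolynomial

variable {ι σ R S : Type*} [Fintype ι] [Fintype σ] [CommSemiring R] [CommSemiring S]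

/-- The linear form `∑ s, a s * x s`. -/
noncomputable def linearForm (a : σ → R) : MvPolynomial σ R := ∑ s, C (a s) * X s

/-- The product of the linear forms with coefficient vectors `a i`, with multiplicities `k i`. -/
noncomputable def linearFormProd (a : ι → σ → R) (k : ι → ℕ) : MvPolynomial σ R :=
  ∏ i, linearForm (a i) ^ k i

lemma eval_linearForm (a x : σ → R) : eval x (linearForm a) = ∑ s, a s * x s := by
  simp [linearForm]

lemma eval_linearFormProd (a : ι → σ → R) (k : ι → ℕ) (x : σ → R) :
    eval x (linearFormProd a k) = ∏ i, (∑ s, a i s * x s) ^ k i := by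
  simp [linearFormProd, eval_linearForm]

lemma map_linearFormProd (φ : R →+* S) (a : ι → σ → R) (k : ι → ℕ) :
    map φ (linearFormProd a k) = linearFormProd (fun i s => φ (a i s)) k := by
  simp [linearFormProd, linearForm]

lemma coeff_linearFormProd_nonneg {a : ι → σ → ℝ} (ha : ∀ i s, 0 ≤ a i s) (k : ι → ℕ)
    (m : σ →₀ ℕ) : 0 ≤ (linearFormProd a k).coeff m := by
  lift a to ι → σ → NNReal using ha
  have hmap := map_linearFormProd NNReal.toRealHom a k
  simp only [NNReal.coe_toRealHom] at hmap
  rw [← hmap, coeff_map]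
  exact NNReal.coe_nonneg _

-- The coefficient is itself a polynomial in the entries of `a`.
lemma continuous_coeff_linearFormProd [TopologicalSpace R] [IsTopologicalSemiring R] (k : ι → ℕ)
    (m : σ →₀ ℕ) : Continuous fun a : ι → σ → R => (linearFormProd a k).coeff m := by
  set generic : MvPolynomial σ (MvPolynomial (ι × σ) R) := linearFormProd (fun i s => X (i, s)) k
    with hgeneric
  have heval : ∀ a : ι → σ → R, (linearFormProd a k).coeff m =
      eval (fun is => a is.1 is.2) (generic.coeff m) := fun a => by
    simp [hgeneric, ← coeff_map, map_linearFormProd]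
  simp_rw [heval]
  exact (MvPolynomial.continuous_eval _).comp (by fun_prop)

lemma IsHalfPlaneStable.linearForm_mul [Nonempty σ] {p : MvPolynomial σ ℝ} {d : ℕ}
    (hp : IsHalfPlaneStable p d) {a : σ → ℝ} (ha : ∀ s, 0 < a s) :
    IsHalfPlaneStable (linearForm a * p) (d + 1) where
  homogeneous := by
    rw [add_comm]
    refine (IsHomogeneous.sum _ _ _ fun s _ => ?_).mul hp.homogeneous
    simpa using (isHomogeneous_C σ (a s)).mul (isHomogeneous_X ℝ s)
  coeff_pos m hm := by
    classical
    have hcoeff : (linearForm a * p).coeff m =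
        ∑ s, a s * (if s ∈ m.support then p.coeff (m - Finsupp.single s 1) else 0) := by
      rw [linearForm, Finset.sum_mul, coeff_sum]
      exact Finset.sum_congr rfl fun s _ => by rw [mul_assoc, coeff_C_mul, coeff_X_mul']
    obtain ⟨s, hs⟩ : ∃ s, m s ≠ 0 := by
      by_contra! h
      simp [show m = 0 from Finsupp.ext h] at hm
    have hsub : (m - Finsupp.single s 1).degree = d := by
      have := congrArg Finsupp.degree
        (tsub_add_cancel_of_le (Finsupp.single_le_iff.2 (Nat.one_le_iff_ne_zero.2 hs)))
      rw [map_add, Finsupp.degree_single, hm] at this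
      omega
    rw [hcoeff]
    refine Finset.sum_pos' (fun s _ => mul_nonneg (ha s).le ?_) ⟨s, Finset.mem_univ s, ?_⟩
    · split_ifs
      exacts [hp.coeff_nonneg _, le_rfl]
    · rw [if_pos (Finsupp.mem_support_iff.2 hs)]
      exact mul_pos (ha s) (hp.coeff_pos _ hsub)
  aeval_ne_zero z hz := by
    rw [map_mul]
    refine mul_ne_zero (fun h => ?_) (hp.aeval_ne_zero z hz)
    have hre := congrArg Complex.re h
    simp only [linearForm, map_sum, map_mul, aeval_C, aeval_X, Complex.re_sum,
      Complex.coe_algebraMap, Complex.re_ofReal_mul, Complex.zero_re] at hre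
    exact (Finset.sum_pos (fun s _ => mul_pos (ha s) (hz s)) Finset.univ_nonempty).ne' hre

lemma isHalfPlaneStable_linearFormProd [Nonempty σ] {a : ι → σ → ℝ} (ha : ∀ i s, 0 < a i s)
    (k : ι → ℕ) : IsHalfPlaneStable (linearFormProd a k) (∑ i, k i) := by
  classical
  rw [linearFormProd]
  induction (univ : Finset ι) using Finset.induction_on with
  | empty => simpa using IsHalfPlaneStable.one
  | insert i s hi ih =>
    rw [Finset.prod_insert hi, Finset.sum_insert hi]
    induction k i with
    | zero => simpa using ih
    | succ q ihq =>
      rw [pow_succ', mul_assoc, add_right_comm]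
      exact ihq.linearForm_mul (ha i)

-- Perturb the linear forms to have positive coefficients, so that the product is stable.
theorem capacity_linearFormProd_mul_prod_omegaFn_le {a : ι → σ → ℝ} (ha : ∀ i s, 0 ≤ a i s)
    {k : ι → ℕ} {m : σ →₀ ℕ} (hm : m.degree = ∑ i, k i) :
    capacity (linearFormProd a k) m * ∏ s, omegaFn (m s) ≤
      omegaFn (∑ i, k i) * (linearFormProd a k).coeff m := by
  rcases isEmpty_or_nonempty σ with hσ | hσ
  · have hk : ∀ i, k i = 0 := by
      rw [Subsingleton.elim m 0, map_zero, eq_comm, Finset.sum_eq_zero_iff] at hm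
      exact fun i => hm i (Finset.mem_univ i)
    have : Nonempty {x : σ → ℝ // ∀ i, 0 < x i} := ⟨⟨1, fun _ => one_pos⟩⟩
    simp [Subsingleton.elim m 0, hk, linearFormProd, capacity, omegaFn]
  have hlim : Tendsto (fun ε : ℝ => omegaFn (∑ i, k i) *
      (linearFormProd (fun i s => a i s + ε) k).coeff m) (nhdsWithin 0 (Set.Ioi 0))
      (nhds (omegaFn (∑ i, k i) * (linearFormProd a k).coeff m)) := by
    refine Tendsto.mono_left ?_ nhdsWithin_le_nhds
    have hcont := (continuous_coeff_linearFormProd k m).comp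
      (by fun_prop : Continuous fun (ε : ℝ) i s => a i s + ε)
    simpa using (hcont.tendsto 0).const_mul (omegaFn (∑ i, k i))
  refine ge_of_tendsto hlim ?_
  filter_upwards [self_mem_nhdsWithin] with ε (hε : 0 < ε)
  have hstable := isHalfPlaneStable_linearFormProd
    (fun i s => add_pos_of_nonneg_of_pos (ha i s) hε) k
  refine le_trans ?_ (hstable.capacity_mul_prod_omegaFn_le _ hm)
  refine mul_le_mul_of_nonneg_right ?_ (Finset.prod_nonneg fun s _ => (omegaFn_pos _).le)
  refine capacity_mono (coeff_linearFormProd_nonneg ha k) fun x hx => ?_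
  rw [eval_linearFormProd, eval_linearFormProd]
  have hnonneg : ∀ i s, 0 ≤ a i s * x s := fun i s => mul_nonneg (ha i s) (hx s).le
  refine Finset.prod_le_prod
    (fun i _ => pow_nonneg (Finset.sum_nonneg fun s _ => hnonneg i s) _) fun i _ => ?_
  refine pow_le_pow_left₀ (Finset.sum_nonneg fun s _ => hnonneg i s) ?_ _
  exact Finset.sum_le_sum fun s _ => mul_le_mul_of_nonneg_right (by linarith) (hx s).le

end LinearForms

section LogConcavity

open MvPolynomial

variable {ι σ τ : Type*} [Fintype ι] [Fintype σ] [Fintype τ] {α : τ → ℝ}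

lemma prod_rpow_prod_pow {m : τ → σ → ℕ} {m₀ : σ → ℕ} (h : ∀ s, ∑ t, α t * m t s = m₀ s)
    {x : σ → ℝ} (hx : ∀ s, 0 < x s) : ∏ t, (∏ s, x s ^ m t s) ^ α t = ∏ s, x s ^ m₀ s := by
  have hpow : ∀ t, (∏ s, x s ^ m t s) ^ α t = ∏ s, x s ^ (α t * m t s) := fun t => by
    rw [← finsetProd_rpow _ _ fun s _ => (pow_pos (hx s) _).le]
    exact Finset.prod_congr rfl fun s _ => by rw [mul_comm, rpow_natCast_mul (hx s).le]
  simp_rw [hpow]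
  rw [Finset.prod_comm]
  exact Finset.prod_congr rfl fun s _ => by rw [← rpow_sum_of_pos (hx s), h, rpow_natCast]

lemma prod_capacity_rpow_le {p : τ → MvPolynomial σ ℝ} {p₀ : MvPolynomial σ ℝ}
    (hp : ∀ t m, 0 ≤ (p t).coeff m) (hα : ∀ t, 0 ≤ α t)
    (heval : ∀ x : σ → ℝ, (∀ s, 0 < x s) → ∏ t, eval x (p t) ^ α t ≤ eval x p₀)
    {m : τ → σ →₀ ℕ} {m₀ : σ →₀ ℕ} (hm : ∀ s, ∑ t, α t * m t s = m₀ s) :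
    ∏ t, capacity (p t) (m t) ^ α t ≤ capacity p₀ m₀ := by
  have hcap : ∀ t, 0 ≤ capacity (p t) (m t) := fun t =>
    (hp t _).trans (coeff_le_capacity (hp t))
  refine le_capacity fun x hx => le_trans ?_ (heval x hx)
  have hmonomial : ∀ t, 0 ≤ ∏ s, x s ^ m t s := fun t =>
    Finset.prod_nonneg fun s _ => (pow_pos (hx s) _).le
  rw [← prod_rpow_prod_pow hm hx, ← Finset.prod_mul_distrib]
  refine Finset.prod_le_prod
    (fun t _ => mul_nonneg (rpow_nonneg (hcap t) _) (rpow_nonneg (hmonomial t) _)) fun t _ => ?_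
  rw [← mul_rpow (hcap t) (hmonomial t)]
  exact rpow_le_rpow (mul_nonneg (hcap t) (hmonomial t))
    (capacity_mul_prod_le_eval (hp t) hx) (hα t)

lemma prod_eval_linearFormProd_rpow_le {a : τ → ι → σ → ℝ} (ha : ∀ t i s, 0 ≤ a t i s)
    (hα : ∀ t, 0 ≤ α t) (hα1 : ∑ t, α t = 1) (k : ι → ℕ) {x : σ → ℝ} (hx : ∀ s, 0 ≤ x s) :
    ∏ t, eval x (linearFormProd (a t) k) ^ α t ≤
      eval x (linearFormProd (fun i s => ∑ t, α t * a t i s) k) := by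
  have hform : ∀ t i, 0 ≤ ∑ s, a t i s * x s := fun t i =>
    Finset.sum_nonneg fun s _ => mul_nonneg (ha t i s) (hx s)
  have hgeom : ∀ i, 0 ≤ ∏ t, (∑ s, a t i s * x s) ^ α t := fun i =>
    Finset.prod_nonneg fun t _ => rpow_nonneg (hform t i) _
  simp_rw [eval_linearFormProd]
  calc ∏ t, (∏ i, (∑ s, a t i s * x s) ^ k i) ^ α t
      = ∏ t, ∏ i, ((∑ s, a t i s * x s) ^ α t) ^ k i := by
        refine Finset.prod_congr rfl fun t _ => ?_
        rw [← finsetProd_rpow _ _ fun i _ => pow_nonneg (hform t i) _]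
        exact Finset.prod_congr rfl fun i _ => (rpow_pow_comm (hform t i) _ _).symm
    _ = ∏ i, (∏ t, (∑ s, a t i s * x s) ^ α t) ^ k i := by
        rw [Finset.prod_comm]
        exact Finset.prod_congr rfl fun i _ => Finset.prod_pow _ _ _
    _ ≤ ∏ i, (∑ t, α t * ∑ s, a t i s * x s) ^ k i := by
        refine Finset.prod_le_prod (fun i _ => pow_nonneg (hgeom i) _) fun i _ => ?_
        exact pow_le_pow_left₀ (hgeom i) (geom_mean_le_arith_mean_weighted _ _ _
          (fun t _ => hα t) hα1 fun t _ => hform t i) _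
    _ = ∏ i, (∑ s, (∑ t, α t * a t i s) * x s) ^ k i := by
        refine Finset.prod_congr rfl fun i _ => congrArg (· ^ k i) ?_
        simp_rw [Finset.sum_mul, Finset.mul_sum, mul_assoc]
        exact Finset.sum_comm

theorem prod_coeff_linearFormProd_rpow_mul_le {a : τ → ι → σ → ℝ} (ha : ∀ t i s, 0 ≤ a t i s)
    (hα : ∀ t, 0 ≤ α t) (hα1 : ∑ t, α t = 1) {k : ι → ℕ} {m : τ → σ →₀ ℕ} {m₀ : σ →₀ ℕ}
    (hm : ∀ s, ∑ t, α t * m t s = m₀ s) (hm₀ : m₀.degree = ∑ i, k i) :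
    (∏ t, (linearFormProd (a t) k).coeff (m t) ^ α t) * ∏ s, omegaFn (m₀ s) ≤
      omegaFn (∑ i, k i) * (linearFormProd (fun i s => ∑ t, α t * a t i s) k).coeff m₀ := by
  have hcoeff := fun t => coeff_linearFormProd_nonneg (ha t) k
  have hmean : ∀ i s, 0 ≤ ∑ t, α t * a t i s := fun i s =>
    Finset.sum_nonneg fun t _ => mul_nonneg (hα t) (ha t i s)
  refine le_trans ?_ (capacity_linearFormProd_mul_prod_omegaFn_le hmean hm₀)
  refine mul_le_mul_of_nonneg_right ?_ (Finset.prod_nonneg fun s _ => (omegaFn_pos _).le)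
  calc ∏ t, (linearFormProd (a t) k).coeff (m t) ^ α t
      ≤ ∏ t, capacity (linearFormProd (a t) k) (m t) ^ α t :=
        Finset.prod_le_prod (fun t _ => rpow_nonneg (hcoeff t _) _) fun t _ =>
          rpow_le_rpow (hcoeff t _) (coeff_le_capacity (hcoeff t)) (hα t)
    _ ≤ _ := prod_capacity_rpow_le hcoeff hα (fun x hx =>
        prod_eval_linearFormProd_rpow_le ha hα hα1 k fun s => (hx s).le) hm

end LogConcavity

section Orientations

open MvPolynomial

variable {E σ τ : Type*} {a b : E → σ} {K : E → ℕ}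

open Classical in
/-- The coefficients of the linear form `u e * x (a e) + (1 - u e) * x (b e)`: the law of the head
of `e` when `e` points to `a e` with probability `u e`. -/
noncomputable def edgeCoeff (a b : E → σ) (u : E → ℝ) (e : E) : σ → ℝ :=
  Pi.single (a e) (u e) + Pi.single (b e) (1 - u e)

lemma edgeCoeff_nonneg {u : E → ℝ} (hu : u ∈ Set.Icc 0 1) (e : E) (s : σ) :
    0 ≤ edgeCoeff a b u e s := by
  classical
  have hpos : 0 ≤ Pi.single (M := fun _ : σ => ℝ) (a e) (u e) := Pi.single_nonneg.2 (hu.1 e)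
  have hneg : 0 ≤ Pi.single (M := fun _ : σ => ℝ) (b e) (1 - u e) :=
    Pi.single_nonneg.2 (sub_nonneg.2 (hu.2 e))
  convert! add_nonneg (hpos s) (hneg s)

lemma edgeCoeff_sum_smul [Fintype τ] {α : τ → ℝ} (hα1 : ∑ t, α t = 1)
    (u : τ → E → ℝ) :
    edgeCoeff a b (∑ t, α t • u t) = fun e s => ∑ t, α t * edgeCoeff a b (u t) e s := by
  classical
  funext e s
  simp only [edgeCoeff, Pi.add_apply, Finset.sum_apply, Pi.smul_apply, smul_eq_mul, mul_add,
    Finset.sum_add_distrib, Pi.single_apply, mul_ite, mul_zero]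
  split_ifs <;> simp [mul_sub, hα1]

lemma linearForm_edgeCoeff [Fintype σ] (u : E → ℝ) (e : E) :
    linearForm (edgeCoeff a b u e) = C (u e) * X (a e) + C (1 - u e) * X (b e) := by
  classical
  simp only [linearForm, edgeCoeff, Pi.add_apply, map_add, add_mul, Finset.sum_add_distrib,
    Pi.single_apply, apply_ite C, ite_mul, map_zero, zero_mul, Finset.sum_ite_eq', Finset.mem_univ,
    if_true]

variable [Fintype E]

/-- The in-degree vector of the orientation of the multigraph with edges `e` of endpoints `a e`,
`b e` and multiplicity `K e` in which `A e` of the copies of `e` point to `a e`. -/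
noncomputable def inDegree (a b : E → σ) (K A : E → ℕ) : σ →₀ ℕ :=
  ∑ e, (Finsupp.single (a e) (A e) + Finsupp.single (b e) (K e - A e))

open Classical in
/-- The orientations with in-degree vector `m` of the multigraph with edges `e` of endpoints `a e`,
`b e` and multiplicity `K e`. Copies of the same edge are indistinguishable: an orientation is
encoded by the number `A e` of copies of `e` that point to `a e`. -/
noncomputable def orientations (a b : E → σ) (K : E → ℕ) (m : σ →₀ ℕ) : Finset (E → ℕ) :=
  {A ∈ Fintype.piFinset fun e => range (K e + 1) | inDegree a b K A = m}

lemma mem_orientations {m : σ →₀ ℕ} {A : E → ℕ} :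
    A ∈ orientations a b K m ↔ A ≤ K ∧ inDegree a b K A = m := by
  simp [orientations, Pi.le_def]

lemma degree_inDegree {A : E → ℕ} (hA : A ≤ K) : (inDegree a b K A).degree = ∑ e, K e := by
  simp_rw [inDegree, map_sum, map_add, Finsupp.degree_single, Nat.add_sub_cancel' (hA _)]

variable [Fintype σ]

lemma coeff_linearFormProd_edgeCoeff (u : E → ℝ) (m : σ →₀ ℕ) :
    (linearFormProd (edgeCoeff a b u) K).coeff m = ∑ A ∈ orientations a b K m,
      ∏ e, ((K e).choose (A e) * u e ^ A e * (1 - u e) ^ (K e - A e)) := by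
  classical
  have hterm : ∀ e j, (C (u e) * X (a e)) ^ j * (C (1 - u e) * X (b e)) ^ (K e - j) *
      ((K e).choose j : MvPolynomial σ ℝ) =
      monomial (Finsupp.single (a e) j + Finsupp.single (b e) (K e - j))
        ((K e).choose j * u e ^ j * (1 - u e) ^ (K e - j)) := fun e j => by
    rw [← C_eq_coe_nat, mul_pow, mul_pow, ← C_pow, ← C_pow, C_mul_X_pow_eq_monomial,
      C_mul_X_pow_eq_monomial, monomial_mul, mul_comm, C_mul_monomial, mul_assoc]
  simp_rw [linearFormProd, linearForm_edgeCoeff, add_pow, hterm]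
  rw [Finset.prod_univ_sum, coeff_sum, orientations, Finset.sum_filter]
  refine Finset.sum_congr rfl fun A _ => ?_
  rw [← monomial_sum_prod, coeff_monomial]
  rfl

end Orientations

section UnitCube

open MeasureTheory

lemma integral_pow_mul_one_sub_pow (j k : ℕ) :
    ∫ x in (0 : ℝ)..1, x ^ j * (1 - x) ^ k =
      j.factorial * k.factorial / (j + k + 1).factorial := by
  have hbeta := Complex.betaIntegral_eq_Gamma_mul_div (j + 1) (k + 1)
    (by simp only [Complex.add_re, Complex.natCast_re, Complex.one_re]; positivity)
    (by simp only [Complex.add_re, Complex.natCast_re, Complex.one_re]; positivity)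
  have hsum : (j + 1 + (k + 1) : ℂ) = ((j + k + 1 : ℕ) : ℂ) + 1 := by push_cast; ring
  rw [hsum, Complex.Gamma_nat_eq_factorial, Complex.Gamma_nat_eq_factorial,
    Complex.Gamma_nat_eq_factorial, Complex.betaIntegral] at hbeta
  simp only [add_sub_cancel_right, Complex.cpow_natCast] at hbeta
  apply Complex.ofReal_injective
  rw [← intervalIntegral.integral_ofReal]
  push_cast
  exact hbeta

lemma setIntegral_choose_mul_pow_mul_one_sub_pow {j k : ℕ} (hjk : j ≤ k) :
    ∫ x in Set.Icc (0 : ℝ) 1, k.choose j * x ^ j * (1 - x) ^ (k - j) = ((k : ℝ) + 1)⁻¹ := by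
  simp_rw [mul_assoc]
  rw [integral_const_mul, integral_Icc_eq_integral_Ioc,
    ← intervalIntegral.integral_of_le zero_le_one, integral_pow_mul_one_sub_pow,
    Nat.add_sub_cancel' hjk, Nat.cast_choose ℝ hjk, Nat.factorial_succ]
  push_cast
  field_simp

lemma restrict_Icc_eq_pi {E : Type*} [Fintype E] : (volume : Measure (E → ℝ)).restrict
    (Set.Icc 0 1) = Measure.pi fun _ => volume.restrict (Set.Icc 0 1) := by
  rw [← Set.pi_univ_Icc, volume_pi, Measure.restrict_pi_pi]
  rfl

variable {E σ : Type*} [Fintype E] [Fintype σ] {a b : E → σ} {K : E → ℕ}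

lemma setIntegral_prod_choose_mul_pow_mul_one_sub_pow {A : E → ℕ} (hA : A ≤ K) :
    ∫ u in Set.Icc (0 : E → ℝ) 1, ∏ e, ((K e).choose (A e) * u e ^ A e * (1 - u e) ^ (K e - A e)) =
      (∏ e, ((K e : ℝ) + 1))⁻¹ := by
  rw [restrict_Icc_eq_pi, integral_fintype_prod_eq_prod
    (f := fun e (x : ℝ) => (K e).choose (A e) * x ^ A e * (1 - x) ^ (K e - A e)),
    ← Finset.prod_inv_distrib]
  exact Finset.prod_congr rfl fun e _ => setIntegral_choose_mul_pow_mul_one_sub_pow (hA e)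

lemma continuous_coeff_linearFormProd_edgeCoeff (m : σ →₀ ℕ) :
    Continuous fun u : E → ℝ => (linearFormProd (edgeCoeff a b u) K).coeff m := by
  simp_rw [coeff_linearFormProd_edgeCoeff]
  fun_prop

-- Each orientation contributes the same integral.
theorem setLIntegral_coeff_linearFormProd_edgeCoeff (m : σ →₀ ℕ) :
    ∫⁻ u in Set.Icc (0 : E → ℝ) 1,
        ENNReal.ofReal ((linearFormProd (edgeCoeff a b u) K).coeff m) =
      ENNReal.ofReal ((orientations a b K m).card / ∏ e, ((K e : ℝ) + 1)) := by
  rw [← ofReal_integral_eq_lintegral_ofReal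
    (continuous_coeff_linearFormProd_edgeCoeff m).continuousOn.integrableOn_Icc
    (ae_restrict_of_forall_mem measurableSet_Icc fun u hu =>
      coeff_linearFormProd_nonneg (edgeCoeff_nonneg hu) K m)]
  simp_rw [coeff_linearFormProd_edgeCoeff]
  rw [integral_finsetSum _ fun A _ =>
      (Continuous.continuousOn (by fun_prop)).integrableOn_Icc,
    Finset.sum_congr rfl fun A hA =>
      setIntegral_prod_choose_mul_pow_mul_one_sub_pow (mem_orientations.1 hA).1,
    Finset.sum_const, nsmul_eq_mul, div_eq_mul_inv]

end UnitCube

section BrunnMinkowski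

open MeasureTheory
open scoped Pointwise

-- The translates of `A` by `min B` and of `B` by `max A` overlap in at most one point.
lemma volume_add_volume_le_volume_add {A B : Set ℝ} (hA : IsCompact A) (hB : IsCompact B)
    (hAn : A.Nonempty) (hBn : B.Nonempty) : volume A + volume B ≤ volume (A + B) := by
  obtain ⟨a, haA, ha⟩ := hA.exists_isGreatest hAn
  obtain ⟨b, hbB, hb⟩ := hB.exists_isLeast hBn
  have hinter : volume ((b +ᵥ A) ∩ (a +ᵥ B)) = 0 := by
    refine measure_mono_null (t := {a + b}) ?_ (by simp)
    rintro _ ⟨⟨x, hx, rfl⟩, y, hy, hxy⟩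
    have := ha hx
    have := hb hy
    simp only [vadd_eq_add, Set.mem_singleton_iff] at hxy ⊢
    linarith
  rw [← measure_vadd volume b A, ← measure_vadd volume a B,
    ← measure_union_add_inter (b +ᵥ A) (hB.vadd a).measurableSet, hinter, add_zero]
  refine measure_mono (Set.union_subset ?_ ?_)
  · rintro _ ⟨x, hx, rfl⟩
    exact ⟨x, hx, b, hbB, add_comm _ _⟩
  · rintro _ ⟨y, hy, rfl⟩
    exact ⟨a, haA, y, hy, rfl⟩

variable {τ : Type*}

lemma sum_volume_le_volume_sum (s : Finset τ) {A : τ → Set ℝ} (hA : ∀ t, IsCompact (A t))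
    (hAn : ∀ t, (A t).Nonempty) : ∑ t ∈ s, volume (A t) ≤ volume (∑ t ∈ s, A t) := by
  classical
  suffices h : IsCompact (∑ t ∈ s, A t) ∧ (∑ t ∈ s, A t).Nonempty ∧
      ∑ t ∈ s, volume (A t) ≤ volume (∑ t ∈ s, A t) from h.2.2
  induction s using Finset.induction_on with
  | empty => simp
  | insert i s hi ih =>
    obtain ⟨hcompact, hnonempty, hvol⟩ := ih
    rw [Finset.sum_insert hi, Finset.sum_insert hi]
    exact ⟨(hA i).add hcompact, (hAn i).add hnonempty, (add_le_add_right hvol _).trans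
      (volume_add_volume_le_volume_add (hA i) hcompact (hAn i) hnonempty)⟩

lemma exists_seq_isCompact_tendsto_volume {A : Set ℝ} (hA : MeasurableSet A)
    (hAn : A.Nonempty) : ∃ L : ℕ → Set ℝ, (∀ n, L n ⊆ A) ∧ (∀ n, IsCompact (L n)) ∧
      (∀ n, (L n).Nonempty) ∧ Tendsto (fun n => volume (L n)) atTop (nhds (volume A)) := by
  obtain ⟨a, ha⟩ := hAn
  obtain ⟨v, -, hv, hmem⟩ := exists_seq_tendsto_sSup
    (S := volume '' {L : Set ℝ | L ⊆ A ∧ IsCompact L}) ⟨_, ∅, ⟨by simp, isCompact_empty⟩, rfl⟩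
    (OrderTop.bddAbove _)
  choose L hL hLv using hmem
  have hsup : sSup (volume '' {L : Set ℝ | L ⊆ A ∧ IsCompact L}) = volume A := by
    simp_rw [hA.measure_eq_iSup_isCompact, sSup_image, Set.mem_ofPred_eq, iSup_and]
  rw [hsup] at hv
  have hLA : ∀ n, L n ∪ {a} ⊆ A := fun n =>
    Set.union_subset (hL n).1 (Set.singleton_subset_iff.2 ha)
  exact ⟨fun n => L n ∪ {a}, hLA, fun n => (hL n).2.union isCompact_singleton,
    fun n => ⟨a, Or.inr rfl⟩, tendsto_of_tendsto_of_tendsto_of_le_of_le hv tendsto_const_nhds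
      (fun n => (hLv n).ge.trans (measure_mono Set.subset_union_left))
      fun n => measure_mono (hLA n)⟩

variable [Fintype τ]

theorem sum_mul_volume_le {α : τ → ℝ} (hα : ∀ t, 0 ≤ α t) {A : τ → Set ℝ}
    (hA : ∀ t, MeasurableSet (A t)) (hAn : ∀ t, (A t).Nonempty) {S : Set ℝ}
    (hS : ∀ x : τ → ℝ, (∀ t, x t ∈ A t) → ∑ t, α t • x t ∈ S) :
    ∑ t, ENNReal.ofReal (α t) * volume (A t) ≤ volume S := by
  choose L hLA hL hLn hLv using fun t => exists_seq_isCompact_tendsto_volume (hA t) (hAn t)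
  have hlim : Tendsto (fun n => ∑ t, ENNReal.ofReal (α t) * volume (L t n)) atTop
      (nhds (∑ t, ENNReal.ofReal (α t) * volume (A t))) :=
    tendsto_finsetSum _ fun t _ => ENNReal.Tendsto.const_mul (hLv t) (Or.inr ENNReal.ofReal_ne_top)
  refine le_of_tendsto' hlim fun n => ?_
  calc ∑ t, ENNReal.ofReal (α t) * volume (L t n)
      = ∑ t, volume (α t • L t n) := by simp [Measure.addHaar_smul, abs_of_nonneg (hα _)]
    _ ≤ volume (∑ t, α t • L t n) := sum_volume_le_volume_sum _
        (fun t => (hL t n).smul _) fun t => (hLn t n).smul_set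
    _ ≤ volume S := by
        refine measure_mono fun z hz => ?_
        obtain ⟨y, hy, rfl⟩ := (Set.mem_fintype_sum _ _).1 hz
        choose x hx hxy using hy
        simp_rw [← hxy]
        exact hS x fun t => hLA t n (hx t)

end BrunnMinkowski

section ENNRealProducts

variable {τ : Type*} [Fintype τ] {α : τ → ℝ}

lemma ennreal_prod_iSup_of_monotone {u : τ → ℕ → ENNReal} (hu : ∀ t, Monotone (u t)) :
    ∏ t, ⨆ n, u t n = ⨆ n, ∏ t, u t n := by
  classical
  induction (univ : Finset τ) using Finset.induction_on with
  | empty => simp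
  | insert i s hi ih =>
    simp_rw [Finset.prod_insert hi]
    rw [ih, ENNReal.iSup_mul]
    simp_rw [ENNReal.mul_iSup]
    refine le_antisymm (iSup₂_le fun j k => le_iSup_of_le (max j k) ?_)
      (iSup_le fun n => le_iSup₂_of_le n n le_rfl)
    exact mul_le_mul' (hu i (le_max_left j k))
      (Finset.prod_le_prod' fun t _ => hu t (le_max_right j k))

lemma ennreal_prod_rpow_le_sum (hα : ∀ t, 0 < α t) (hα1 : ∑ t, α t = 1) (z : τ → ENNReal) :
    ∏ t, z t ^ α t ≤ ∑ t, ENNReal.ofReal (α t) * z t := by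
  by_cases hz : ∀ t, z t ≠ ⊤
  · lift z to τ → NNReal using hz
    lift α to τ → NNReal using fun t => (hα t).le
    simp_rw [← ENNReal.coe_rpow_of_nonneg _ (NNReal.coe_nonneg _), ENNReal.ofReal_coe_nnreal]
    exact_mod_cast NNReal.geom_mean_le_arith_mean_weighted Finset.univ α z
      (NNReal.coe_injective (by push_cast; exact hα1))
  · push Not at hz
    obtain ⟨t, ht⟩ := hz
    have htop : ENNReal.ofReal (α t) * z t = ⊤ := by
      rw [ht, ENNReal.mul_top (ENNReal.ofReal_pos.2 (hα t)).ne']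
    refine le_top.trans (htop.ge.trans ?_)
    exact Finset.single_le_sum (f := fun t => ENNReal.ofReal (α t) * z t)
      (fun _ _ => zero_le) (Finset.mem_univ t)

lemma ennreal_prod_rpow_eq_rpow_sum (hα : ∀ t, 0 ≤ α t) (c : ENNReal) :
    ∏ t, c ^ α t = c ^ ∑ t, α t := by
  classical
  induction (univ : Finset τ) using Finset.induction_on with
  | empty => simp
  | insert i s hi ih =>
    rw [Finset.prod_insert hi, Finset.sum_insert hi, ih,
      ENNReal.rpow_add_of_nonneg _ _ (hα i) (Finset.sum_nonneg fun t _ => hα t)]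

end ENNRealProducts

section PrekopaLeindler

open MeasureTheory

lemma lintegral_eq_setLIntegral_measure_le {Ω : Type*} [MeasurableSpace Ω] (μ : Measure Ω)
    {g : Ω → ENNReal} (hg : Measurable g) (hg1 : ∀ x, g x ≤ 1) :
    ∫⁻ x, g x ∂μ = ∫⁻ c in Set.Ioo (0 : ℝ) 1, μ {x | ENNReal.ofReal c ≤ g x} := by
  have hfin : ∀ x, g x ≠ ⊤ := fun x => ((hg1 x).trans_lt ENNReal.one_lt_top).ne
  have hlayer := lintegral_eq_lintegral_meas_le μ
    (Eventually.of_forall fun x => ENNReal.toReal_nonneg) hg.ennreal_toReal.aemeasurable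
  simp_rw [ENNReal.ofReal_toReal (hfin _), ← ENNReal.ofReal_le_iff_le_toReal (hfin _)] at hlayer
  rw [hlayer, ← Set.Ioc_union_Ioi_eq_Ioi zero_le_one, lintegral_union measurableSet_Ioi
    (Set.Ioc_disjoint_Ioi le_rfl), setLIntegral_congr Ioo_ae_eq_Ioc,
    setLIntegral_eq_zero measurableSet_Ioi, add_zero]
  intro c (hc : 1 < c)
  have hempty : {x | ENNReal.ofReal c ≤ g x} = ∅ := Set.eq_empty_of_forall_notMem fun x hx =>
    (hx.trans (hg1 x)).not_gt (by simpa using hc)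
  simp [hempty]

variable {τ : Type*} [Fintype τ] {α : τ → ℝ}

-- Brunn–Minkowski for the superlevel sets, integrated over the levels.
lemma sum_mul_lintegral_le (hα : ∀ t, 0 ≤ α t) {g : τ → ℝ → ENNReal}
    (hg : ∀ t, Measurable (g t)) (hsup : ∀ t, ⨆ x, g t x = 1) {h : ℝ → ENNReal}
    (hh : Measurable h)
    (hle : ∀ (x : τ → ℝ) c, (∀ t, c ≤ g t (x t)) → c ≤ h (∑ t, α t • x t)) :
    ∑ t, ENNReal.ofReal (α t) * ∫⁻ x, g t x ≤ ∫⁻ x, h x := by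
  have hg1 : ∀ t x, g t x ≤ 1 := fun t x => (le_iSup (g t) x).trans (hsup t).le
  have hmeas : ∀ t, Measurable fun c : ℝ => volume {x | ENNReal.ofReal c ≤ g t x} := fun t =>
    Antitone.measurable fun c d hcd => measure_mono fun x (hx : _ ≤ _) =>
      (ENNReal.ofReal_le_ofReal hcd).trans hx
  calc ∑ t, ENNReal.ofReal (α t) * ∫⁻ x, g t x
      = ∫⁻ c in Set.Ioo (0 : ℝ) 1,
          ∑ t, ENNReal.ofReal (α t) * volume {x | ENNReal.ofReal c ≤ g t x} := by
        rw [lintegral_finsetSum _ fun t _ => (hmeas t).const_mul _]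
        refine Finset.sum_congr rfl fun t _ => ?_
        rw [lintegral_const_mul _ (hmeas t),
          lintegral_eq_setLIntegral_measure_le volume (hg t) (hg1 t)]
    _ ≤ ∫⁻ c in Set.Ioo (0 : ℝ) 1, volume {x | ENNReal.ofReal c ≤ min (h x) 1} := by
        refine setLIntegral_mono' measurableSet_Ioo fun c hc => ?_
        have hc1 : ENNReal.ofReal c < 1 := by simpa using hc.2
        refine sum_mul_volume_le hα (fun t => measurableSet_le measurable_const (hg t))
          (fun t => ?_) fun x hx => le_min (hle x _ hx) hc1.le
        obtain ⟨x, hx⟩ := lt_iSup_iff.1 (hc1.trans_eq (hsup t).symm)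
        exact ⟨x, hx.le⟩
    _ = ∫⁻ x, min (h x) 1 := (lintegral_eq_setLIntegral_measure_le volume
        (hh.min measurable_const) fun x => min_le_right _ _).symm
    _ ≤ ∫⁻ x, h x := lintegral_mono fun x => min_le_left _ _

lemma prod_lintegral_rpow_le_of_iSup_eq_one (hα : ∀ t, 0 < α t) (hα1 : ∑ t, α t = 1)
    {g : τ → ℝ → ENNReal} (hg : ∀ t, Measurable (g t)) (hsup : ∀ t, ⨆ x, g t x = 1)
    {h : ℝ → ENNReal} (hh : Measurable h)
    (hle : ∀ x : τ → ℝ, ∏ t, g t (x t) ^ α t ≤ h (∑ t, α t • x t)) :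
    ∏ t, (∫⁻ x, g t x) ^ α t ≤ ∫⁻ x, h x := by
  refine (ennreal_prod_rpow_le_sum hα hα1 _).trans
    (sum_mul_lintegral_le (fun t => (hα t).le) hg hsup hh fun x c hc => ?_)
  calc c = ∏ t, c ^ α t := by
        rw [ennreal_prod_rpow_eq_rpow_sum fun t => (hα t).le, hα1, ENNReal.rpow_one]
    _ ≤ ∏ t, g t (x t) ^ α t :=
        Finset.prod_le_prod' fun t _ => ENNReal.rpow_le_rpow (hc t) (hα t).le
    _ ≤ h (∑ t, α t • x t) := hle x

lemma prod_lintegral_rpow_le_of_iSup_ne_top (hα : ∀ t, 0 < α t) (hα1 : ∑ t, α t = 1)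
    {f : τ → ℝ → ENNReal} (hf : ∀ t, Measurable (f t)) (hsup : ∀ t, ⨆ x, f t x ≠ ⊤)
    {h : ℝ → ENNReal} (hh : Measurable h)
    (hle : ∀ x : τ → ℝ, ∏ t, f t (x t) ^ α t ≤ h (∑ t, α t • x t)) :
    ∏ t, (∫⁻ x, f t x) ^ α t ≤ ∫⁻ x, h x := by
  by_cases hzero : ∃ t, ⨆ x, f t x = 0
  · obtain ⟨t, ht⟩ := hzero
    refine (Finset.prod_eq_zero (Finset.mem_univ t) ?_).trans_le zero_le
    simp [ENNReal.iSup_eq_zero.1 ht, hα t]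
  push Not at hzero
  set M := fun t => ⨆ x, f t x
  set P := ∏ t, M t ^ α t with hP
  have hP0 : P ≠ 0 := Finset.prod_ne_zero_iff.2 fun t _ =>
    (ENNReal.rpow_pos (pos_iff_ne_zero.2 (hzero t)) (hsup t)).ne'
  have hPtop : P ≠ ⊤ :=
    ENNReal.prod_ne_top fun t _ => ENNReal.rpow_ne_top_of_nonneg (hα t).le (hsup t)
  have hdiv : ∀ z : τ → ENNReal, ∏ t, (z t / M t) ^ α t = (∏ t, z t ^ α t) / P := fun z => by
    rw [ENNReal.eq_div_iff hP0 hPtop, hP, ← Finset.prod_mul_distrib]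
    refine Finset.prod_congr rfl fun t _ => ?_
    rw [← ENNReal.mul_rpow_of_nonneg _ _ (hα t).le, ENNReal.mul_div_cancel (hzero t) (hsup t)]
  have hnormalized := prod_lintegral_rpow_le_of_iSup_eq_one hα hα1
    (g := fun t x => f t x / M t) (h := fun x => h x / P) (fun t => (hf t).div_const _)
    (fun t => by rw [← ENNReal.iSup_div, ENNReal.div_self (hzero t) (hsup t)])
    (hh.div_const _) (fun x => by rw [hdiv]; exact ENNReal.div_le_div_right (hle x) P)
  simp_rw [div_eq_mul_inv] at hnormalized
  rw [lintegral_mul_const _ hh, ← div_eq_mul_inv] at hnormalized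
  simp_rw [lintegral_mul_const _ (hf _), ← div_eq_mul_inv, hdiv] at hnormalized
  rwa [ENNReal.div_le_iff hP0 hPtop, ENNReal.div_mul_cancel hP0 hPtop] at hnormalized

theorem prod_lintegral_rpow_le (hα : ∀ t, 0 < α t) (hα1 : ∑ t, α t = 1)
    {f : τ → ℝ → ENNReal} (hf : ∀ t, Measurable (f t)) {h : ℝ → ENNReal} (hh : Measurable h)
    (hle : ∀ x : τ → ℝ, ∏ t, f t (x t) ^ α t ≤ h (∑ t, α t • x t)) :
    ∏ t, (∫⁻ x, f t x) ^ α t ≤ ∫⁻ x, h x := by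
  have hmono : ∀ t, Monotone fun (n : ℕ) x => min (f t x) n := fun t j k hjk x =>
    min_le_min_left _ (by exact_mod_cast hjk)
  have htrunc : ∀ t, ∫⁻ x, f t x = ⨆ n : ℕ, ∫⁻ x, min (f t x) n := fun t => by
    rw [← lintegral_iSup (fun n => (hf t).min measurable_const) (hmono t)]
    simp_rw [← inf_iSup_eq, ENNReal.iSup_natCast, inf_top_eq]
  have hrpow : ∀ t, (∫⁻ x, f t x) ^ α t = ⨆ n : ℕ, (∫⁻ x, min (f t x) n) ^ α t := fun t => by
    rw [htrunc]
    exact (ENNReal.orderIsoRpow (α t) (hα t)).map_iSup _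
  simp_rw [hrpow]
  refine (ennreal_prod_iSup_of_monotone (u := fun t n => (∫⁻ x, min (f t x) n) ^ α t)
    fun t j k hjk => ENNReal.rpow_le_rpow (lintegral_mono (hmono t hjk)) (hα t).le).trans_le ?_
  refine iSup_le fun n => prod_lintegral_rpow_le_of_iSup_ne_top hα hα1
    (fun t => (hf t).min measurable_const) (fun t => ?_) hh fun x => le_trans ?_ (hle x)
  · exact ne_top_of_le_ne_top (ENNReal.natCast_ne_top n) (iSup_le fun x => min_le_right _ _)
  · exact Finset.prod_le_prod' fun t _ => ENNReal.rpow_le_rpow (min_le_left _ _) (hα t).le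

lemma update_sum_smul {δ : Type*} [DecidableEq δ] (x : τ → δ → ℝ) (i : δ) (ξ : τ → ℝ) :
    Function.update (∑ t, α t • x t) i (∑ t, α t • ξ t) =
      ∑ t, α t • Function.update (x t) i (ξ t) := by
  funext e
  rcases eq_or_ne e i with rfl | he
  · simp
  · simp [he]

-- The Prékopa–Leindler inequality, for several functions.
theorem prod_lintegral_pi_rpow_le {δ : Type*} [Fintype δ] (hα : ∀ t, 0 < α t)
    (hα1 : ∑ t, α t = 1) {f : τ → (δ → ℝ) → ENNReal} (hf : ∀ t, Measurable (f t))
    {h : (δ → ℝ) → ENNReal} (hh : Measurable h)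
    (hle : ∀ x : τ → δ → ℝ, ∏ t, f t (x t) ^ α t ≤ h (∑ t, α t • x t)) :
    ∏ t, (∫⁻ x, f t x) ^ α t ≤ ∫⁻ x, h x := by
  classical
  suffices hmarginal : ∀ (s : Finset δ) (x : τ → δ → ℝ),
      ∏ t, lmarginal (fun _ => volume) s (f t) (x t) ^ α t ≤
        lmarginal (fun _ => volume) s h (∑ t, α t • x t) by
    simpa only [lmarginal_univ] using! hmarginal univ 0
  intro s
  induction s using Finset.induction_on with
  | empty => simpa using hle
  | insert i s hi ih =>
    intro x
    simp_rw [lmarginal_insert _ (hf _) hi]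
    rw [lmarginal_insert _ hh hi]
    refine prod_lintegral_rpow_le hα hα1
      (fun t => ((hf t).lmarginal _).comp (measurable_update _))
      ((hh.lmarginal _).comp (measurable_update _)) fun ξ => ?_
    simpa only [Function.comp_apply, update_sum_smul] using
      ih fun t => Function.update (x t) i (ξ t)

lemma prod_setLIntegral_pi_rpow_le {δ : Type*} [Fintype δ] (hα : ∀ t, 0 < α t)
    (hα1 : ∑ t, α t = 1) {s : Set (δ → ℝ)} (hs : MeasurableSet s) (hconv : Convex ℝ s)
    {f : τ → (δ → ℝ) → ENNReal} (hf : ∀ t, Measurable (f t)) {h : (δ → ℝ) → ENNReal}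
    (hh : Measurable h)
    (hle : ∀ x : τ → δ → ℝ, (∀ t, x t ∈ s) → ∏ t, f t (x t) ^ α t ≤ h (∑ t, α t • x t)) :
    ∏ t, (∫⁻ x in s, f t x) ^ α t ≤ ∫⁻ x in s, h x := by
  simp_rw [← lintegral_indicator hs]
  refine prod_lintegral_pi_rpow_le hα hα1 (fun t => (hf t).indicator hs) (hh.indicator hs)
    fun x => ?_
  by_cases hx : ∀ t, x t ∈ s
  · rw [Set.indicator_of_mem (hconv.sum_mem (fun t _ => (hα t).le) hα1 fun t _ => hx t)]
    simpa only [Set.indicator_of_mem (hx _)] using hle x hx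
  · push Not at hx
    obtain ⟨t, ht⟩ := hx
    refine (Finset.prod_eq_zero (Finset.mem_univ t) ?_).trans_le zero_le
    rw [Set.indicator_of_notMem ht, ENNReal.zero_rpow_of_pos (hα t)]

end PrekopaLeindler

section LogConcavityOfOrientations

open MeasureTheory

variable {E σ τ : Type*} [Fintype E] [Fintype σ] [Fintype τ] {a b : E → σ} {K : E → ℕ}
  {α : τ → ℝ} {m : τ → σ →₀ ℕ} {m₀ : σ →₀ ℕ}

lemma prod_coeff_linearFormProd_edgeCoeff_rpow_le (hα : ∀ t, 0 ≤ α t) (hα1 : ∑ t, α t = 1)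
    (hm : ∀ s, ∑ t, α t * m t s = m₀ s) (hm₀ : m₀.degree = ∑ e, K e) {u : τ → E → ℝ}
    (hu : ∀ t, u t ∈ Set.Icc 0 1) :
    ∏ t, (linearFormProd (edgeCoeff a b (u t)) K).coeff (m t) ^ α t ≤
      omegaFn (∑ e, K e) / (∏ s, omegaFn (m₀ s)) *
        (linearFormProd (edgeCoeff a b (∑ t, α t • u t)) K).coeff m₀ := by
  rw [div_mul_eq_mul_div, le_div_iff₀ (Finset.prod_pos fun s _ => omegaFn_pos _),
    edgeCoeff_sum_smul hα1]
  exact prod_coeff_linearFormProd_rpow_mul_le (fun t => edgeCoeff_nonneg (hu t)) hα hα1 hm hm₀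

lemma prod_card_orientations_rpow_le (hα : ∀ t, 0 < α t) (hα1 : ∑ t, α t = 1)
    (hm : ∀ s, ∑ t, α t * m t s = m₀ s) (hm₀ : m₀.degree = ∑ e, K e) :
    ∏ t, ((orientations a b K (m t)).card : ℝ) ^ α t ≤
      omegaFn (∑ e, K e) / (∏ s, omegaFn (m₀ s)) * (orientations a b K m₀).card := by
  have hratio : 0 ≤ omegaFn (∑ e, K e) / ∏ s, omegaFn (m₀ s) :=
    div_nonneg (omegaFn_pos _).le (Finset.prod_nonneg fun s _ => (omegaFn_pos _).le)
  have hQ : 0 < ∏ e, ((K e : ℝ) + 1) := Finset.prod_pos fun e _ => by positivity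
  have hmeas : ∀ m' : σ →₀ ℕ, Measurable fun u : E → ℝ =>
      ENNReal.ofReal ((linearFormProd (edgeCoeff a b u) K).coeff m') := fun m' =>
    (continuous_coeff_linearFormProd_edgeCoeff m').measurable.ennreal_ofReal
  have hintegrated := prod_setLIntegral_pi_rpow_le hα hα1 measurableSet_Icc
    (convex_Icc (0 : E → ℝ) 1) (fun t => hmeas (m t)) ((hmeas m₀).const_mul (ENNReal.ofReal _))
    fun u hu => by
      have hcoeff := fun t =>
        coeff_linearFormProd_nonneg (edgeCoeff_nonneg (a := a) (b := b) (hu t)) K (m t)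
      simp_rw [ENNReal.ofReal_rpow_of_nonneg (hcoeff _) (hα _).le]
      rw [← ENNReal.ofReal_prod_of_nonneg fun t _ => Real.rpow_nonneg (hcoeff t) _,
        ← ENNReal.ofReal_mul hratio]
      exact ENNReal.ofReal_le_ofReal
        (prod_coeff_linearFormProd_edgeCoeff_rpow_le (fun t => (hα t).le) hα1 hm hm₀ hu)
  rw [lintegral_const_mul _ (hmeas m₀)] at hintegrated
  simp_rw [setLIntegral_coeff_linearFormProd_edgeCoeff,
    ENNReal.ofReal_rpow_of_nonneg (div_nonneg (Nat.cast_nonneg _) hQ.le) (hα _).le] at hintegrated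
  rw [← ENNReal.ofReal_mul hratio, ← ENNReal.ofReal_prod_of_nonneg fun t _ => by positivity,
    ENNReal.ofReal_le_ofReal_iff (by positivity)] at hintegrated
  simp_rw [Real.div_rpow (Nat.cast_nonneg _) hQ.le] at hintegrated
  rwa [Finset.prod_div_distrib, ← Real.rpow_sum_of_pos hQ, hα1, Real.rpow_one, ← mul_div_assoc,
    div_le_div_iff_of_pos_right hQ] at hintegrated

lemma sum_subtype_pos_mul (hα : ∀ t, 0 ≤ α t) (f : τ → ℝ) :
    ∑ t : {t // 0 < α t}, α t * f t = ∑ t, α t * f t := by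
  classical
  rw [← Finset.sum_subtype {t | 0 < α t} (by simp) fun t => α t * f t]
  exact Finset.sum_filter_of_ne fun t _ ht => (hα t).lt_of_ne' (left_ne_zero_of_mul ht)

theorem sum_log_card_orientations_le (hα : ∀ t, 0 ≤ α t) (hα1 : ∑ t, α t = 1)
    (hm : ∀ s, ∑ t, α t * m t s = m₀ s) (hcard : ∀ t, (orientations a b K (m t)).Nonempty)
    (hcard₀ : (orientations a b K m₀).Nonempty) :
    ∑ t, α t * log (orientations a b K (m t)).card ≤
      log (omegaFn (∑ e, K e)) - ∑ s, log (omegaFn (m₀ s)) + log (orientations a b K m₀).card := by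
  obtain ⟨A, hA⟩ := hcard₀
  have hm₀ : m₀.degree = ∑ e, K e := by
    rw [← (mem_orientations.1 hA).2, degree_inDegree (mem_orientations.1 hA).1]
  have hpos : ∀ t, 0 < ((orientations a b K (m t)).card : ℝ) := fun t =>
    Nat.cast_pos.2 (hcard t).card_pos
  have hpos₀ : 0 < ((orientations a b K m₀).card : ℝ) := Nat.cast_pos.2 (Finset.card_pos.2 ⟨A, hA⟩)
  have hω : 0 < ∏ s, omegaFn (m₀ s) := Finset.prod_pos fun s _ => omegaFn_pos _
  have hprod := prod_card_orientations_rpow_le (a := a) (b := b) (K := K)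
    (α := fun t : {t // 0 < α t} => α t) (m := fun t => m t) (fun t => t.2)
    (by simpa [hα1] using sum_subtype_pos_mul hα 1)
    (fun s => (sum_subtype_pos_mul hα fun t => (m t s : ℝ)).trans (hm s)) hm₀
  have hlog := log_le_log
    (Finset.prod_pos fun (t : {t // 0 < α t}) _ => rpow_pos_of_pos (hpos t) _) hprod
  rw [log_mul (div_pos (omegaFn_pos _) hω).ne' hpos₀.ne', log_div (omegaFn_pos _).ne' hω.ne',
    log_prod fun s _ => (omegaFn_pos _).ne',
    log_prod fun (t : {t // 0 < α t}) _ => (rpow_pos_of_pos (hpos t) _).ne'] at hlog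
  simp_rw [log_rpow (hpos _)] at hlog
  rwa [sum_subtype_pos_mul hα fun t => log (orientations a b K (m t)).card] at hlog

end LogConcavityOfOrientations

section BoundedTables

variable {I J τ : Type*} [Fintype I] [Fintype J] [Fintype τ] {K : I → J → ℕ} {R : I → ℕ} {C : J → ℕ}

/-- The in-degrees of the orientations that encode the tables with margins `R`, `C`. The bipartite
multigraph on `I ⊕ J` has `K i j` edges between `i` and `j`, of which `A i j` point to `i`, so the
vertex `j` receives the complement `∑ i, K i j - C j` of its column sum. -/
noncomputable def tableInDegree (K : I → J → ℕ) (R : I → ℕ) (C : J → ℕ) : I ⊕ J →₀ ℕ :=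
  Finsupp.equivFunOnFinite.symm (Sum.elim R fun j => ∑ i, K i j - C j)

@[simp]
lemma tableInDegree_inl (i : I) : tableInDegree K R C (Sum.inl i) = R i := rfl

@[simp]
lemma tableInDegree_inr (j : J) : tableInDegree K R C (Sum.inr j) = ∑ i, K i j - C j := rfl

lemma inDegree_inl (K A : I × J → ℕ) (i : I) :
    inDegree (fun e => Sum.inl e.1) (fun e => Sum.inr e.2) K A (Sum.inl i) = ∑ j, A (i, j) := by
  classical
  simp [inDegree, Finsupp.finsetSum_apply, Finsupp.single_apply, Fintype.sum_prod_type]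

lemma inDegree_inr (K A : I × J → ℕ) (j : J) :
    inDegree (fun e => Sum.inl e.1) (fun e => Sum.inr e.2) K A (Sum.inr j) =
      ∑ i, (K (i, j) - A (i, j)) := by
  classical
  simp [inDegree, Finsupp.finsetSum_apply, Finsupp.single_apply, Fintype.sum_prod_type_right,
    ite_sub_ite]

lemma inDegree_eq_tableInDegree_iff {A : I × J → ℕ} (hA : A ≤ fun e => K e.1 e.2)
    (hC : ∀ j, C j ≤ ∑ i, K i j) :
    inDegree (fun e => Sum.inl e.1) (fun e => Sum.inr e.2) (fun e => K e.1 e.2) A =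
        tableInDegree K R C ↔ (∀ i, ∑ j, A (i, j) = R i) ∧ ∀ j, ∑ i, A (i, j) = C j := by
  have hcol : ∀ j, ∑ i, (K i j - A (i, j)) = ∑ i, K i j - ∑ i, A (i, j) := fun j =>
    Finset.sum_tsub_distrib _ fun i _ => hA (i, j)
  have hle : ∀ j, ∑ i, A (i, j) ≤ ∑ i, K i j := fun j => Finset.sum_le_sum fun i _ => hA (i, j)
  simp only [Finsupp.ext_iff, Sum.forall, inDegree_inl, inDegree_inr, hcol, tableInDegree_inl,
    tableInDegree_inr, tsub_right_inj (hle _) (hC _)]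

lemma tableCount_eq_card_orientations (hC : ∀ j, C j ≤ ∑ i, K i j) :
    tableCount (fun i j => (K i j : ℕ∞)) R C = (orientations (fun e : I × J => Sum.inl e.1)
      (fun e => Sum.inr e.2) (fun e => K e.1 e.2) (tableInDegree K R C)).card := by
  rw [tableCount, ← Set.ncard_coe_finset,
    ← Set.ncard_image_of_injective _ (Equiv.curry I J ℕ).symm.injective]
  congr 1
  ext A
  rw [Equiv.image_eq_preimage_symm, Finset.mem_coe, mem_orientations,
    and_congr_right fun hA => inDegree_eq_tableInDegree_iff hA hC]
  simp only [Equiv.symm_symm, Set.mem_preimage, Equiv.curry_apply, Function.curry,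
    Set.mem_ofPred_eq, Nat.cast_le, Pi.le_def, Prod.forall]
  tauto

lemma le_sum_of_tableCount_pos (hT : 0 < tableCount (fun i j => (K i j : ℕ∞)) R C) (j : J) :
    C j ≤ ∑ i, K i j := by
  obtain ⟨A, -, hcol, hA⟩ := Set.nonempty_of_ncard_ne_zero hT.ne'
  rw [← hcol j]
  exact Finset.sum_le_sum fun i _ => Nat.cast_le.1 (hA i j)

lemma sum_add_sum_sub_of_tableCount_pos (hT : 0 < tableCount (fun i j => (K i j : ℕ∞)) R C) :
    ∑ i, R i + ∑ j, (∑ i, K i j - C j) = ∑ i, ∑ j, K i j := by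
  have hC := le_sum_of_tableCount_pos hT
  obtain ⟨A, hrow, hcol, -⟩ := Set.nonempty_of_ncard_ne_zero hT.ne'
  have hRC : ∑ i, R i = ∑ j, C j := by
    simp_rw [← hrow, ← hcol]
    exact Finset.sum_comm
  rw [hRC, ← Finset.sum_add_distrib, Finset.sum_comm]
  exact Finset.sum_congr rfl fun j _ => Nat.add_sub_cancel' (hC j)

variable {α : τ → ℝ} {Rs : τ → I → ℕ} {Cs : τ → J → ℕ}

lemma sum_mul_tableInDegree (hα1 : ∑ t, α t = 1) (hRs : ∀ i, ∑ t, α t * (Rs t i : ℝ) = R i)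
    (hCs : ∀ j, ∑ t, α t * (Cs t j : ℝ) = C j) (hC : ∀ j, C j ≤ ∑ i, K i j)
    (hCt : ∀ t j, Cs t j ≤ ∑ i, K i j) (s : I ⊕ J) :
    ∑ t, α t * (tableInDegree K (Rs t) (Cs t) s : ℝ) = tableInDegree K R C s := by
  rcases s with i | j
  · exact hRs i
  · simp only [tableInDegree_inr, Nat.cast_sub (hC j), Nat.cast_sub (hCt _ j), mul_sub,
      Finset.sum_sub_distrib, hCs, ← Finset.sum_mul, hα1, one_mul]

theorem sum_log_tableCount_le (hα : ∀ t, 0 ≤ α t) (hα1 : ∑ t, α t = 1)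
    (hRs : ∀ i, ∑ t, α t * (Rs t i : ℝ) = R i) (hCs : ∀ j, ∑ t, α t * (Cs t j : ℝ) = C j)
    (hTs : ∀ t, 0 < tableCount (fun i j => (K i j : ℕ∞)) (Rs t) (Cs t))
    (hT : 0 < tableCount (fun i j => (K i j : ℕ∞)) R C) :
    ∑ t, α t * log (tableCount (fun i j => (K i j : ℕ∞)) (Rs t) (Cs t)) ≤
      log (omegaFn (∑ i, ∑ j, K i j)) -
        (∑ i, log (omegaFn (R i)) + ∑ j, log (omegaFn (∑ i, K i j - C j))) +
        log (tableCount (fun i j => (K i j : ℕ∞)) R C) := by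
  have hC := le_sum_of_tableCount_pos hT
  have hCt := fun t => le_sum_of_tableCount_pos (hTs t)
  simp only [tableCount_eq_card_orientations hC, tableCount_eq_card_orientations (hCt _),
    Finset.card_pos] at hT hTs ⊢
  simpa only [Fintype.sum_prod_type, Fintype.sum_sum_type, tableInDegree_inl,
    tableInDegree_inr] using
    sum_log_card_orientations_le hα hα1 (sum_mul_tableInDegree hα1 hRs hCs hC hCt) hTs hT

lemma log_omegaFn_sub_le (hR : ∀ i, 0 < R i) (hCtilde : ∀ j, C j < ∑ i, K i j)
    (hT : 0 < tableCount (fun i j => (K i j : ℕ∞)) R C) :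
    log (omegaFn (∑ i, ∑ j, K i j)) -
        (∑ i, log (omegaFn (R i)) + ∑ j, log (omegaFn (∑ i, K i j - C j))) ≤
      -log √(2 * π * (∑ i, ∑ j, K i j : ℕ)) + ∑ i, log √(2 * π * R i) +
        ∑ j, log √(2 * π * (∑ i, K i j - C j : ℕ)) +
        (Fintype.card I + Fintype.card J) * log (exp 1 / √(2 * π)) := by
  have hsum : ∑ i, (R i : ℝ) + ∑ j, ((∑ i, K i j - C j : ℕ) : ℝ) = (∑ i, ∑ j, K i j : ℕ) := by
    exact_mod_cast sum_add_sum_sub_of_tableCount_pos hT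
  have htotal := log_omegaFn_le (∑ i, ∑ j, K i j)
  have hrows := sum_neg_log_omegaFn_le hR
  have hcols := sum_neg_log_omegaFn_le fun j => Nat.sub_pos_of_lt (hCtilde j)
  linarith

end BoundedTables

theorem fK_minus_logTable_le_general {m n : ℕ} (K : Fin m → Fin n → ℕ)
    (R : Fin m → ℕ) (hR : ∀ i, 0 < R i) (C : Fin n → ℕ)
    (hCtilde : ∀ j, C j < ∑ i, K i j)
    (hT : 0 < tableCount (fun i j => (K i j : ℕ∞)) R C) :
    fK K (fun i => (R i : ℝ)) (fun j => (C j : ℝ)) -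
      ((Real.log (tableCount (fun i j => (K i j : ℕ∞)) R C) : ℝ) : EReal) ≤
    (((-Real.log (Real.sqrt (2 * Real.pi * (∑ i, ∑ j, K i j))) +
        ∑ i, Real.log (Real.sqrt (2 * Real.pi * (R i))) +
        ∑ j, Real.log (Real.sqrt (2 * Real.pi * (((∑ i, K i j) - C j : ℕ) : ℝ))) +
        ((m : ℝ) + (n : ℝ)) * Real.log (Real.exp 1 / Real.sqrt (2 * Real.pi))) : ℝ) :
      EReal) := by
  refine EReal.sub_le_of_le_add (sSup_le ?_)
  rintro v ⟨p, α, Rs, Cs, -, hα, hα1, hRs, hCs, hTs, rfl⟩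
  have hconcave := sum_log_tableCount_le hα hα1 hRs hCs hTs hT
  have hstirling := log_omegaFn_sub_le hR hCtilde hT
  rw [Fintype.card_fin, Fintype.card_fin] at hstirling
  rw [← EReal.coe_add, EReal.coe_le_coe_iff]
  linarith

/-- **Lemma (quality of approximation).** `f_K(R,C) - ln T_K(R,C)` is bounded by the
error term `♥`. -/
theorem fK_minus_logTable_le {m n : ℕ} (K : Fin m → Fin n → ℕ) (hK : ∀ i j, 0 < K i j)
    (R : Fin m → ℕ) (hR : ∀ i, 0 < R i) (C : Fin n → ℕ)
    (hCtilde : ∀ j, C j < ∑ i, K i j)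
    (hT : 0 < tableCount (fun i j => (K i j : ℕ∞)) R C) :
    fK K (fun i => (R i : ℝ)) (fun j => (C j : ℝ)) -
      ((Real.log (tableCount (fun i j => (K i j : ℕ∞)) R C) : ℝ) : EReal) ≤
    (((-Real.log (Real.sqrt (2 * Real.pi * (∑ i, ∑ j, K i j))) +
        ∑ i, Real.log (Real.sqrt (2 * Real.pi * (R i))) +
        ∑ j, Real.log (Real.sqrt (2 * Real.pi * (((∑ i, K i j) - C j : ℕ) : ℝ))) +
        ((m : ℝ) + (n : ℝ)) * Real.log (Real.exp 1 / Real.sqrt (2 * Real.pi))) : ℝ) :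
      EReal) :=
  fK_minus_logTable_le_general K R hR C hCtilde hT
end
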